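/- arXiv:2503.11744 — 3 statements merged into one kernel-verified Lean document; each statement's English description precedes it below -/
import Mathlib

section
/- Part (i) of the Obukhov–Corrsin dichotomy (quantitative Constantin–E–Titi-type bound): let α, ᾱ ∈ (0,1) with α + 2ᾱ − 1 > 0, and let u : [0,1]×T^d → ℝ^d be a continuous divergence-free vector field with ‖u(t,·)‖_{C^0} + sup_{x≠y} |u(t,x)−u(t,y)|/|x−y|^α ≤ A for all t. There is a constant C = C(d, α, ᾱ) such that for every κ ∈ (0,1] and every solution θ^κ of ∂_t θ^κ + u·∇θ^κ = κΔθ^κ satisfying the uniform Hölder bound sup_t ( ‖θ^κ(t,·)‖_{C^0} + sup_{x≠y} |θ^κ(t,x)−θ^κ(t,y)|/|x−y|^{ᾱ} ) ≤ H, one has κ ∫_0^1 ‖∇θ^κ(t,·)‖²_{L²(T^d)} dt ≤ C κ^{(α+2ᾱ−1)/(α+1)} (1 + A)^{2(1−ᾱ)/(α+1)} H². In particular, if a family of solutions (θ^κ) is uniformly bounded in L^∞_t C^{ᾱ}_x with ᾱ > (1−α)/2, then there is no anomalous diffusion: lim_{κ→0} κ ∫_0^1 ‖∇θ^κ(t,·)‖²_{L²}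 dt = 0. -/
open MeasureTheory Real Topology Filter

noncomputable section

/-- Spatial partial derivative `∂_i f` (via the Fréchet derivative). -/
def pd {d : ℕ} (f : (Fin d → ℝ) → ℝ) (i : Fin d) (x : Fin d → ℝ) : ℝ :=
  fderiv ℝ f x (Pi.single i 1)

/-- The unit box `[0,1]^d`, a fundamental domain for the torus `T^d = ℝ^d/ℤ^d`. -/
def box (d : ℕ) : Set (Fin d → ℝ) := Set.Icc 0 1

/-- `ℤ^d`-periodicity in the space variable (functions on the torus `T^d`). -/
def SpacePeriodic {d : ℕ} (f : (Fin d → ℝ) → ℝ) : Prop :=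
  ∀ (x : Fin d → ℝ) (k : Fin d → ℤ), f (x + fun i => (k i : ℝ)) = f x

/-- Squared length of the spatial gradient, `|∇f|²(x)`. -/
def gradSq {d : ℕ} (f : (Fin d → ℝ) → ℝ) (x : Fin d → ℝ) : ℝ :=
  ∑ i, (pd f i x) ^ 2

/-- Squared `L²(T^d)` norm. -/
def l2sq {d : ℕ} (f : (Fin d → ℝ) → ℝ) : ℝ := ∫ x in box d, (f x) ^ 2

/-- The dissipation `∫_0^t ‖∇θ(s,·)‖²_{L²(T^d)} ds`. -/
def dissipUpTo {d : ℕ} (θ : ℝ → (Fin d → ℝ) → ℝ) (t : ℝ) : ℝ :=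
  ∫ s in Set.Icc (0:ℝ) t, ∫ x in box d, gradSq (θ s) x

/-- The dissipation `∫_0^1 ∫_{T^d} |∇θ|² dx dt`. -/
def dissip {d : ℕ} (θ : ℝ → (Fin d → ℝ) → ℝ) : ℝ := dissipUpTo θ 1

/-- A solution of the advection–diffusion equation `∂_t θ + u·∇θ = κΔθ` on
`(0,1] × T^d` with initial datum `θ_in`: continuous on `[0,1] × T^d`, spatially
periodic, `C¹` in time and `C²` in space on `(0,1] × T^d`, solving the equation
pointwise there. -/
structure IsAdvDiffSol {d : ℕ} (u : ℝ → (Fin d → ℝ) → Fin d → ℝ) (κ : ℝ)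
    (θin : (Fin d → ℝ) → ℝ) (θ : ℝ → (Fin d → ℝ) → ℝ) : Prop where
  periodic : ∀ t, SpacePeriodic (θ t)
  cont : ContinuousOn (fun p : ℝ × (Fin d → ℝ) => θ p.1 p.2)
    (Set.Icc 0 1 ×ˢ Set.univ)
  init : ∀ x, θ 0 x = θin x
  timeDiff : ∀ t ∈ Set.Ioc (0:ℝ) 1, ∀ x, DifferentiableAt ℝ (fun s => θ s x) t
  spaceC2 : ∀ t ∈ Set.Ioc (0:ℝ) 1, ContDiff ℝ 2 (θ t)
  eqn : ∀ t ∈ Set.Ioc (0:ℝ) 1, ∀ x,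
    deriv (fun s => θ s x) t + ∑ i, u t x i * pd (θ t) i x
      = κ * ∑ i, pd (pd (θ t) i) i x

/-- `u ∈ C^0_t C^α_x ∩ C^α_t C^0_x` on `[0,1] × T^d`: continuity plus uniform
Hölder bounds in space and in time. -/
def HolderVF {d : ℕ} (α : ℝ) (u : ℝ → (Fin d → ℝ) → Fin d → ℝ) : Prop :=
  Continuous (fun p : ℝ × (Fin d → ℝ) => u p.1 p.2) ∧
  ∃ A : ℝ, ∀ s ∈ Set.Icc (0:ℝ) 1, ∀ t ∈ Set.Icc (0:ℝ) 1, ∀ x y : Fin d → ℝ,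
    ‖u t x - u t y‖ ≤ A * ‖x - y‖ ^ α ∧ ‖u t x - u s x‖ ≤ A * |t - s| ^ α

/-- `u(t,·)` is divergence-free on `T^d` in the sense of distributions:
`∫_{T^d} u(t,x)·∇φ(x) dx = 0` for every smooth periodic `φ`. -/
def WeakDivFree {d : ℕ} (u : ℝ → (Fin d → ℝ) → Fin d → ℝ) : Prop :=
  ∀ t ∈ Set.Icc (0:ℝ) 1, ∀ φ : (Fin d → ℝ) → ℝ, ContDiff ℝ (⊤ : ℕ∞) φ →
    SpacePeriodic φ → (∫ x in box d, ∑ i, u t x i * pd φ i x) = 0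

/-- `g` is the (square-integrable) weak gradient of `f` on `T^d`:
`∫ f div ψ = −∫ g·ψ` for all smooth periodic vector fields `ψ`. -/
def HasWeakGradient {d : ℕ} (f : (Fin d → ℝ) → ℝ)
    (g : (Fin d → ℝ) → Fin d → ℝ) : Prop :=
  ∀ ψ : (Fin d → ℝ) → Fin d → ℝ,
    (∀ i, ContDiff ℝ (⊤ : ℕ∞) fun x => ψ x i) →
    (∀ i, SpacePeriodic fun x => ψ x i) →
    (∫ x in box d, f x * ∑ i, pd (fun y => ψ y i) i x)
      = - ∫ x in box d, ∑ i, g x i * ψ x i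





lemma oc_ioc_ae_box {d : ℕ} :
    ({x : Fin d → ℝ | ∀ i, x i ∈ Set.Ioc ((0:Fin d → ℝ) i) ((0:Fin d → ℝ) i + 1)} : Set (Fin d → ℝ))
      =ᵐ[volume] box d := by
  have h := Measure.univ_pi_Ioc_ae_eq_Icc (μ := fun _ : Fin d => (volume : Measure ℝ))
    (f := 0) (g := 1)
  have e : ({x : Fin d → ℝ | ∀ i, x i ∈ Set.Ioc ((0:Fin d → ℝ) i) ((0:Fin d → ℝ) i + 1)})
     = Set.pi Set.univ fun i => Set.Ioc ((0:Fin d → ℝ) i) ((1:Fin d → ℝ) i) := by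
    ext x; simp
  rw [e]; exact h

lemma oc_shift {d : ℕ} {f : (Fin d → ℝ) → ℝ} (hf : SpacePeriodic f) (a : Fin d → ℝ) :
    ∫ x in box d, f (x + a) = ∫ x in box d, f x := by
  set F : UnitAddTorus (Fin d) → ℝ :=
    fun q => f (fun i => (AddCircle.equivIoc 1 ((0:Fin d → ℝ) i) (q i)).1) with hF
  have hFf : ∀ x : Fin d → ℝ, F (fun i => (x i : UnitAddCircle)) = f x := by
    intro x
    have : ∀ i, ∃ k : ℤ, (AddCircle.equivIoc 1 ((0:Fin d → ℝ) i) ((x i : UnitAddCircle))).1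
        = x i + k := by
      intro i
      have h1 : (((AddCircle.equivIoc 1 ((0:Fin d → ℝ) i) ((x i : UnitAddCircle))).1 : ℝ) :
          UnitAddCircle) = (x i : UnitAddCircle) :=
        (AddCircle.equivIoc 1 ((0:Fin d → ℝ) i)).symm_apply_apply _
      have h2 := sub_eq_zero.2 h1
      rw [← AddCircle.coe_sub, AddCircle.coe_eq_zero_iff] at h2
      obtain ⟨n, hn⟩ := h2
      refine ⟨n, ?_⟩
      simp only [zsmul_eq_mul, mul_one] at hn
      linarith
    choose k hk using this
    simp only [hF]
    rw [← hf x k]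
    congr 1
    ext i
    exact hk i
  have h0 := UnitAddTorus.integral_preimage F (0 : Fin d → ℝ)
  have h1 := UnitAddTorus.integral_preimage F a
  simp only [hFf] at h0 h1
  rw [setIntegral_congr_set oc_ioc_ae_box] at h0
  rw [← h0, h1]
  have hmp : MeasurePreserving (fun x : Fin d → ℝ => x + a) volume volume :=
    measurePreserving_add_right volume a
  rw [← setIntegral_congr_set oc_ioc_ae_box]
  rw [← hmp.setIntegral_preimage_emb (measurableEmbedding_addRight a) f
    {x | ∀ (i : Fin d), x i ∈ Set.Ioc (a i) (a i + 1)}]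
  congr 2
  ext x
  simp only [Pi.zero_apply, Set.mem_Ioc, Set.mem_setOf_eq, Set.preimage_setOf_eq, Pi.add_apply]
  refine forall_congr' fun i => ?_
  constructor <;> rintro ⟨h, h'⟩ <;> constructor <;> linarith

lemma oc_swap {X Y : Type*} [TopologicalSpace X] [TopologicalSpace Y] [T2Space X] [T2Space Y]
    [MeasurableSpace X]
    [MeasurableSpace Y] [BorelSpace X] [BorelSpace Y] [SecondCountableTopology X]
    [SecondCountableTopology Y]
    {μ : Measure X} {ν : Measure Y} [SFinite μ] [SFinite ν] [IsLocallyFiniteMeasure μ]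
    [IsLocallyFiniteMeasure ν] {K : Set X} {L : Set Y} (hK : IsCompact K) (hL : IsCompact L)
    {F : X → Y → ℝ} (hF : Continuous (fun p : X × Y => F p.1 p.2)) :
    ∫ x in K, ∫ y in L, F x y ∂ν ∂μ = ∫ y in L, ∫ x in K, F x y ∂μ ∂ν := by
  apply integral_integral_swap
  rw [Measure.prod_restrict]
  exact hF.continuousOn.integrableOn_compact (hK.prod hL)

lemma oc_box_compact (d : ℕ) : IsCompact (box d) := isCompact_Icc

lemma oc_vol_box (d : ℕ) : volume.real (box d) = 1 := by
  unfold box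
  rw [measureReal_def, Real.volume_Icc_pi]; simp

instance oc_prob_box (d : ℕ) : IsProbabilityMeasure (volume.restrict (box d)) := by
  constructor
  have h : volume (box d) = 1 := by unfold box; rw [Real.volume_Icc_pi]; simp
  simp [h]

lemma oc_per_single {d : ℕ} {f : (Fin d → ℝ) → ℝ} (hf : SpacePeriodic f) (i : Fin d)
    (x : Fin d → ℝ) : f (x + Pi.single i 1) = f x := by
  rw [← hf x (Pi.single i 1)]
  congr 2
  ext j
  by_cases h : j = i
  · subst h; simp
  · simp [h]

lemma oc_line {d : ℕ} (i : Fin d) (x : Fin d → ℝ) (s : ℝ) :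
    HasDerivAt (fun s : ℝ => x + s • (Pi.single i 1 : Fin d → ℝ)) (Pi.single i 1) s := by
  simpa using ((hasDerivAt_id s).smul_const (Pi.single i (1:ℝ) : Fin d → ℝ)).const_add x

lemma oc_pd_line {d : ℕ} {f : (Fin d → ℝ) → ℝ} (i : Fin d) (x : Fin d → ℝ) (s : ℝ)
    (hf : DifferentiableAt ℝ f (x + s • Pi.single i 1)) :
    HasDerivAt (fun s : ℝ => f (x + s • Pi.single i 1)) (pd f i (x + s • Pi.single i 1)) s :=
  hf.hasFDerivAt.comp_hasDerivAt s (oc_line i x s)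

lemma oc_pd_contDiff {d : ℕ} {f : (Fin d → ℝ) → ℝ} {n m : WithTop ℕ∞} (hf : ContDiff ℝ n f)
    (h : m + 1 ≤ n) (i : Fin d) :
    ContDiff ℝ m (pd f i) :=
  (hf.fderiv_right h).clm_apply contDiff_const

lemma oc_pd_periodic {d : ℕ} {f : (Fin d → ℝ) → ℝ} (hf : SpacePeriodic f) (i : Fin d) :
    SpacePeriodic (pd f i) := by
  intro x k
  unfold pd
  rw [← fderiv_comp_add_right]
  congr 2
  ext y; exact hf y k

lemma oc_int_pd {d : ℕ} {f : (Fin d → ℝ) → ℝ} (hf : SpacePeriodic f) (hc : ContDiff ℝ 1 f)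
    (i : Fin d) : ∫ x in box d, pd f i x = 0 := by
  have hpc : Continuous (pd f i) := (oc_pd_contDiff (m := 0) hc (by simp) i).continuous
  have h1 : ∫ s in Set.Icc (0:ℝ) 1, ∫ x in box d, pd f i (x + s • Pi.single i 1) =
      ∫ x in box d, pd f i x := by
    simp_rw [oc_shift (oc_pd_periodic hf i)]
    simp
  rw [← h1, oc_swap isCompact_Icc (oc_box_compact d) (by fun_prop)]
  have : ∀ x : Fin d → ℝ, ∫ s in Set.Icc (0:ℝ) 1, pd f i (x + s • Pi.single i 1) = 0 := by
    intro x
    rw [integral_Icc_eq_integral_Ioc, ← intervalIntegral.integral_of_le zero_le_one]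
    rw [intervalIntegral.integral_eq_sub_of_hasDerivAt
      (f := fun s : ℝ => f (x + s • Pi.single i 1))]
    · simp [oc_per_single hf]
    · intro s _
      exact oc_pd_line i x s (hc.differentiable one_ne_zero _)
    · exact Continuous.intervalIntegrable (by fun_prop) _ _
  simp [this]

lemma oc_second {f f' : ℝ → ℝ} {c : ℝ} (h1 : ∀ᶠ s in 𝓝 0, HasDerivAt f (f' s) s)
    (h2 : HasDerivAt f' c 0) (hm : IsLocalMax f 0) : c ≤ 0 := by
  by_contra! hc
  have hf0 : f' 0 = 0 := by
    have := hm.hasDerivAt_eq_zero h1.self_of_nhds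
    exact this
  have he : deriv f =ᶠ[𝓝 0] f' := h1.mono fun s hs => hs.deriv
  have hd2 : deriv (deriv f) 0 = c := by rw [he.deriv_eq, h2.deriv]
  have hmin := isLocalMin_of_deriv_deriv_pos (f := f) (x₀ := 0) (by rw [hd2]; exact hc)
    (by rw [he.self_of_nhds, hf0]) h1.self_of_nhds.continuousAt
  have hconst : f =ᶠ[𝓝 0] fun _ => f 0 := by
    filter_upwards [hm, hmin] with s a b using le_antisymm a b
  have e2 : deriv f =ᶠ[𝓝 0] fun _ => 0 := by
    have := hconst.deriv
    simpa using this
  have := e2.deriv_eq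
  rw [hd2] at this
  simp at this
  linarith

lemma oc_abs_deriv {f : ℝ → ℝ} {c L : ℝ} (h : HasDerivAt f c 0)
    (hL : ∀ᶠ s in 𝓝 0, f s - f 0 ≤ L * |s|) : |c| ≤ L := by
  have hs := hasDerivAt_iff_tendsto_slope_zero.1 h
  rw [abs_le]
  constructor
  · have h1 : Tendsto (fun t => t⁻¹ • (f (0 + t) - f 0)) (𝓝[<] 0) (𝓝 c) :=
      hs.mono_left (nhdsWithin_mono _ (fun x hx => ne_of_lt hx))
    refine ge_of_tendsto h1 ?_
    filter_upwards [self_mem_nhdsWithin, nhdsWithin_le_nhds hL] with s hs0 hs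
    have hs0 : s < 0 := hs0
    rw [abs_of_neg hs0] at hs
    simp only [zero_add, smul_eq_mul]
    rw [inv_mul_eq_div, le_div_iff_of_neg hs0]
    linarith
  · have h1 : Tendsto (fun t => t⁻¹ • (f (0 + t) - f 0)) (𝓝[>] 0) (𝓝 c) :=
      hs.mono_left (nhdsWithin_mono _ (fun x hx => ne_of_gt hx))
    refine le_of_tendsto h1 ?_
    filter_upwards [self_mem_nhdsWithin, nhdsWithin_le_nhds hL] with s hs0 hs
    have hs0 : 0 < s := hs0
    rw [abs_of_pos hs0] at hs
    simp only [zero_add, smul_eq_mul]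
    rw [inv_mul_eq_div, div_le_iff₀ hs0]
    linarith

lemma oc_left_deriv {f : ℝ → ℝ} {c t : ℝ} (h : HasDerivAt f c t)
    (hL : ∀ᶠ s in 𝓝[<] t, f s ≤ f t) : 0 ≤ c := by
  have h1 := (hasDerivAt_iff_tendsto_slope.1 h).mono_left
    (nhdsWithin_mono t (fun x (hx : x ∈ Set.Iio t) => ne_of_lt hx))
  refine ge_of_tendsto h1 ?_
  filter_upwards [self_mem_nhdsWithin, hL] with s hs0 hs
  have hs0 : s < t := hs0
  rw [slope_def_field]
  exact div_nonneg_of_nonpos (by linarith) (by linarith)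



lemma oc_pd_lineC {d : ℕ} {f : (Fin d → ℝ) → ℝ} (hf : Differentiable ℝ f) (i : Fin d)
    (x : Fin d → ℝ) (c s : ℝ) :
    HasDerivAt (fun s : ℝ => f (x + (c * s) • Pi.single i 1))
      (c * pd f i (x + (c * s) • Pi.single i 1)) s := by
  have h := (oc_pd_line (f := f) i x (c * s) (hf _)).comp s ((hasDerivAt_id s).const_mul c)
  simpa [Function.comp_def, mul_comm] using h

lemma oc_floor {d : ℕ} (x : Fin d → ℝ) :
    x + (fun i => ((fun i => -⌊x i⌋ : Fin d → ℤ) i : ℝ)) ∈ box d := by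
  constructor
  · intro i
    simp only [Pi.zero_apply, Pi.add_apply, Int.cast_neg]
    linarith [Int.floor_le (x i)]
  · intro i
    simp only [Pi.one_apply, Pi.add_apply, Int.cast_neg]
    linarith [Int.lt_floor_add_one (x i)]

lemma oc_max {d : ℕ} {M : ℝ → (Fin d → ℝ) → (Fin d → ℝ) → ℝ} {t1 r0 : ℝ}
    (hper : ∀ t x y (k : Fin d → ℤ), M t (x + fun i => (k i : ℝ)) (y + fun i => (k i : ℝ)) = M t x y)
    (hcont : ContinuousOn (fun p : ℝ × (Fin d → ℝ) × (Fin d → ℝ) => M p.1 p.2.1 p.2.2)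
      (Set.Icc 0 t1 ×ˢ Set.univ)) (ht : 0 ≤ t1) (hr : 0 ≤ r0) :
    ∃ t ∈ Set.Icc 0 t1, ∃ x y : Fin d → ℝ, (∀ i, |x i - y i| ≤ r0) ∧
      ∀ t' ∈ Set.Icc 0 t1, ∀ x' y' : Fin d → ℝ, (∀ i, |x' i - y' i| ≤ r0) →
        M t' x' y' ≤ M t x y := by
  set S : Set (ℝ × (Fin d → ℝ) × (Fin d → ℝ)) :=
    (Set.Icc 0 t1 ×ˢ (box d ×ˢ Set.Icc (fun _ => -r0) (fun _ => 1 + r0))) ∩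
      {p | ∀ i, |p.2.1 i - p.2.2 i| ≤ r0} with hS
  have hSc : IsCompact S := by
    apply (isCompact_Icc.prod ((oc_box_compact d).prod isCompact_Icc)).inter_right
    simp only [Set.setOf_forall]
    exact isClosed_iInter fun i => isClosed_le (by fun_prop) continuous_const
  have h0 : (0 : ℝ × (Fin d → ℝ) × (Fin d → ℝ)) ∈ S := by
    refine ⟨⟨⟨le_rfl, ht⟩, ⟨le_rfl, fun i => by simp⟩, ⟨fun i => by simpa using hr,
      fun i => by simp; linarith⟩⟩, fun i => by simpa using hr⟩
  obtain ⟨p, hp, hmax⟩ := hSc.exists_isMaxOn ⟨_, h0⟩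
    (hcont.mono fun p hp => ⟨hp.1.1, Set.mem_univ _⟩)
  refine ⟨p.1, hp.1.1, p.2.1, p.2.2, hp.2, fun t' ht' x' y' h => ?_⟩
  rw [← hper t' x' y' (fun i => -⌊x' i⌋)]
  refine hmax (a := (t', _, _)) ⟨⟨ht', oc_floor x', ?_⟩, ?_⟩
  · have hb := oc_floor x'
    constructor
    · intro i
      have h1 := hb.1 i
      have h2 := abs_le.1 (h i)
      simp only [Pi.zero_apply, Pi.add_apply] at h1 ⊢
      linarith
    · intro i
      have h1 := hb.2 i
      have h2 := abs_le.1 (h i)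
      simp only [Pi.one_apply, Pi.add_apply] at h1 ⊢
      linarith
  · intro i
    simpa using h i

lemma oc_lip_aux {d : ℕ} {u : ℝ → (Fin d → ℝ) → Fin d → ℝ} {κ A H t1 L K r0 : ℝ}
    {θin : (Fin d → ℝ) → ℝ} {θ : ℝ → (Fin d → ℝ) → ℝ}
    (hκ : 0 < κ) (hA : 0 ≤ A) (ht1 : t1 ∈ Set.Ioc (0:ℝ) 1)
    (hu : ∀ t ∈ Set.Icc (0:ℝ) 1, ∀ x, ‖u t x‖ ≤ A) (hs : IsAdvDiffSol u κ θin θ)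
    (hH : ∀ t ∈ Set.Icc (0:ℝ) 1, ∀ x, |θ t x| ≤ H)
    (hr0 : 0 < r0) (hK : 0 < K) (hLK : L = K * r0) (hbig : 4 * H ≤ L * r0)
    (hdom : 2 * H / t1 + 2 * d * A * L < 4 * κ * K) :
    ∀ x y : Fin d → ℝ, (∀ i, |x i - y i| ≤ r0) →
      θ t1 x - θ t1 y ≤ ∑ i, (L * |x i - y i| - K / 2 * |x i - y i| ^ 2) := by
  intro x0 y0 h0
  by_contra! hcon
  have hH0 : 0 ≤ H := (abs_nonneg _).trans (hH t1 ⟨ht1.1.le, ht1.2⟩ x0)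
  set g : ℝ → ℝ := fun r => L * |r| - K / 2 * |r| ^ 2 with hg
  have hg0 : ∀ r, |r| ≤ r0 → 0 ≤ g r := by
    intro r hr
    simp only [hg]
    have : L * |r| - K / 2 * |r| ^ 2 = K * |r| * (r0 - |r| / 2) := by rw [hLK]; ring
    rw [this]
    have := abs_nonneg r
    apply mul_nonneg (by positivity); linarith
  obtain ⟨t, ht, x, y, hxy, hmax⟩ := oc_max
    (M := fun t x y => θ t x - θ t y - ∑ i, g (x i - y i) - 2 * H * (t1 - t) / t1)
    (t1 := t1) (r0 := r0)
    (by
      intro t x y k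
      simp [hs.periodic t x k, hs.periodic t y k])
    (by
      have h1 : ContinuousOn (fun p : ℝ × (Fin d → ℝ) × (Fin d → ℝ) => θ p.1 p.2.1)
          (Set.Icc 0 t1 ×ˢ Set.univ) :=
        hs.cont.comp (f := fun p : ℝ × (Fin d → ℝ) × (Fin d → ℝ) => (p.1, p.2.1))
          (by fun_prop) (fun p hp => ⟨⟨hp.1.1, hp.1.2.trans ht1.2⟩, Set.mem_univ _⟩)
      have h2 : ContinuousOn (fun p : ℝ × (Fin d → ℝ) × (Fin d → ℝ) => θ p.1 p.2.2)
          (Set.Icc 0 t1 ×ˢ Set.univ) :=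
        hs.cont.comp (f := fun p : ℝ × (Fin d → ℝ) × (Fin d → ℝ) => (p.1, p.2.2))
          (by fun_prop) (fun p hp => ⟨⟨hp.1.1, hp.1.2.trans ht1.2⟩, Set.mem_univ _⟩)
      refine ((h1.sub h2).sub (Continuous.continuousOn ?_)).sub (Continuous.continuousOn ?_)
      · simp only [hg]; fun_prop
      · fun_prop) ht1.1.le hr0.le
  have hpos := hmax t1 ⟨ht1.1.le, le_rfl⟩ x0 y0 h0
  simp only [sub_self, mul_zero, zero_div, sub_zero] at hpos
  have hM : 0 < θ t x - θ t y - ∑ i, g (x i - y i) - 2 * H * (t1 - t) / t1 :=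
    lt_of_lt_of_le (by simp only [hg]; linarith) hpos
  clear hpos hcon h0
  have htt : t ∈ Set.Icc (0:ℝ) 1 := ⟨ht.1, ht.2.trans ht1.2⟩
  have hx := abs_le.1 (hH t htt x)
  have hy := abs_le.1 (hH t htt y)
  have hsum : 0 ≤ ∑ i, g (x i - y i) := Finset.sum_nonneg fun i _ => hg0 _ (hxy i)
  have htim : 0 ≤ 2 * H * (t1 - t) / t1 :=
    div_nonneg (mul_nonneg (by positivity) (by linarith [ht.2])) ht1.1.le
  have ht0 : 0 < t := by
    rcases ht.1.eq_or_lt with h | h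
    · exfalso
      rw [← h, sub_zero, mul_div_assoc, div_self ht1.1.ne'] at hM
      rw [← h] at hx hy
      linarith
    · exact h
  have htI : t ∈ Set.Ioc (0:ℝ) 1 := ⟨ht0, htt.2⟩
  have hlt : ∀ i, |x i - y i| < r0 := by
    intro i
    refine lt_of_le_of_ne (hxy i) fun h => ?_
    have h1 : g (x i - y i) ≤ ∑ i, g (x i - y i) :=
      Finset.single_le_sum (fun i _ => hg0 _ (hxy i)) (Finset.mem_univ i)
    have h2 : g (x i - y i) = L * r0 / 2 := by
      simp only [hg, h, hLK]; ring
    linarith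
  have hV : ∀ i (p q : ℝ), |x i - y i + (p - q)| ≤ r0 →
      θ t (x + p • Pi.single i 1) - θ t (y + q • Pi.single i 1) - g (x i - y i + (p - q))
        ≤ θ t x - θ t y - g (x i - y i) := by
    intro i p q hpq
    have h1 := hmax t ht (x + p • Pi.single i 1) (y + q • Pi.single i 1) (by
      intro j
      by_cases hj : j = i
      · subst hj
        simp only [Pi.add_apply, Pi.smul_apply, Pi.single_eq_same, smul_eq_mul, mul_one]
        convert hpq using 2; ring
      · simpa [hj] using hxy j)
    have h2 : ∑ j, g ((x + p • Pi.single i 1 : Fin d → ℝ) j - (y + q • Pi.single i 1 : Fin d → ℝ) j)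
        - ∑ j, g (x j - y j) = g (x i - y i + (p - q)) - g (x i - y i) := by
      rw [← Finset.sum_sub_distrib, Finset.sum_eq_single i]
      · simp only [Pi.add_apply, Pi.smul_apply, Pi.single_eq_same, smul_eq_mul, mul_one]
        congr 2; ring
      · intro j _ hj
        simp [hj]
      · simp
    linarith
  have hglip : ∀ r s, |r| ≤ r0 → |r + s| ≤ r0 → g (r + s) - g r ≤ L * |s| := by
    intro r s h1 h2
    have e : g (r + s) - g r = (|r + s| - |r|) * (L - K / 2 * (|r + s| + |r|)) := by
      simp only [hg]; ring
    rw [e]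
    have hf0 : 0 ≤ L - K / 2 * (|r + s| + |r|) := by
      rw [hLK]; nlinarith
    have hf1 : L - K / 2 * (|r + s| + |r|) ≤ L := by
      have : 0 ≤ K / 2 * (|r + s| + |r|) := by positivity
      linarith
    have h3 : |r + s| - |r| ≤ |s| := by
      have := abs_add_le r s; linarith
    calc _ ≤ |s| * (L - K / 2 * (|r + s| + |r|)) := mul_le_mul_of_nonneg_right h3 hf0
      _ ≤ |s| * L := mul_le_mul_of_nonneg_left hf1 (abs_nonneg _)
      _ = _ := mul_comm _ _
  have hC2 := hs.spaceC2 t htI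
  have hdiff : Differentiable ℝ (θ t) := hC2.differentiable two_ne_zero
  have hpdiff : ∀ i, Differentiable ℝ (pd (θ t) i) := fun i =>
    (oc_pd_contDiff (m := 1) hC2 (by norm_num) i).differentiable one_ne_zero
  have hnear : ∀ i (c : ℝ), ∀ᶠ s in 𝓝 (0:ℝ), |x i - y i + c * s| ≤ r0 := by
    intro i c
    have : ContinuousAt (fun s : ℝ => |x i - y i + c * s|) 0 := by fun_prop
    have h := this.eventually (eventually_lt_nhds (b := r0) (by simpa using hlt i))
    exact h.mono fun s hs => hs.le
  have hgx : ∀ i, |pd (θ t) i x| ≤ L := by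
    intro i
    have h1 := oc_pd_lineC hdiff i x 1 0
    simp only [mul_zero, zero_smul, add_zero, one_mul] at h1
    refine oc_abs_deriv h1 ?_
    filter_upwards [hnear i 1] with s hs'
    have h2 := hV i s 0 (by simpa using hs')
    have h3 := hglip (x i - y i) s (hxy i) (by simpa using hs')
    simp only [zero_smul, add_zero, sub_zero] at h2 ⊢
    linarith
  have hgy : ∀ i, |pd (θ t) i y| ≤ L := by
    intro i
    have h1 := (oc_pd_lineC hdiff i y 1 0).neg
    simp only [mul_zero, zero_smul, add_zero, one_mul] at h1
    rw [← abs_neg]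
    refine oc_abs_deriv h1 ?_
    filter_upwards [hnear i (-1)] with s hs'
    have h2 := hV i 0 s (by simpa [sub_eq_add_neg] using hs')
    have h3 := hglip (x i - y i) (-s) (hxy i) (by simpa using hs')
    rw [abs_neg] at h3
    simp only [zero_smul, add_zero, zero_sub, Pi.neg_apply] at h2 ⊢
    linarith
  have hsec : ∀ i (c : ℝ) (z : Fin d → ℝ),
      HasDerivAt (fun s : ℝ => c * pd (θ t) i (z + (c * s) • Pi.single i 1))
        (c * (c * pd (pd (θ t) i) i z)) 0 := by
    intro i c z
    have h := (oc_pd_lineC (hpdiff i) i z c 0).const_mul c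
    simpa using h
  have hlap0 : ∀ i, pd (pd (θ t) i) i x - pd (pd (θ t) i) i y ≤ 0 := by
    intro i
    have h2 := (hsec i 1 x).sub (hsec i 1 y)
    have := oc_second (f := fun s : ℝ => θ t (x + (1 * s) • Pi.single i 1)
      - θ t (y + (1 * s) • Pi.single i 1))
      (Eventually.of_forall fun s => (oc_pd_lineC hdiff i x 1 s).sub (oc_pd_lineC hdiff i y 1 s))
      h2 (by
        filter_upwards with s
        have h2 := hV i s s (by simpa using hxy i)
        simp only [sub_self, add_zero, one_mul, zero_smul] at h2 ⊢
        linarith)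
    linarith
  have hlapK : ∀ i, x i - y i ≠ 0 → pd (pd (θ t) i) i x - pd (pd (θ t) i) i y ≤ -4 * K := by
    intro i hi
    obtain ⟨σ, hσ, hσ'⟩ : ∃ σ : ℝ, σ ^ 2 = 1 ∧ ∀ᶠ s in 𝓝 (0:ℝ), |x i - y i + 2 * s|
        = σ * (x i - y i + 2 * s) := by
      have hc : ContinuousAt (fun s : ℝ => x i - y i + 2 * s) 0 := by fun_prop
      rcases lt_or_gt_of_ne hi with h | h
      · refine ⟨-1, by norm_num, ?_⟩
        filter_upwards [hc.eventually (eventually_lt_nhds (b := 0) (by simpa using h))] with s hs'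
        rw [abs_of_neg hs']; ring
      · refine ⟨1, by norm_num, ?_⟩
        filter_upwards [hc.eventually (eventually_gt_nhds (b := 0) (by simpa using h))] with s hs'
        rw [abs_of_pos hs']; ring
    have hg1 : ∀ s : ℝ, HasDerivAt (fun s : ℝ => L * (σ * (x i - y i + 2 * s))
        - K / 2 * (x i - y i + 2 * s) ^ 2) (L * (σ * 2) - 2 * K * (x i - y i + 2 * s)) s := by
      intro s
      have hl : HasDerivAt (fun s : ℝ => x i - y i + 2 * s) 2 s := by
        simpa using ((hasDerivAt_id s).const_mul 2).const_add (x i - y i)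
      have := ((hl.const_mul σ).const_mul L).sub ((hl.pow 2).const_mul (K / 2))
      refine this.congr_deriv ?_
      norm_num; ring
    have hg2 : HasDerivAt (fun s : ℝ => L * (σ * 2) - 2 * K * (x i - y i + 2 * s)) (-(4 * K)) 0 := by
      have hl : HasDerivAt (fun s : ℝ => x i - y i + 2 * s) 2 0 := by
        simpa using ((hasDerivAt_id (0:ℝ)).const_mul 2).const_add (x i - y i)
      have := (hl.const_mul (2 * K)).const_sub (L * (σ * 2))
      refine this.congr_deriv ?_
      ring
    have h2 := ((hsec i 1 x).sub (hsec i (-1) y)).sub hg2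
    have := oc_second (f := fun s : ℝ => θ t (x + (1 * s) • Pi.single i 1)
      - θ t (y + (-1 * s) • Pi.single i 1) - (L * (σ * (x i - y i + 2 * s))
        - K / 2 * (x i - y i + 2 * s) ^ 2))
      (Eventually.of_forall fun s => ((oc_pd_lineC hdiff i x 1 s).sub
        (oc_pd_lineC hdiff i y (-1) s)).sub (hg1 s))
      h2 (by
        filter_upwards [hnear i 2, hσ'] with s hs1 hs2
        have h0 := hσ'.self_of_nhds
        have e : s - -1 * s = 2 * s := by ring
        have h2 := hV i s (-1 * s) (by rw [e]; exact hs1)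
        rw [e] at h2
        simp only [hg, hs2] at h2
        simp only [mul_zero, add_zero] at h0
        rw [h0] at h2
        simp only [mul_zero, add_zero, one_mul, zero_smul] at h2 ⊢
        have e1 : (σ * (x i - y i + 2 * s)) ^ 2 = (x i - y i + 2 * s) ^ 2 := by
          rw [mul_pow, hσ, one_mul]
        have e2 : (σ * (x i - y i)) ^ 2 = (x i - y i) ^ 2 := by
          rw [mul_pow, hσ, one_mul]
        rw [e1, e2] at h2
        linarith)
    linarith
  obtain ⟨i0, hi0⟩ : ∃ i, x i - y i ≠ 0 := by
    by_contra! hno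
    have : x = y := by ext i; linarith [hno i]
    rw [this] at hM hsum
    simp only [sub_self] at hM hsum
    linarith
  have hlap : ∑ i, pd (pd (θ t) i) i x - ∑ i, pd (pd (θ t) i) i y ≤ -4 * K := by
    rw [← Finset.sum_sub_distrib]
    rw [← Finset.add_sum_erase _ _ (Finset.mem_univ i0)]
    have := Finset.sum_nonpos (s := Finset.univ.erase i0) fun i _ => hlap0 i
    linarith [hlapK i0 hi0]
  have hadv : ∀ z, (∀ i, |pd (θ t) i z| ≤ L) → |∑ i, u t z i * pd (θ t) i z| ≤ d * A * L := by
    intro z hz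
    calc _ ≤ ∑ i, |u t z i * pd (θ t) i z| := Finset.abs_sum_le_sum_abs _ _
      _ ≤ ∑ i : Fin d, A * L := by
        refine Finset.sum_le_sum fun i _ => ?_
        rw [abs_mul]
        refine mul_le_mul ?_ (hz i) (abs_nonneg _) hA
        exact (norm_le_pi_norm (u t z) i).trans (hu t htt z)
      _ = _ := by simp; ring
  have hax := abs_le.1 (hadv x hgx)
  have hay := abs_le.1 (hadv y hgy)
  have ht_der : 0 ≤ deriv (fun s => θ s x) t - deriv (fun s => θ s y) t + 2 * H / t1 := by
    have hd1 := ((hs.timeDiff t htI x).hasDerivAt.sub (hs.timeDiff t htI y).hasDerivAt).sub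
      ((((hasDerivAt_id t).const_sub t1).const_mul (2 * H)).div_const t1)
    have := oc_left_deriv hd1 (by
      have : Set.Ioo 0 t ∈ 𝓝[<] t := Ioo_mem_nhdsLT ht0
      filter_upwards [this] with s hs'
      have := hmax s ⟨hs'.1.le, hs'.2.le.trans ht.2⟩ x y hxy
      simp only [id] at this ⊢
      show θ s x - θ s y - 2 * H * (t1 - s) / t1 ≤ θ t x - θ t y - 2 * H * (t1 - t) / t1
      linarith)
    have e : 2 * H * -1 / t1 = - (2 * H / t1) := by ring
    rw [e] at this
    linarith
  have ex := hs.eqn t htI x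
  have ey := hs.eqn t htI y
  have := mul_le_mul_of_nonneg_left hlap hκ.le
  nlinarith

lemma oc_lip {d : ℕ} {u : ℝ → (Fin d → ℝ) → Fin d → ℝ} {κ A H τ : ℝ}
    {θin : (Fin d → ℝ) → ℝ} {θ : ℝ → (Fin d → ℝ) → ℝ}
    (hκ : 0 < κ) (hA : 0 ≤ A) (hτ : 0 < τ) (hH0 : 0 ≤ H)
    (hu : ∀ t ∈ Set.Icc (0:ℝ) 1, ∀ x, ‖u t x‖ ≤ A) (hs : IsAdvDiffSol u κ θin θ)
    (hH : ∀ t ∈ Set.Icc (0:ℝ) 1, ∀ x, |θ t x| ≤ H) :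
    ∃ L r0 : ℝ, 0 ≤ L ∧ 0 < r0 ∧ ∀ t ∈ Set.Icc τ 1, ∀ x y : Fin d → ℝ, (∀ i, |x i - y i| ≤ r0) →
      |θ t x - θ t y| ≤ L * ∑ i, |x i - y i| := by
  set r0 := κ / (d * A + 1) with hr0
  have hdA : (0:ℝ) < d * A + 1 := by positivity
  have hr0p : 0 < r0 := by positivity
  set L := 4 * H / r0 + H / τ + 1 with hL
  have hLp : 0 < L := by positivity
  have hL1 : 4 * H / r0 ≤ L := by
    have : 0 ≤ H / τ := by positivity
    linarith
  have hL2 : H / τ < L := by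
    have : 0 ≤ 4 * H / r0 := by positivity
    linarith
  have key : ∀ t ∈ Set.Icc τ 1, ∀ x y : Fin d → ℝ, (∀ i, |x i - y i| ≤ r0) →
      θ t x - θ t y ≤ L * ∑ i, |x i - y i| := by
    intro t ht x y hxy
    have := oc_lip_aux (t1 := t) (L := L) (K := L / r0) (r0 := r0) hκ hA
      ⟨hτ.trans_le ht.1, ht.2⟩ hu hs hH hr0p (by positivity) (by field_simp)
      (by rw [div_le_iff₀ hr0p] at hL1; exact hL1)
      (by
        have h1 : H / t ≤ H / τ := div_le_div_of_nonneg_left hH0 hτ ht.1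
        have h2 : κ * (L / r0) = (d * A + 1) * L := by
          rw [hr0]; field_simp
        have h3 : (0:ℝ) ≤ d * A * L := by positivity
        have h4 : 2 * H / t = 2 * (H / t) := by ring
        rw [h4, mul_assoc 4, h2]
        nlinarith) x y hxy
    refine this.trans ?_
    rw [Finset.mul_sum]
    refine Finset.sum_le_sum fun i _ => ?_
    have : 0 ≤ L / r0 / 2 * |x i - y i| ^ 2 := by positivity
    linarith
  refine ⟨L, r0, hLp.le, hr0p, fun t ht x y hxy => abs_le.2 ⟨?_, key t ht x y hxy⟩⟩
  have := key t ht y x (fun i => by rw [abs_sub_comm]; exact hxy i)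
  simp only [abs_sub_comm (y _)] at this
  linarith

open scoped ContDiff



lemma oc_pd_sub {d : ℕ} {f g : (Fin d → ℝ) → ℝ} (hf : Differentiable ℝ f)
    (hg : Differentiable ℝ g) (i : Fin d) :
    pd (fun x => f x - g x) i = fun x => pd f i x - pd g i x := by
  ext x
  unfold pd
  have := fderiv_sub (hf x) (hg x)
  rw [show (fun x => f x - g x) = f - g from rfl, this]; rfl

lemma oc_pd_lin {d : ℕ} {f g : (Fin d → ℝ) → ℝ} (hf : Differentiable ℝ f)
    (hg : Differentiable ℝ g) (a b : ℝ) (i : Fin d) :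
    pd (fun x => a * f x + b * g x) i = fun x => a * pd f i x + b * pd g i x := by
  ext x
  unfold pd
  have := (((hf x).hasFDerivAt.const_mul a).add ((hg x).hasFDerivAt.const_mul b)).fderiv
  rw [show (fun x => a * f x + b * g x) = (fun x => a * f x) + (fun x => b * g x) from rfl, this]
  rfl

lemma oc_pd_mul {d : ℕ} {f g : (Fin d → ℝ) → ℝ} (hf : Differentiable ℝ f)
    (hg : Differentiable ℝ g) (i : Fin d) (x : Fin d → ℝ) :
    pd (fun x => f x * g x) i x = f x * pd g i x + g x * pd f i x := by
  unfold pd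
  have := ((hf x).hasFDerivAt.mul (hg x).hasFDerivAt).fderiv
  rw [show (fun x => f x * g x) = f * g from rfl, this]
  rfl

lemma oc_pd_shift {d : ℕ} {f : (Fin d → ℝ) → ℝ} (y : Fin d → ℝ) (i : Fin d) :
    pd (fun x => f (x + y)) i = fun x => pd f i (x + y) := by
  ext x
  unfold pd
  rw [fderiv_comp_add_right]

lemma oc_pd_shift' {d : ℕ} {f : (Fin d → ℝ) → ℝ} (y : Fin d → ℝ) (i : Fin d) :
    pd (fun x => f (x - y)) i = fun x => pd f i (x - y) := by
  simpa [sub_eq_add_neg] using oc_pd_shift (f := f) (-y) i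

lemma oc_pd_of {d : ℕ} {f : (Fin d → ℝ) → ℝ} {i : Fin d} {x : Fin d → ℝ} {c : ℝ}
    (hf : DifferentiableAt ℝ f x)
    (h : HasDerivAt (fun s : ℝ => f (x + s • Pi.single i 1)) c 0) : pd f i x = c := by
  have h2 := oc_pd_line (f := f) i x 0 (by simpa using hf)
  simp only [zero_smul, add_zero] at h2
  exact h2.unique h

lemma oc_locmax {d : ℕ} {f : (Fin d → ℝ) → ℝ} {x : Fin d → ℝ} (hf : ContDiff ℝ 2 f)
    (h : IsLocalMax f x) (i : Fin d) : pd f i x = 0 ∧ pd (pd f i) i x ≤ 0 := by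
  have hd : Differentiable ℝ f := hf.differentiable two_ne_zero
  have hpd : Differentiable ℝ (pd f i) :=
    (oc_pd_contDiff (m := 1) hf (by norm_num) i).differentiable one_ne_zero
  constructor
  · unfold pd; rw [h.fderiv_eq_zero]; rfl
  · have h2 := oc_pd_line (f := pd f i) i x 0 (hpd _)
    simp only [zero_smul, add_zero] at h2
    refine oc_second (f := fun s : ℝ => f (x + s • Pi.single i 1))
      (Eventually.of_forall fun s => oc_pd_line i x s (hd _)) h2 ?_
    have hc : ContinuousAt (fun s : ℝ => x + s • (Pi.single i 1 : Fin d → ℝ)) 0 := by fun_prop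
    have : ∀ᶠ y in 𝓝 (x + (0:ℝ) • (Pi.single i 1 : Fin d → ℝ)), f y ≤ f x := by
      rw [zero_smul, add_zero]; exact h
    have := hc.eventually this
    simpa [IsLocalMax, IsMaxFilter] using this

lemma oc_joint_pd {d : ℕ} {v : ℝ → (Fin d → ℝ) → ℝ}
    (hv : ContDiff ℝ ∞ (fun p : ℝ × (Fin d → ℝ) => v p.1 p.2)) (i : Fin d) :
    ContDiff ℝ ∞ (fun p : ℝ × (Fin d → ℝ) => pd (v p.1) i p.2) := by
  have e : (fun p : ℝ × (Fin d → ℝ) => pd (v p.1) i p.2) =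
      fun p => fderiv ℝ (fun p : ℝ × (Fin d → ℝ) => v p.1 p.2) p (0, Pi.single i 1) := by
    ext p
    have hd : DifferentiableAt ℝ (fun p : ℝ × (Fin d → ℝ) => v p.1 p.2) (p.1, p.2) :=
      hv.differentiable (by simp) _
    have h1 := hd.hasFDerivAt.comp p.2 (hasFDerivAt_prodMk_right p.1 p.2)
    unfold pd
    have h2 := h1.fderiv
    simp only [Function.comp_def] at h2
    rw [h2]
    simp
  rw [e]
  exact (hv.fderiv_right (m := ∞) (by simp)).clm_apply contDiff_const

lemma oc_joint_dt {d : ℕ} {v : ℝ → (Fin d → ℝ) → ℝ}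
    (hv : ContDiff ℝ ∞ (fun p : ℝ × (Fin d → ℝ) => v p.1 p.2)) :
    (∀ t x, HasDerivAt (fun s => v s x) (deriv (fun s => v s x) t) t) ∧
    ContDiff ℝ ∞ (fun p : ℝ × (Fin d → ℝ) => deriv (fun s => v s p.2) p.1) := by
  have key : ∀ t x, HasDerivAt (fun s => v s x)
      (fderiv ℝ (fun p : ℝ × (Fin d → ℝ) => v p.1 p.2) (t, x) (1, 0)) t := by
    intro t x
    have hd : DifferentiableAt ℝ (fun p : ℝ × (Fin d → ℝ) => v p.1 p.2) (t, x) :=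
      hv.differentiable (by simp) _
    have := hd.hasFDerivAt.comp_hasDerivAt t ((hasDerivAt_id t).prodMk (hasDerivAt_const t x))
    simpa [Function.comp_def] using this
  constructor
  · intro t x; exact (key t x).differentiableAt.hasDerivAt
  · have e : (fun p : ℝ × (Fin d → ℝ) => deriv (fun s => v s p.2) p.1) =
        fun p => fderiv ℝ (fun p : ℝ × (Fin d → ℝ) => v p.1 p.2) p (1, 0) := by
      ext p; exact (key p.1 p.2).deriv
    rw [e]
    exact (hv.fderiv_right (m := ∞) (by simp)).clm_apply contDiff_const

lemma oc_slice {d : ℕ} {v : ℝ → (Fin d → ℝ) → ℝ}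
    (hv : ContDiff ℝ ∞ (fun p : ℝ × (Fin d → ℝ) => v p.1 p.2)) (t : ℝ) : ContDiff ℝ ∞ (v t) :=
  hv.comp (contDiff_const.prodMk contDiff_id)

/-- The advection-diffusion operator. -/
def ocL {d : ℕ} (u : ℝ → (Fin d → ℝ) → Fin d → ℝ) (κ : ℝ) (v : ℝ → (Fin d → ℝ) → ℝ)
    (t : ℝ) (x : Fin d → ℝ) : ℝ :=
  deriv (fun s => v s x) t + ∑ i, u t x i * pd (v t) i x - κ * ∑ i, pd (pd (v t) i) i x

lemma oc_visc {d : ℕ} {u : ℝ → (Fin d → ℝ) → Fin d → ℝ} {κ E r : ℝ}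
    (hu : Continuous fun p : ℝ × (Fin d → ℝ) => u p.1 p.2) (hκ : 0 ≤ κ) (hr : 0 < r)
    {v : ℝ → (Fin d → ℝ) → ℝ} (hv : ContDiff ℝ ∞ (fun p : ℝ × (Fin d → ℝ) => v p.1 p.2))
    (p0 : ℝ × (Fin d → ℝ))
    (hW : ∀ ε > 0, ∃ W : ℝ → (Fin d → ℝ) → ℝ,
      ContinuousOn (fun p : ℝ × (Fin d → ℝ) => W p.1 p.2) (Metric.closedBall p0 r) ∧
      ∀ p ∈ Metric.closedBall p0 r, DifferentiableAt ℝ (fun s => W s p.2) p.1 ∧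
        ContDiff ℝ 2 (W p.1) ∧ ocL u κ W p.1 p.2 ≤ E ∧ |W p.1 p.2 - v p.1 p.2| ≤ ε) :
    ocL u κ v p0.1 p0.2 ≤ E := by
  by_contra! hcon
  set γ := (ocL u κ v p0.1 p0.2 - E) / 4 with hγ
  have hγp : 0 < γ := by rw [hγ]; linarith
  set c := γ / (2 * κ * d + 1) with hc
  have hcp : 0 < c := by positivity
  have hcb : 2 * κ * c * d ≤ γ := by
    have : c * (2 * κ * d + 1) = γ := by rw [hc]; field_simp
    nlinarith
  have hLc : Continuous (fun p : ℝ × (Fin d → ℝ) => ocL u κ v p.1 p.2) := by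
    unfold ocL
    have h1 := (oc_joint_dt hv).2.continuous
    have h2 := fun i => (oc_joint_pd hv i).continuous
    have h3 := fun i => (oc_joint_pd (v := fun t x => pd (v t) i x) (oc_joint_pd hv i) i).continuous
    have h4 : ∀ i, Continuous fun p : ℝ × (Fin d → ℝ) => u p.1 p.2 i :=
      fun i => (continuous_apply i).comp hu
    exact (h1.add (continuous_finsetSum _ fun i _ => (h4 i).mul (h2 i))).sub
      ((continuous_finsetSum _ fun i _ => h3 i).const_mul κ)
  have hGc : Continuous (fun p : ℝ × (Fin d → ℝ) => ocL u κ v p.1 p.2 + 2 * c * (p.1 - p0.1)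
      + ∑ i, u p.1 p.2 i * (2 * c * (p.2 i - p0.2 i))) := by
    have h4 : ∀ i, Continuous fun p : ℝ × (Fin d → ℝ) => u p.1 p.2 i :=
      fun i => (continuous_apply i).comp hu
    refine (hLc.add (by fun_prop)).add (continuous_finsetSum _ fun i _ => (h4 i).mul (by fun_prop))
  have hG0 : E + 2 * γ < (fun p : ℝ × (Fin d → ℝ) => ocL u κ v p.1 p.2 + 2 * c * (p.1 - p0.1)
      + ∑ i, u p.1 p.2 i * (2 * c * (p.2 i - p0.2 i))) p0 := by
    simp only [sub_self, mul_zero, Finset.sum_const_zero, add_zero]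
    linarith
  obtain ⟨r1, hr1, hball⟩ := Metric.eventually_nhds_iff.1
    (hGc.continuousAt.eventually (eventually_gt_nhds hG0))
  set r' := min r1 r with hr'
  have hr'p : 0 < r' := lt_min hr1 hr
  obtain ⟨W, hWc, hWp⟩ := hW (c * r' ^ 2 / 4) (by positivity)
  set Q : (Fin d → ℝ) → ℝ := fun x => ∑ j, (x j - p0.2 j) ^ 2 with hQ
  have hQ2 : ContDiff ℝ ∞ Q := by
    apply ContDiff.sum
    intro j _
    exact ((contDiff_apply ℝ ℝ j).sub contDiff_const).pow 2
  have hQd : Differentiable ℝ Q := hQ2.differentiable (by simp)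
  have hQpd : ∀ i, pd Q i = fun x => 2 * (x i - p0.2 i) := by
    intro i
    ext x
    apply oc_pd_of (hQd x)
    have : ∀ j, HasDerivAt (fun s : ℝ => ((x + s • Pi.single i 1 : Fin d → ℝ) j - p0.2 j) ^ 2)
        (if j = i then 2 * (x i - p0.2 i) else 0) 0 := by
      intro j
      have h1 := ((hasDerivAt_pi.1 (oc_line i x 0) j).sub_const (p0.2 j)).pow 2
      refine h1.congr_deriv ?_
      by_cases hj : j = i
      · subst hj; simp
      · simp [hj]
    have := HasDerivAt.fun_sum (u := Finset.univ) fun j _ => this j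
    refine this.congr_deriv ?_
    simp
  have hQpp : ∀ i x, pd (pd Q i) i x = 2 := by
    intro i x
    apply oc_pd_of
    · rw [hQpd]; fun_prop
    · rw [hQpd]
      have h1 := ((hasDerivAt_pi.1 (oc_line i x 0) i).sub_const (p0.2 i)).const_mul 2
      refine h1.congr_deriv ?_
      simp
  have hqdist : ∀ p : ℝ × (Fin d → ℝ), c * dist p p0 ^ 2 ≤ c * ((p.1 - p0.1) ^ 2 + Q p.2) := by
    intro p
    refine mul_le_mul_of_nonneg_left ?_ hcp.le
    have hQ0 : 0 ≤ Q p.2 := Finset.sum_nonneg fun j _ => sq_nonneg _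
    have h1 : dist p.2 p0.2 ≤ √((p.1 - p0.1) ^ 2 + Q p.2) := by
      rw [dist_pi_le_iff (Real.sqrt_nonneg _)]
      intro j
      apply Real.le_sqrt_of_sq_le
      rw [Real.dist_eq, sq_abs]
      have : (p.2 j - p0.2 j) ^ 2 ≤ Q p.2 :=
        Finset.single_le_sum (f := fun j => (p.2 j - p0.2 j) ^ 2) (fun j _ => sq_nonneg _)
          (Finset.mem_univ j)
      nlinarith [sq_nonneg (p.1 - p0.1)]
    have h2 : dist p.1 p0.1 ≤ √((p.1 - p0.1) ^ 2 + Q p.2) := by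
      apply Real.le_sqrt_of_sq_le
      rw [Real.dist_eq, sq_abs]
      linarith
    have h3 : dist p p0 ≤ √((p.1 - p0.1) ^ 2 + Q p.2) := max_le h2 h1
    calc dist p p0 ^ 2 ≤ √((p.1 - p0.1) ^ 2 + Q p.2) ^ 2 :=
          pow_le_pow_left₀ dist_nonneg h3 2
      _ = _ := Real.sq_sqrt (by positivity)
  have hp0K : p0 ∈ Metric.closedBall p0 r := Metric.mem_closedBall_self hr.le
  obtain ⟨p, hpK, hmax⟩ := (isCompact_closedBall p0 r).exists_isMaxOn ⟨p0, hp0K⟩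
    (f := fun p : ℝ × (Fin d → ℝ) => W p.1 p.2 - v p.1 p.2 - c * ((p.1 - p0.1) ^ 2 + Q p.2))
    ((hWc.sub hv.continuous.continuousOn).sub (by
      have := hQ2.continuous
      fun_prop))
  have hcmp := hmax hp0K
  have e1 := abs_le.1 (hWp p0 hp0K).2.2.2
  have e2 := abs_le.1 (hWp p hpK).2.2.2
  have hQ00 : Q p0.2 = 0 := by simp [hQ]
  simp only [Set.mem_setOf_eq, sub_self, hQ00] at hcmp
  have hdp := hqdist p
  have hlt : dist p p0 < r' := by
    by_contra! hge
    have : r' ^ 2 ≤ dist p p0 ^ 2 := pow_le_pow_left₀ hr'p.le hge 2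
    have h3 := mul_le_mul_of_nonneg_left this hcp.le
    have h4 : 0 < c * r' ^ 2 := by positivity
    nlinarith
  have hnhds : Metric.closedBall p0 r ∈ 𝓝 p :=
    Metric.closedBall_mem_nhds_of_mem (Metric.mem_ball.2 (hlt.trans_le (min_le_right _ _)))
  have hloc := hmax.isLocalMax hnhds
  have hG := hball (hlt.trans_le (min_le_left _ _))
  obtain ⟨hWt, hW2, hWL, -⟩ := hWp p hpK
  -- time derivative
  have htime : deriv (fun s => W s p.2) p.1 = deriv (fun s => v s p.2) p.1 + 2 * c * (p.1 - p0.1) := by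
    have hcts : ContinuousAt (fun s : ℝ => (s, p.2)) p.1 := by fun_prop
    have hl : IsLocalMax (fun s : ℝ => W s p.2 - v s p.2 - c * ((s - p0.1) ^ 2 + Q p.2)) p.1 :=
      hcts.eventually hloc
    have hder := (hWt.hasDerivAt.sub ((oc_joint_dt hv).1 p.1 p.2)).sub
      (((((hasDerivAt_id p.1).sub_const p0.1).pow 2).add_const (Q p.2)).const_mul c)
    have := hl.hasDerivAt_eq_zero hder
    simp at this
    linarith
  have hvs := oc_slice hv p.1
  have hspace : IsLocalMax (fun x => (W p.1 x - v p.1 x) - c * ((p.1 - p0.1) ^ 2 + Q x)) p.2 := by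
    have hcts : ContinuousAt (fun x : Fin d → ℝ => (p.1, x)) p.2 := by fun_prop
    exact hcts.eventually hloc
  have hspace' : IsLocalMax (fun x => (W p.1 x - v p.1 x) - (c * Q x + 0 * Q x)) p.2 := by
    filter_upwards [hspace] with x hx
    linarith
  have hvd : Differentiable ℝ (v p.1) := hvs.differentiable (by simp)
  have hWd : Differentiable ℝ (W p.1) := hW2.differentiable two_ne_zero
  have hvpd := fun i => (oc_pd_contDiff (m := 1) (contDiff_infty.1 hvs 2) (by norm_num) i).differentiable one_ne_zero
  have hWpd := fun i => (oc_pd_contDiff (m := 1) hW2 (by norm_num) i).differentiable one_ne_zero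
  have hQpdd := fun i => (oc_pd_contDiff (m := 1) (contDiff_infty.1 hQ2 2) (by norm_num) i).differentiable one_ne_zero
  have hC2 : ContDiff ℝ 2 (fun x => (W p.1 x - v p.1 x) - (c * Q x + 0 * Q x)) := by
    have h1 : ContDiff ℝ 2 (v p.1) := contDiff_infty.1 hvs 2
    have h2 : ContDiff ℝ 2 Q := contDiff_infty.1 hQ2 2
    fun_prop
  have hfirst : ∀ i, pd (fun x => (W p.1 x - v p.1 x) - (c * Q x + 0 * Q x)) i =
      fun x => (pd (W p.1) i x - pd (v p.1) i x) - (c * pd Q i x + 0 * pd Q i x) := by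
    intro i
    rw [oc_pd_sub (f := fun x => W p.1 x - v p.1 x) (g := fun x => c * Q x + 0 * Q x) (hWd.sub hvd)
      ((hQd.const_mul c).add (hQd.const_mul 0)), oc_pd_sub hWd hvd, oc_pd_lin hQd hQd]
  have hsecond : ∀ i, pd (pd (fun x => (W p.1 x - v p.1 x) - (c * Q x + 0 * Q x)) i) i =
      fun x => (pd (pd (W p.1) i) i x - pd (pd (v p.1) i) i x)
        - (c * pd (pd Q i) i x + 0 * pd (pd Q i) i x) := by
    intro i
    rw [hfirst, oc_pd_sub (f := fun x => pd (W p.1) i x - pd (v p.1) i x)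
      (g := fun x => c * pd Q i x + 0 * pd Q i x) ((hWpd i).sub (hvpd i)) (((hQpdd i).const_mul c).add ((hQpdd i).const_mul 0)),
      oc_pd_sub (hWpd i) (hvpd i), oc_pd_lin (hQpdd i) (hQpdd i)]
  have g1 : ∀ i, pd (W p.1) i p.2 = pd (v p.1) i p.2 + 2 * c * (p.2 i - p0.2 i) := by
    intro i
    have := (oc_locmax hC2 hspace' i).1
    rw [hfirst, hQpd] at this
    simp only at this
    linarith
  have g2 : ∀ i, pd (pd (W p.1) i) i p.2 ≤ pd (pd (v p.1) i) i p.2 + 2 * c := by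
    intro i
    have := (oc_locmax hC2 hspace' i).2
    rw [hsecond] at this
    simp only [hQpp] at this
    linarith
  have hlap : ∑ i, pd (pd (W p.1) i) i p.2 ≤ ∑ i, pd (pd (v p.1) i) i p.2 + 2 * c * d := by
    refine (Finset.sum_le_sum fun i _ => g2 i).trans ?_
    rw [Finset.sum_add_distrib]; simp; linarith
  have hlap' := mul_le_mul_of_nonneg_left hlap hκ
  have hadv : ∑ i, u p.1 p.2 i * pd (W p.1) i p.2 = ∑ i, u p.1 p.2 i * pd (v p.1) i p.2
      + ∑ i, u p.1 p.2 i * (2 * c * (p.2 i - p0.2 i)) := by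
    rw [← Finset.sum_add_distrib]
    exact Finset.sum_congr rfl fun i _ => by rw [g1]; ring
  unfold ocL at hWL hG
  rw [htime, hadv] at hWL
  nlinarith



lemma oc_unif {d : ℕ} {F : Type*} [PseudoMetricSpace F] {f : ℝ → (Fin d → ℝ) → F}
    (hc : ContinuousOn (fun p : ℝ × (Fin d → ℝ) => f p.1 p.2) (Set.Icc 0 1 ×ˢ Set.univ))
    (hp : ∀ t x (k : Fin d → ℤ), f t (x + fun i => (k i : ℝ)) = f t x) {ε : ℝ} (hε : 0 < ε) :
    ∃ η > 0, ∀ t ∈ Set.Icc (0:ℝ) 1, ∀ s ∈ Set.Icc (0:ℝ) 1, ∀ x y, |t - s| ≤ η → ‖x - y‖ ≤ η →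
      dist (f t x) (f s y) ≤ ε := by
  have hK : IsCompact ((Set.Icc (0:ℝ) 1) ×ˢ (Set.Icc (fun _ => (-1:ℝ)) (fun _ => 2) : Set (Fin d → ℝ))) :=
    isCompact_Icc.prod isCompact_Icc
  have hu := hK.uniformContinuousOn_of_continuous
    (hc.mono (Set.prod_mono le_rfl (Set.subset_univ _)))
  obtain ⟨δ, hδ, h⟩ := Metric.uniformContinuousOn_iff.1 hu ε hε
  refine ⟨min (δ / 2) 1, by positivity, fun t ht s hs x y hts hxy => ?_⟩
  set k : Fin d → ℤ := fun i => -⌊x i⌋ with hk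
  have hb := oc_floor x
  rw [← hp t x k, ← hp s y k]
  have hi : ∀ i, |x i - y i| ≤ min (δ / 2) 1 := fun i => (norm_le_pi_norm (x - y) i).trans hxy
  refine (h (t, _) ⟨ht, ?_, ?_⟩ (s, _) ⟨hs, ?_, ?_⟩ ?_).le
  · intro i; have := hb.1 i; simp only [hk]; simp at this ⊢; linarith
  · intro i; have := hb.2 i; simp only [hk]; simp at this ⊢; linarith
  · intro i; have := hb.1 i; simp only [hk]; have h2 := abs_le.1 ((hi i).trans (min_le_right _ _))
    simp at this ⊢; linarith
  · intro i; have := hb.2 i; simp only [hk]; have h2 := abs_le.1 ((hi i).trans (min_le_right _ _))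
    simp at this ⊢; linarith
  · rw [Prod.dist_eq]
    have : min (δ / 2) 1 < δ := (min_le_left _ _).trans_lt (by linarith)
    refine max_lt ?_ ?_
    · simpa [Real.dist_eq] using hts.trans_lt this
    · rw [dist_add_right, dist_eq_norm]; exact hxy.trans_lt this

/-- Space-time mollification. -/
def ocV {d : ℕ} (ρ : ContDiffBump (0 : ℝ × (Fin d → ℝ))) (Θ : ℝ × (Fin d → ℝ) → ℝ)
    (t : ℝ) (x : Fin d → ℝ) : ℝ := ∫ p, ρ.normed volume p * Θ ((t, x) - p)

instance oc_haar (d : ℕ) : (volume : Measure (ℝ × (Fin d → ℝ))).IsAddHaarMeasure :=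
  inferInstanceAs ((volume : Measure ℝ).prod (volume : Measure (Fin d → ℝ))).IsAddHaarMeasure

section V
variable {d : ℕ} {ρ : ContDiffBump (0 : ℝ × (Fin d → ℝ))} {Θ : ℝ × (Fin d → ℝ) → ℝ}

lemma ocV_smooth (hΘ : Continuous Θ) :
    ContDiff ℝ ∞ (fun p : ℝ × (Fin d → ℝ) => ocV ρ Θ p.1 p.2) := by
  have := HasCompactSupport.contDiff_convolution_left (n := ⊤) (ContinuousLinearMap.lsmul ℝ ℝ)
    (μ := (volume : Measure (ℝ × (Fin d → ℝ)))) (ρ.hasCompactSupport_normed (μ := volume)) ρ.contDiff_normed hΘ.locallyIntegrable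
  exact this

lemma ocV_int (hΘ : Continuous Θ) (q) : Integrable (fun p => ρ.normed volume p * Θ (q - p)) := by
  apply Continuous.integrable_of_hasCompactSupport
  · exact ρ.continuous_normed.mul (hΘ.comp (by fun_prop))
  · exact ρ.hasCompactSupport_normed.mul_right

lemma ocV_bound (hΘ : Continuous Θ) {q1 q2 : ℝ × (Fin d → ℝ)} {B : ℝ}
    (h : ∀ p, |Θ (q1 - p) - Θ (q2 - p)| ≤ B) :
    |ocV ρ Θ q1.1 q1.2 - ocV ρ Θ q2.1 q2.2| ≤ B := by
  unfold ocV
  rw [← integral_sub (ocV_int hΘ _) (ocV_int hΘ _)]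
  have hi : Integrable (fun p => ρ.normed volume p * B) := ρ.integrable_normed.mul_const B
  rw [← Real.norm_eq_abs]
  refine le_trans (norm_integral_le_of_norm_le hi
    (Eventually.of_forall fun p => ?_)) (le_of_eq ?_)
  · rw [← mul_sub, Real.norm_eq_abs, abs_mul, abs_of_nonneg (ρ.nonneg_normed p)]
    exact mul_le_mul_of_nonneg_left (h p) (ρ.nonneg_normed p)
  · rw [integral_mul_const, ρ.integral_normed, one_mul]

lemma ocV_bound' {q1 : ℝ × (Fin d → ℝ)} {B : ℝ}
    (h : ∀ p, |Θ (q1 - p)| ≤ B) : |ocV ρ Θ q1.1 q1.2| ≤ B := by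
  unfold ocV
  have hi : Integrable (fun p => ρ.normed volume p * B) := ρ.integrable_normed.mul_const B
  rw [← Real.norm_eq_abs]
  refine le_trans (norm_integral_le_of_norm_le hi
    (Eventually.of_forall fun p => ?_)) (le_of_eq ?_)
  · rw [Real.norm_eq_abs, abs_mul, abs_of_nonneg (ρ.nonneg_normed p)]
    exact mul_le_mul_of_nonneg_left (h p) (ρ.nonneg_normed p)
  · rw [integral_mul_const, ρ.integral_normed, one_mul]

lemma ocV_neg (t x) : ocV ρ (fun p => - Θ p) t x = - ocV ρ Θ t x := by
  unfold ocV
  rw [← integral_neg]; congr; ext p; ring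

end V

lemma oc_pd_neg {d : ℕ} (f : (Fin d → ℝ) → ℝ) (i : Fin d) :
    pd (fun x => - f x) i = fun x => - pd f i x := by
  ext x; unfold pd; rw [fderiv_fun_neg]; rfl

lemma ocL_neg {d : ℕ} (u : ℝ → (Fin d → ℝ) → Fin d → ℝ) (κ : ℝ) (v : ℝ → (Fin d → ℝ) → ℝ) (t x) :
    ocL u κ (fun t x => - v t x) t x = - ocL u κ v t x := by
  unfold ocL
  simp only [oc_pd_neg]
  rw [deriv.fun_neg]
  simp only [mul_neg, Finset.sum_neg_distrib]
  ring

lemma oc_sol_neg {d : ℕ} {u : ℝ → (Fin d → ℝ) → Fin d → ℝ} {κ : ℝ} {θin θ}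
    (h : IsAdvDiffSol u κ θin θ) : IsAdvDiffSol u κ (fun x => - θin x) (fun t x => - θ t x) := by
  refine ⟨fun t x k => by rw [h.periodic], h.cont.neg, fun x => by rw [h.init],
    fun t ht x => (h.timeDiff t ht x).neg, fun t ht => (h.spaceC2 t ht).neg, fun t ht x => ?_⟩
  have := h.eqn t ht x
  simp only [oc_pd_neg]
  rw [deriv.fun_neg]
  simp only [mul_neg, Finset.sum_neg_distrib]
  linarith

/-- clamped extension -/
def ocC {d : ℕ} (θ : ℝ → (Fin d → ℝ) → ℝ) (p : ℝ × (Fin d → ℝ)) : ℝ := θ (max 0 (min 1 p.1)) p.2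

lemma oc_clamp (t : ℝ) : max 0 (min 1 t) ∈ Set.Icc (0:ℝ) 1 :=
  ⟨le_max_left _ _, max_le zero_le_one (min_le_left _ _)⟩

lemma ocC_cont {d : ℕ} {θ : ℝ → (Fin d → ℝ) → ℝ}
    (hc : ContinuousOn (fun p : ℝ × (Fin d → ℝ) => θ p.1 p.2) (Set.Icc 0 1 ×ˢ Set.univ)) :
    Continuous (ocC θ) :=
  hc.comp_continuous (f := fun p : ℝ × (Fin d → ℝ) => (max 0 (min 1 p.1), p.2)) (by fun_prop)
    fun p => ⟨oc_clamp _, trivial⟩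

lemma ocC_eq {d : ℕ} (θ : ℝ → (Fin d → ℝ) → ℝ) {t : ℝ} (ht : t ∈ Set.Icc (0:ℝ) 1) (x) :
    ocC θ (t, x) = θ t x := by
  unfold ocC
  simp [min_eq_right ht.2, max_eq_right ht.1]



lemma ocL_translate {d : ℕ} {u : ℝ → (Fin d → ℝ) → Fin d → ℝ} {κ L w0 : ℝ} {θin θ}
    (h : IsAdvDiffSol u κ θin θ) (q : ℝ × (Fin d → ℝ)) (t : ℝ) (x : Fin d → ℝ)
    (ht : t - q.1 ∈ Set.Ioc (0:ℝ) 1) (hw00 : 0 ≤ w0)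
    (hL : ∀ i, |pd (θ (t - q.1)) i (x - q.2)| ≤ L)
    (hw0 : dist (u t x) (u (t - q.1) (x - q.2)) ≤ w0) :
    DifferentiableAt ℝ (fun s => θ (s - q.1) (x - q.2)) t ∧
    ContDiff ℝ 2 (fun x => θ (t - q.1) (x - q.2)) ∧
    ocL u κ (fun t x => θ (t - q.1) (x - q.2)) t x ≤ d * (w0 * L) := by
  have hd := h.timeDiff _ ht (x - q.2)
  have hder : HasDerivAt (fun s => θ (s - q.1) (x - q.2))
      (deriv (fun s => θ s (x - q.2)) (t - q.1)) t := hd.hasDerivAt.comp_sub_const t q.1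
  refine ⟨hder.differentiableAt, (h.spaceC2 _ ht).comp (contDiff_id.sub contDiff_const), ?_⟩
  unfold ocL
  simp only [oc_pd_shift' (f := θ (t - q.1)) q.2]
  have e2 : ∀ i, pd (fun x => pd (θ (t - q.1)) i (x - q.2)) i x = pd (pd (θ (t - q.1)) i) i (x - q.2) := by
    intro i; rw [oc_pd_shift' (f := pd (θ (t - q.1)) i) q.2 i]
  simp only [e2]
  rw [hder.deriv]
  have e := h.eqn _ ht (x - q.2)
  have : ∑ i, (u t x i - u (t - q.1) (x - q.2) i) * pd (θ (t - q.1)) i (x - q.2) ≤ d * (w0 * L) := by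
    refine (Finset.sum_le_card_nsmul _ _ (w0 * L) fun i _ => ?_).trans_eq (by simp)
    refine (le_abs_self _).trans ?_
    rw [abs_mul]
    refine mul_le_mul ?_ (hL i) (abs_nonneg _) hw00
    rw [← Real.dist_eq]
    exact (dist_le_pi_dist _ _ i).trans hw0
  simp only [sub_mul, Finset.sum_sub_distrib] at this
  linarith

lemma ocL_lin {d : ℕ} {u : ℝ → (Fin d → ℝ) → Fin d → ℝ} {κ a b : ℝ} {V W : ℝ → (Fin d → ℝ) → ℝ} {t x}
    (h1 : DifferentiableAt ℝ (fun s => V s x) t) (h2 : ContDiff ℝ 2 (V t))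
    (h3 : DifferentiableAt ℝ (fun s => W s x) t) (h4 : ContDiff ℝ 2 (W t)) :
    ocL u κ (fun t x => a * V t x + b * W t x) t x = a * ocL u κ V t x + b * ocL u κ W t x := by
  unfold ocL
  have hp1 := fun i => (oc_pd_contDiff (m := 1) h2 (by norm_num) i).differentiable one_ne_zero
  have hp2 := fun i => (oc_pd_contDiff (m := 1) h4 (by norm_num) i).differentiable one_ne_zero
  simp only [oc_pd_lin (h2.differentiable two_ne_zero) (h4.differentiable two_ne_zero) a b]
  have e2 : ∀ i, pd (fun x => a * pd (V t) i x + b * pd (W t) i x) i x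
      = a * pd (pd (V t) i) i x + b * pd (pd (W t) i) i x := by
    intro i; rw [oc_pd_lin (hp1 i) (hp2 i) a b]
  simp only [e2]
  have hder := ((h1.hasDerivAt.const_mul a).add (h3.hasDerivAt.const_mul b)).deriv
  have hder' : deriv (fun s => a * V s x + b * W s x) t
    = a * deriv (fun s => V s x) t + b * deriv (fun s => W s x) t := hder
  rw [hder']
  simp only [mul_add, Finset.sum_add_distrib, Finset.mul_sum, mul_sub]
  have s1 : ∀ c (f g : Fin d → ℝ), ∑ i, f i * (c * g i) = c * ∑ i, f i * g i := by
    intro c f g; rw [Finset.mul_sum]; exact Finset.sum_congr rfl fun i _ => by ring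
  have s2 : ∀ c k (g : Fin d → ℝ), ∑ i, k * (c * g i) = ∑ i, c * (k * g i) := by
    intro c k g; exact Finset.sum_congr rfl fun i _ => by ring
  rw [s1, s1, s2 a κ, s2 b κ, ← Finset.mul_sum, ← Finset.mul_sum, ← Finset.mul_sum, ← Finset.mul_sum]
  simp only [← Finset.mul_sum]
  ring

lemma oc_upper {d : ℕ} {u : ℝ → (Fin d → ℝ) → Fin d → ℝ} {κ L w0 δ : ℝ} {θin θ}
    (hκ : 0 ≤ κ) (hδ : 0 < δ) (hw00 : 0 ≤ w0)
    (hu : Continuous fun p : ℝ × (Fin d → ℝ) => u p.1 p.2)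
    (h : IsAdvDiffSol u κ θin θ)
    (hL : ∀ t ∈ Set.Icc δ 1, ∀ i x, |pd (θ t) i x| ≤ L)
    (ρ : ContDiffBump (0 : ℝ × (Fin d → ℝ))) (hρ : ρ.rOut ≤ δ / 4)
    (hw0 : ∀ t ∈ Set.Icc (0:ℝ) 1, ∀ s ∈ Set.Icc (0:ℝ) 1, ∀ x y, |t - s| ≤ ρ.rOut → ‖x - y‖ ≤ ρ.rOut →
      dist (u t x) (u s y) ≤ w0) (p0 : ℝ × (Fin d → ℝ)) (hp0 : p0.1 ∈ Set.Icc (2 * δ) (1 - δ)) :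
    ocL u κ (ocV ρ (ocC θ)) p0.1 p0.2 ≤ d * (w0 * L) := by
  have hΘ := ocC_cont h.cont
  have hr : 0 < δ / 4 := by positivity
  apply oc_visc hu hκ hr (ocV_smooth hΘ) p0
  intro ε hε
  have : CompactSpace (Metric.closedBall p0 (δ / 4)) :=
    isCompact_iff_compactSpace.1 (isCompact_closedBall _ _)
  set K := Metric.closedBall p0 (δ / 4) with hK
  let S : Set C(K, ℝ) := {w | ∃ W : ℝ → (Fin d → ℝ) → ℝ, (∀ q : K, w q = W q.1.1 q.1.2) ∧
    ∀ q ∈ K, DifferentiableAt ℝ (fun s => W s q.2) q.1 ∧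
        ContDiff ℝ 2 (W q.1) ∧ ocL u κ W q.1 q.2 ≤ d * (w0 * L)}
  have hS : Convex ℝ S := by
    rintro w1 ⟨W1, h1, h1'⟩ w2 ⟨W2, h2, h2'⟩ a b ha hb hab
    refine ⟨fun t x => a * W1 t x + b * W2 t x, fun q => by simp [h1, h2], fun q hq => ?_⟩
    obtain ⟨a1, a2, a3⟩ := h1' q hq
    obtain ⟨b1, b2, b3⟩ := h2' q hq
    refine ⟨(a1.const_mul a).add (b1.const_mul b), (contDiff_const.mul a2).add (contDiff_const.mul b2), ?_⟩
    rw [ocL_lin a1 a2 b1 b2]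
    have := mul_le_mul_of_nonneg_left a3 ha
    have := mul_le_mul_of_nonneg_left b3 hb
    have e : a * (d * (w0 * L)) + b * (d * (w0 * L)) = d * (w0 * L) := by rw [← add_mul, hab, one_mul]
    linarith
  let F0 : C((ℝ × (Fin d → ℝ)) × K, ℝ) := ⟨fun z => ocC θ (z.2.1 - z.1), hΘ.comp (by fun_prop)⟩
  let F : C(ℝ × (Fin d → ℝ), C(K, ℝ)) := F0.curry
  have hFe : ∀ p (q : K), F p q = ocC θ (q.1 - p) := fun p q => rfl
  set g : ℝ × (Fin d → ℝ) → ENNReal := fun p => ENNReal.ofReal (ρ.normed volume p) with hg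
  have hgm : Measurable g := ρ.continuous_normed.measurable.ennreal_ofReal
  set μ := (volume : Measure (ℝ × (Fin d → ℝ))).withDensity g with hμ
  have hpm : IsProbabilityMeasure μ := by
    constructor
    rw [hμ, withDensity_apply _ MeasurableSet.univ, Measure.restrict_univ,
      ← ofReal_integral_eq_lintegral_ofReal ρ.integrable_normed
        (Eventually.of_forall ρ.nonneg_normed), ρ.integral_normed]
    simp
  have hFS : ∀ᵐ p ∂μ, p ∈ Metric.ball (0 : ℝ × (Fin d → ℝ)) ρ.rOut := by
    rw [hμ, ae_withDensity_iff hgm]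
    refine Eventually.of_forall fun p hp => ?_
    rw [← ρ.support_normed_eq (μ := volume)]
    intro h0
    exact hp (by simp [hg, h0])
  obtain ⟨B, hB⟩ : ∃ B, ∀ p ∈ Metric.closedBall (0 : ℝ × (Fin d → ℝ)) ρ.rOut, ‖F p‖ ≤ B :=
    (isCompact_closedBall _ _).exists_bound_of_continuousOn F.continuous.continuousOn
  have hint : Integrable (fun p => F p) μ := by
    refine Integrable.of_bound F.continuous.aestronglyMeasurable B ?_
    filter_upwards [hFS] with p hp
    exact hB p (Metric.ball_subset_closedBall hp)
  have hmem : (∫ p, F p ∂μ) ∈ closure S := by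
    refine hS.closure.integral_mem isClosed_closure ?_ hint
    filter_upwards [hFS] with p hp
    apply subset_closure
    have hp' : ‖p‖ < ρ.rOut := by simpa using hp
    have hp1 : |p.1| < ρ.rOut := (norm_fst_le p).trans_lt hp'
    have hp2 : ‖p.2‖ < ρ.rOut := (norm_snd_le p).trans_lt hp'
    have hq1 : ∀ q ∈ K, |q.1 - p0.1| ≤ δ / 4 := fun q hq =>
      (le_max_left _ _ : dist q.1 p0.1 ≤ dist q p0).trans hq
    refine ⟨fun t x => θ (t - p.1) (x - p.2), fun q => ?_, fun q hq => ?_⟩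
    · rw [hFe]
      have h1 := abs_le.1 (hq1 q.1 q.2)
      have h2 := abs_lt.1 hp1
      exact ocC_eq θ (t := q.1.1 - p.1) ⟨by linarith [hp0.1], by linarith [hp0.2]⟩ _
    · have h1 := abs_le.1 (hq1 q hq)
      have h2 := abs_lt.1 hp1
      refine ocL_translate h p q.1 q.2 ⟨by linarith [hp0.1], by linarith [hp0.2]⟩ hw00 ?_ ?_
      · exact fun i => hL _ ⟨by linarith [hp0.1], by linarith [hp0.2]⟩ i _
      · refine hw0 _ ⟨by linarith [hp0.1], by linarith [hp0.2]⟩ _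
          ⟨by linarith [hp0.1], by linarith [hp0.2]⟩ _ _ ?_ ?_
        · simpa using hp1.le
        · simpa using hp2.le
  have hval : ∀ q : K, (∫ p, F p ∂μ) q = ocV ρ (ocC θ) q.1.1 q.1.2 := by
    intro q
    have e1 := (ContinuousMap.evalCLM ℝ q).integral_comp_comm hint
    have e2 : (∫ p, F p ∂μ) q = ∫ p, F p q ∂μ := e1.symm
    rw [e2, hμ, integral_withDensity_eq_integral_toReal_smul hgm (by simp [hg])]
    unfold ocV
    congr 1
    ext p
    rw [hg, hFe]
    simp only [ENNReal.toReal_ofReal (ρ.nonneg_normed p), smul_eq_mul]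
  obtain ⟨w, ⟨W, hw1, hw2⟩, hw3⟩ := Metric.mem_closure_iff.1 hmem ε hε
  refine ⟨W, ?_, fun q hq => ?_⟩
  · rw [continuousOn_iff_continuous_domRestrict]
    have : K.domRestrict (fun p : ℝ × (Fin d → ℝ) => W p.1 p.2) = w := by ext q; exact (hw1 q).symm
    rw [this]; exact w.continuous
  · obtain ⟨a1, a2, a3⟩ := hw2 q hq
    refine ⟨a1, a2, a3, ?_⟩
    have := (ContinuousMap.dist_apply_le_dist (f := ∫ p, F p ∂μ) (g := w) ⟨q, hq⟩).trans hw3.le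
    rw [hval, hw1, dist_comm, Real.dist_eq] at this
    exact this

lemma oc_approx {d : ℕ} {u : ℝ → (Fin d → ℝ) → Fin d → ℝ} {κ A H b δ : ℝ} {θin θ}
    (hκ : 0 < κ) (hA : 0 ≤ A) (hH0 : 0 ≤ H) (hδ : 0 < δ)
    (hu : Continuous fun p : ℝ × (Fin d → ℝ) => u p.1 p.2)
    (hup : ∀ t i, SpacePeriodic fun x => u t x i)
    (huA : ∀ t ∈ Set.Icc (0:ℝ) 1, ∀ x, ‖u t x‖ ≤ A)
    (h : IsAdvDiffSol u κ θin θ)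
    (hH : ∀ t ∈ Set.Icc (0:ℝ) 1, (∀ x, |θ t x| ≤ H) ∧
            (∀ x y, |θ t x - θ t y| ≤ H * ‖x - y‖ ^ b)) :
    (∃ L, 0 ≤ L ∧ ∀ t ∈ Set.Icc δ 1, ∀ i x, |pd (θ t) i x| ≤ L) ∧
    ∀ ε > 0, ∃ v : ℝ → (Fin d → ℝ) → ℝ,
      ContDiff ℝ ∞ (fun p : ℝ × (Fin d → ℝ) => v p.1 p.2) ∧
      (∀ t, SpacePeriodic (v t)) ∧ (∀ t x, |v t x| ≤ H) ∧
      (∀ t x y, |v t x - v t y| ≤ H * ‖x - y‖ ^ b) ∧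
      (∀ t ∈ Set.Icc (2 * δ) (1 - δ), ∀ x, |ocL u κ v t x| ≤ ε) ∧
      (∀ t ∈ Set.Icc (0:ℝ) 1, ∀ x, |v t x - θ t x| ≤ ε) := by
  obtain ⟨L, r0, hL0, hr0, hLip⟩ := oc_lip hκ hA hδ hH0 huA h fun t ht => (hH t ht).1
  have hL : ∀ t ∈ Set.Icc δ 1, ∀ i x, |pd (θ t) i x| ≤ L := by
    intro t ht i x
    have hd : Differentiable ℝ (θ t) := (h.spaceC2 t ⟨hδ.trans_le ht.1, ht.2⟩).differentiable two_ne_zero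
    have h2 := oc_pd_line (f := θ t) i x 0 (hd _)
    simp only [zero_smul, add_zero] at h2
    refine oc_abs_deriv h2 ?_
    filter_upwards [Metric.ball_mem_nhds (0:ℝ) hr0] with s hs
    have hs' : |s| < r0 := by simpa using hs
    simp only [zero_smul, add_zero]
    have e : ∀ j, |(x + s • Pi.single i 1 : Fin d → ℝ) j - x j| = if j = i then |s| else 0 := by
      intro j
      by_cases hj : j = i
      · subst hj; simp
      · simp [hj]
    have := hLip t ht (x + s • Pi.single i 1) x (fun j => by
      rw [e]; split_ifs
      · exact hs'.le
      · exact hr0.le)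
    simp only [e, Finset.sum_ite_eq', Finset.mem_univ, if_true] at this
    exact (le_abs_self _).trans this
  refine ⟨⟨L, hL0, hL⟩, fun ε hε => ?_⟩
  set w0 := ε / (d * L + 1) with hw0
  have hw0p : 0 < w0 := by positivity
  have hw0L : d * (w0 * L) ≤ ε := by
    have : w0 * (d * L + 1) = ε := by rw [hw0]; field_simp
    nlinarith
  obtain ⟨η1, hη1, hu1⟩ := oc_unif (f := u) hu.continuousOn (fun t x k => by
    ext i; exact hup t i x k) hw0p
  obtain ⟨η2, hη2, hu2⟩ := oc_unif (f := θ) h.cont (fun t x k => h.periodic t x k) hε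
  set η := min (min η1 η2) (δ / 4) with hη
  have hηp : 0 < η := by positivity
  let ρ : ContDiffBump (0 : ℝ × (Fin d → ℝ)) := ⟨η / 2, η, by positivity, by linarith⟩
  have hρ : ρ.rOut = η := rfl
  have hη1' : η ≤ η1 := (min_le_left _ _).trans (min_le_left _ _)
  have hη2' : η ≤ η2 := (min_le_left _ _).trans (min_le_right _ _)
  have hΘ := ocC_cont h.cont
  refine ⟨ocV ρ (ocC θ), ocV_smooth hΘ, fun t x k => ?_, fun t x => ?_, fun t x y => ?_,
    fun t ht x => ?_, fun t ht x => ?_⟩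
  · unfold ocV
    congr 1
    ext p
    congr 1
    unfold ocC
    simp only [Prod.fst_sub, Prod.snd_sub]
    rw [add_sub_right_comm]
    exact h.periodic _ _ _
  · exact ocV_bound' (q1 := (t, x)) fun p => (hH _ (oc_clamp _)).1 _
  · refine ocV_bound hΘ (q1 := (t, x)) (q2 := (t, y)) fun p => ?_
    have := (hH _ (oc_clamp (t - p.1))).2 (x - p.2) (y - p.2)
    rw [sub_sub_sub_cancel_right] at this
    exact this
  · rw [abs_le]
    have hu1' : ∀ t ∈ Set.Icc (0:ℝ) 1, ∀ s ∈ Set.Icc (0:ℝ) 1, ∀ x y, |t - s| ≤ ρ.rOut →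
      ‖x - y‖ ≤ ρ.rOut → dist (u t x) (u s y) ≤ w0 := fun t ht s hs x y h1 h2 =>
      hu1 t ht s hs x y (h1.trans hη1') (h2.trans hη1')
    constructor
    · have := oc_upper hκ.le hδ hw0p.le hu (oc_sol_neg h) (L := L) (fun t ht i x => by
        rw [oc_pd_neg, abs_neg]; exact hL t ht i x) ρ (min_le_right _ _) hu1' (t, x) ht
      have e : ocV ρ (ocC fun t x => - θ t x) = fun t x => - ocV ρ (ocC θ) t x := by
        ext t x; exact ocV_neg t x
      rw [e, ocL_neg] at this
      simp only at this
      linarith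
    · exact (oc_upper hκ.le hδ hw0p.le hu h hL ρ (min_le_right _ _) hu1' (t, x) ht).trans hw0L
  · have := ρ.dist_normed_convolution_le (μ := volume) (x₀ := (t, x)) (ε := ε)
      hΘ.aestronglyMeasurable (fun q hq => by
        have hq' : dist q (t, x) < η := hq
        rw [ocC_eq θ ht]
        refine hu2 _ (oc_clamp q.1) t ht _ _ ?_ ?_
        · have h1 : |q.1 - t| ≤ η := ((le_max_left _ _ : dist q.1 t ≤ dist q (t, x))).trans hq'.le
          have h2 : max 0 (min 1 t) = t := by simp [min_eq_right ht.2, max_eq_right ht.1]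
          have h3 : |max 0 (min 1 q.1) - max 0 (min 1 t)| ≤ |q.1 - t| := by
            refine (abs_max_sub_max_le_max _ _ _ _).trans ?_
            rw [sub_self, abs_zero]
            refine max_le (abs_nonneg _) ((abs_min_sub_min_le_max _ _ _ _).trans ?_)
            simp
          rw [h2] at h3
          exact h3.trans (h1.trans hη2')
        · rw [← dist_eq_norm]
          exact ((le_max_right _ _ : dist q.2 x ≤ dist q (t, x))).trans (hq'.le.trans hη2'))
    rw [ocC_eq θ ht, Real.dist_eq] at this
    exact this



lemma oc_pds {d : ℕ} {f : (Fin d → ℝ) → ℝ} (hf : ContDiff ℝ ∞ f) (i : Fin d) :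
    ContDiff ℝ ∞ (pd f i) := oc_pd_contDiff hf (by simp) i

/-- closed unit ball -/
abbrev ocK (d : ℕ) : Set (Fin d → ℝ) := Metric.closedBall (0 : Fin d → ℝ) 1

lemma ocK_compact (d : ℕ) : IsCompact (ocK d) := isCompact_closedBall _ _

/-- mollifier data -/
structure OcBump {d : ℕ} (φ : (Fin d → ℝ) → ℝ) (c : ℝ) : Prop where
  smooth : ContDiff ℝ ∞ φ
  supp : tsupport φ ⊆ ocK d
  nonneg : ∀ z, 0 ≤ φ z
  int : ∫ z in ocK d, φ z = 1
  grad : ∀ i, ∫ z in ocK d, |pd φ i z| ≤ c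

lemma oc_bump_exists (d : ℕ) : ∃ φ : (Fin d → ℝ) → ℝ, ∃ c, 0 ≤ c ∧ OcBump φ c := by
  let f : ContDiffBump (0 : Fin d → ℝ) := ⟨1 / 2, 1, by norm_num, by norm_num⟩
  have h0 : ∀ i, 0 ≤ ∫ z in ocK d, |pd (f.normed volume) i z| :=
    fun i => integral_nonneg fun z => abs_nonneg _
  have hs : tsupport (f.normed volume) ⊆ ocK d := f.tsupport_normed_eq.subset
  refine ⟨f.normed volume, ∑ i, ∫ z in ocK d, |pd (f.normed volume) i z|,
    Finset.sum_nonneg fun i _ => h0 i, f.contDiff_normed, hs, f.nonneg_normed, ?_,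
    fun i => Finset.single_le_sum (fun i _ => h0 i) (Finset.mem_univ i)⟩
  rw [setIntegral_eq_integral_of_forall_compl_eq_zero, f.integral_normed]
  intro x hx
  exact image_eq_zero_of_notMem_tsupport fun h => hx (hs h)

lemma oc_ibp {d : ℕ} {φ F : (Fin d → ℝ) → ℝ} (hφ : ContDiff ℝ ∞ φ) (hs : tsupport φ ⊆ ocK d)
    (hF : ContDiff ℝ ∞ F) (i : Fin d) :
    ∫ z in ocK d, φ z * pd F i z = - ∫ z in ocK d, pd φ i z * F z := by
  have hc : HasCompactSupport φ := (ocK_compact d).of_isClosed_subset (isClosed_tsupport φ) hs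
  have hpc : HasCompactSupport (pd φ i) := hc.fderiv_apply (𝕜 := ℝ) _
  have z1 : ∀ x, x ∉ ocK d → φ x = 0 := fun x hx =>
    image_eq_zero_of_notMem_tsupport fun h => hx (hs h)
  have z2 : ∀ x, x ∉ ocK d → pd φ i x = 0 := fun x hx => by
    have : fderiv ℝ φ x = 0 := by
      by_contra hne
      exact hx (hs (support_fderiv_subset ℝ hne))
    unfold pd; rw [this]; rfl
  rw [setIntegral_eq_integral_of_forall_compl_eq_zero (fun x hx => by rw [z1 x hx, zero_mul]),
    setIntegral_eq_integral_of_forall_compl_eq_zero (fun x hx => by rw [z2 x hx, zero_mul])]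
  refine integral_mul_fderiv_eq_neg_fderiv_mul_of_integrable ?_ ?_ ?_
    (fun x _ => hφ.differentiable (by simp) x) (fun x _ => hF.differentiable (by simp) x)
  · exact ((oc_pds hφ i).continuous.mul hF.continuous).integrable_of_hasCompactSupport hpc.mul_right
  · exact (hφ.continuous.mul (oc_pds hF i).continuous).integrable_of_hasCompactSupport hc.mul_right
  · exact (hφ.continuous.mul hF.continuous).integrable_of_hasCompactSupport hc.mul_right

/-- derivative in `z` of `v (x - ε z)` -/
lemma oc_pd_scale {d : ℕ} {v : (Fin d → ℝ) → ℝ} (hv : ContDiff ℝ ∞ v) (x : Fin d → ℝ) (ε : ℝ)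
    (i : Fin d) (z : Fin d → ℝ) :
    pd (fun z => v (x - ε • z)) i z = - (ε * pd v i (x - ε • z)) := by
  have hd : Differentiable ℝ v := hv.differentiable (by simp)
  have h1 : HasFDerivAt (fun z : Fin d → ℝ => x - ε • z)
      (-(ε • ContinuousLinearMap.id ℝ (Fin d → ℝ))) z := by
    have := ((hasFDerivAt_id (𝕜 := ℝ) z).const_smul ε).const_sub x
    exact this
  have h2 := ((hd (x - ε • z)).hasFDerivAt.comp z h1).fderiv
  unfold pd
  simp only [Function.comp_def] at h2
  rw [h2]
  simp

lemma oc_flux_one {d : ℕ} {φ a v : (Fin d → ℝ) → ℝ} (hφ : ContDiff ℝ ∞ φ)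
    (hs : tsupport φ ⊆ ocK d) (ha : Continuous a) (hv : ContDiff ℝ ∞ v) {ε : ℝ} (hε : ε ≠ 0)
    (i : Fin d) :
    ∫ z in ocK d, φ z * ∫ x in box d, a x * ((v x - v (x - ε • z)) * pd v i (x - ε • z)) =
    - ∫ z in ocK d, pd φ i z * ∫ x in box d, a x * ((v x - v (x - ε • z)) ^ 2 / (2 * ε)) := by
  have hvc := hv.continuous
  have hpc := (oc_pds hv i).continuous
  have hφc := hφ.continuous
  have hφp := (oc_pds hφ i).continuous
  simp only [← integral_const_mul]
  rw [oc_swap (ocK_compact d) (oc_box_compact d) (by fun_prop),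
    oc_swap (ocK_compact d) (oc_box_compact d) (by fun_prop), ← integral_neg]
  congr 1
  ext x
  have hF : ContDiff ℝ ∞ (fun z => (v x - v (x - ε • z)) ^ 2 / (2 * ε)) := by fun_prop
  have hW : ContDiff ℝ ∞ (fun z => v (x - ε • z)) := by fun_prop
  have hpF : ∀ z, pd (fun z => (v x - v (x - ε • z)) ^ 2 / (2 * ε)) i z
      = (v x - v (x - ε • z)) * pd v i (x - ε • z) := by
    intro z
    have h1 := oc_pd_scale hv x ε i z
    have h2 := (((hW.differentiable (by simp) z).hasFDerivAt.const_sub (v x)).pow 2).mul_const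
      (2 * ε)⁻¹
    simp only [div_eq_mul_inv]
    unfold pd at h1 ⊢
    rw [h2.fderiv]
    simp only [smul_apply, neg_apply, smul_eq_mul, nsmul_eq_mul]
    rw [h1]
    field_simp
    simp
  have e := oc_ibp hφ hs hF i
  simp only [hpF] at e
  have l : ∀ (f g : (Fin d → ℝ) → ℝ), ∫ z in ocK d, f z * (a x * g z) = a x * ∫ z in ocK d, f z * g z := by
    intro f g; rw [← integral_const_mul]; congr 1; ext z; ring
  rw [l, l, e, mul_neg]

lemma oc_wint {d : ℕ} {f : (Fin d → ℝ) → ℝ} (hf : Continuous f) :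
    Integrable f (volume.restrict (box d)) := hf.continuousOn.integrableOn_compact (oc_box_compact d)

lemma oc_kint {d : ℕ} {f : (Fin d → ℝ) → ℝ} (hf : Continuous f) :
    Integrable f (volume.restrict (ocK d)) := hf.continuousOn.integrableOn_compact (ocK_compact d)

lemma oc_I1 {d : ℕ} {W : (Fin d → ℝ) → ℝ} (hW : ContDiff ℝ ∞ W) (hp : SpacePeriodic W) :
    ∫ x in box d, W x * ∑ i, pd (pd W i) i x = - ∫ x in box d, ∑ i, pd W i x ^ 2 := by
  have hc := hW.continuous
  have hpc := fun i => (oc_pds hW i).continuous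
  have hppc := fun i => (oc_pds (oc_pds hW i) i).continuous
  have key : ∀ i, ∫ x in box d, (W x * pd (pd W i) i x + pd W i x ^ 2) = 0 := by
    intro i
    rw [← oc_int_pd (f := fun x => W x * pd W i x) (fun x k => by
      simp only; rw [hp, oc_pd_periodic hp i]) ((hW.mul (oc_pds hW i)).of_le (by simp)) i]
    congr 1
    ext x
    rw [oc_pd_mul (hW.differentiable (by simp)) ((oc_pds hW i).differentiable (by simp))]
    ring
  rw [eq_neg_iff_add_eq_zero, ← integral_add (oc_wint (by fun_prop)) (oc_wint (by fun_prop))]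
  simp only [Finset.mul_sum, ← Finset.sum_add_distrib]
  rw [integral_finsetSum _ fun i _ => oc_wint (by fun_prop)]
  exact Finset.sum_eq_zero fun i _ => key i

lemma oc_I2 {d : ℕ} {U : (Fin d → ℝ) → Fin d → ℝ}
    (hdiv : ∀ ψ : (Fin d → ℝ) → ℝ, ContDiff ℝ ∞ ψ → SpacePeriodic ψ →
      (∫ x in box d, ∑ i, U x i * pd ψ i x) = 0)
    {W : (Fin d → ℝ) → ℝ} (hW : ContDiff ℝ ∞ W) (hp : SpacePeriodic W) :
    ∫ x in box d, W x * ∑ i, U x i * pd W i x = 0 := by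
  have h := hdiv (fun x => W x * W x) (hW.mul hW) (fun x k => by simp only; rw [hp])
  have e : ∀ x, ∑ i, U x i * pd (fun x => W x * W x) i x = 2 * (W x * ∑ i, U x i * pd W i x) := by
    intro x
    simp only [Finset.mul_sum]
    refine Finset.sum_congr rfl fun i _ => ?_
    rw [oc_pd_mul (hW.differentiable (by simp)) (hW.differentiable (by simp))]
    ring
  simp only [e] at h
  rw [integral_const_mul] at h
  linarith



lemma oc_fixed_y {d : ℕ} {κ H Er : ℝ} (hH0 : 0 ≤ H)
    {U : (Fin d → ℝ) → Fin d → ℝ} (hU : Continuous U)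
    (hUp : ∀ i, SpacePeriodic fun x => U x i)
    (hdiv : ∀ ψ : (Fin d → ℝ) → ℝ, ContDiff ℝ ∞ ψ → SpacePeriodic ψ →
      (∫ x in box d, ∑ i, U x i * pd ψ i x) = 0)
    {v g : (Fin d → ℝ) → ℝ} (hv : ContDiff ℝ ∞ v) (hvp : SpacePeriodic v) (hvH : ∀ x, |v x| ≤ H)
    (hg : Continuous g)
    (hge : ∀ x, |g x + ∑ i, U x i * pd v i x - κ * ∑ i, pd (pd v i) i x| ≤ Er) (y : Fin d → ℝ) :
    ∫ x in box d, (v x - v (x - y)) * (g x - g (x - y)) ≤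
      - κ * (∫ x in box d, ∑ i, (pd v i x - pd v i (x - y)) ^ 2)
      - (∑ i, ∫ x in box d, U x i * ((v x - v (x - y)) * pd v i (x - y)))
      - (∑ i, ∫ x in box d, U x i * ((v x - v (x + y)) * pd v i (x + y))) + 4 * H * Er := by
  have hc := hv.continuous
  have hpc := fun i => (oc_pds hv i).continuous
  have hppc := fun i => (oc_pds (oc_pds hv i) i).continuous
  have hUi : ∀ i, Continuous fun x => U x i := fun i => (continuous_apply i).comp hU
  have hvd : Differentiable ℝ v := hv.differentiable (by simp)
  have hpd := fun i => (oc_pds hv i).differentiable (by simp)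
  set W : (Fin d → ℝ) → ℝ := fun x => v x - v (x - y) with hWdef
  set W2 : (Fin d → ℝ) → ℝ := fun x => v x - v (x + y) with hW2def
  have hW : ContDiff ℝ ∞ W := by fun_prop
  have hW2 : ContDiff ℝ ∞ W2 := by fun_prop
  have hWc := hW.continuous
  have hW2c := hW2.continuous
  have hWp : SpacePeriodic W := fun x k => by
    simp only [hWdef]; rw [hvp, add_sub_right_comm, hvp]
  have hW2p : SpacePeriodic W2 := fun x k => by
    simp only [hW2def]; rw [hvp, add_right_comm, hvp]
  have hpW : ∀ i, pd W i = fun x => pd v i x - pd v i (x - y) := fun i => by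
    rw [hWdef, oc_pd_sub hvd (by fun_prop), oc_pd_shift' (f := v) y i]
  have hpW2 : ∀ i, pd W2 i = fun x => pd v i x - pd v i (x + y) := fun i => by
    rw [hW2def, oc_pd_sub hvd (by fun_prop), oc_pd_shift (f := v) y i]
  have hppW : ∀ i, pd (pd W i) i = fun x => pd (pd v i) i x - pd (pd v i) i (x - y) := fun i => by
    have := hpd i
    rw [hpW, oc_pd_sub (hpd i) (by fun_prop), oc_pd_shift' (f := pd v i) y i]
  have I1 := oc_I1 hW hWp
  have I2 := oc_I2 hdiv hW hWp
  have I3 := oc_I2 hdiv hW2 hW2p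
  simp only [hppW] at I1
  simp only [hpW] at I1 I2
  simp only [hpW2] at I3
  set T : (Fin d → ℝ) → ℝ := fun x => W x * ∑ i, U (x - y) i * pd v i (x - y) with hT
  have hTc : Continuous T := by fun_prop
  have hTp : SpacePeriodic T := fun x k => by
    simp only [hT]
    rw [hWp, add_sub_right_comm]
    congr 1
    refine Finset.sum_congr rfl fun i _ => ?_
    rw [oc_pd_periodic hvp i]
    congr 1
    exact hUp i (x - y) k
  have hTint : ∫ x in box d, T x = - ∑ i, ∫ x in box d, U x i * (W2 x * pd v i (x + y)) := by
    rw [← oc_shift hTp y, ← integral_finsetSum _ fun i _ => oc_wint (by fun_prop), ← integral_neg]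
    have : ∀ x, T (x + y) = -(∑ i, U x i * (W2 x * pd v i (x + y)))
        - W2 x * ∑ i, U x i * (pd v i x - pd v i (x + y)) := by
      intro x
      simp only [hT, hWdef, hW2def, add_sub_cancel_right, mul_sub, Finset.sum_sub_distrib]
      have : ∑ i, U x i * ((v x - v (x + y)) * pd v i (x + y))
        = (v x - v (x + y)) * ∑ i, U x i * pd v i (x + y) := by
        rw [Finset.mul_sum]; exact Finset.sum_congr rfl fun i _ => by ring
      simp only [mul_comm (v x) , mul_comm (v (x+y)), sub_mul] at this ⊢
      rw [this]
      ring
    simp only [this]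
    rw [integral_sub (oc_wint (by fun_prop)) (oc_wint (by fun_prop)), I3, sub_zero]
  have hpt : ∀ x, W x * (g x - g (x - y)) ≤
      κ * (W x * ∑ i, (pd (pd v i) i x - pd (pd v i) i (x - y)))
      - W x * ∑ i, U x i * (pd v i x - pd v i (x - y))
      - ∑ i, U x i * (W x * pd v i (x - y)) + T x + 4 * H * Er := by
    intro x
    have hs : ∑ i, U x i * (W x * pd v i (x - y)) = W x * ∑ i, U x i * pd v i (x - y) := by
      rw [Finset.mul_sum]; exact Finset.sum_congr rfl fun i _ => by ring
    rw [hs]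
    simp only [hT, mul_sub, Finset.sum_sub_distrib]
    have e1 := abs_le.1 (hge x)
    have e2 := abs_le.1 (hge (x - y))
    have hWb : |W x| ≤ 2 * H := by
      refine (abs_sub _ _).trans ?_
      linarith [hvH x, hvH (x - y)]
    have hd : |(g x + ∑ i, U x i * pd v i x - κ * ∑ i, pd (pd v i) i x)
      - (g (x - y) + ∑ i, U (x - y) i * pd v i (x - y) - κ * ∑ i, pd (pd v i) i (x - y))| ≤ 2 * Er := by
      rw [abs_le]; constructor <;> linarith
    have hm := (le_abs_self _).trans ((abs_mul _ _).trans_le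
      (mul_le_mul hWb hd (abs_nonneg _) (by positivity)))
    nlinarith
  have hmono := integral_mono (μ := volume.restrict (box d)) (oc_wint (by fun_prop))
    (oc_wint (by fun_prop)) hpt
  refine hmono.trans (le_of_eq ?_)
  have hs : ∫ x in box d, ∑ i, U x i * (W x * pd v i (x - y))
      = ∑ i, ∫ x in box d, U x i * (W x * pd v i (x - y)) :=
    integral_finsetSum _ fun i _ => oc_wint (by fun_prop)
  have hcst : ∫ _ in box d, (4 * H * Er) = 4 * H * Er := by simp
  rw [integral_add (oc_wint (by fun_prop)) (oc_wint (by fun_prop)),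
    integral_add (oc_wint (by fun_prop)) (oc_wint hTc),
    integral_sub (oc_wint (by fun_prop)) (oc_wint (by fun_prop)),
    integral_sub (oc_wint (by fun_prop)) (oc_wint (by fun_prop)), integral_const_mul, I1, I2, hTint,
    hs, hcst]
  simp only [hWdef, hW2def]
  ring

lemma oc_visc_term {d : ℕ} {φ : (Fin d → ℝ) → ℝ} {c H b ε : ℝ} (hφ : OcBump φ c)
    (hc0 : 0 ≤ c) (hH0 : 0 ≤ H) (hb : 0 ≤ b) (hε : 0 < ε) {v : (Fin d → ℝ) → ℝ} (hv : ContDiff ℝ ∞ v)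
    (hvb : ∀ x y, |v x - v y| ≤ H * ‖x - y‖ ^ b) :
    (1 / 2) * (∫ x in box d, gradSq v x) - 2 * d * (ε⁻¹ * (c * (H * ε ^ b))) ^ 2 ≤
    ∫ z in ocK d, φ z * ∫ x in box d, ∑ i, (pd v i x - pd v i (x - ε • z)) ^ 2 := by
  have hc := hv.continuous
  have hpc := fun i => (oc_pds hv i).continuous
  have hφc := hφ.smooth.continuous
  have hφp := fun i => (oc_pds hφ.smooth i).continuous
  set M := ε⁻¹ * (c * (H * ε ^ b)) with hM
  simp only [← integral_const_mul]
  rw [oc_swap (ocK_compact d) (oc_box_compact d) (by fun_prop)]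
  have hG : ∀ x i, |∫ z in ocK d, φ z * pd v i (x - ε • z)| ≤ M := by
    intro x i
    have hF : ContDiff ℝ ∞ (fun z => v (x - ε • z)) := by fun_prop
    have hF2 : ContDiff ℝ ∞ (fun z => v (x - ε • z) - v x) := by fun_prop
    have e := oc_ibp hφ.smooth hφ.supp hF2 i
    have hp2 : ∀ z, pd (fun z => v (x - ε • z) - v x) i z = - (ε * pd v i (x - ε • z)) := by
      intro z
      rw [← oc_pd_scale hv x ε i z]
      unfold pd
      rw [fderiv_sub_const]
    simp only [hp2] at e
    have e2 : ∫ z in ocK d, φ z * pd v i (x - ε • z) =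
        ε⁻¹ * ∫ z in ocK d, pd φ i z * (v (x - ε • z) - v x) := by
      have : ∫ z in ocK d, φ z * -(ε * pd v i (x - ε • z)) =
        - ε * ∫ z in ocK d, φ z * pd v i (x - ε • z) := by
        rw [← integral_const_mul]; congr 1; ext z; ring
      rw [this] at e
      field_simp
      linarith
    rw [e2, abs_mul, abs_of_pos (inv_pos.2 hε), hM]
    refine mul_le_mul_of_nonneg_left ?_ (inv_pos.2 hε).le
    have hb1 : ∀ z ∈ ocK d, ‖pd φ i z * (v (x - ε • z) - v x)‖ ≤ |pd φ i z| * (H * ε ^ b) := by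
      intro z hz
      rw [norm_mul, Real.norm_eq_abs, Real.norm_eq_abs]
      refine mul_le_mul_of_nonneg_left ((hvb _ _).trans ?_) (abs_nonneg _)
      refine mul_le_mul_of_nonneg_left (Real.rpow_le_rpow (norm_nonneg _) ?_ hb) hH0
      rw [sub_sub_cancel_left, norm_neg, norm_smul, Real.norm_eq_abs, abs_of_pos hε]
      have : ‖z‖ ≤ 1 := by simpa using hz
      nlinarith
    have hi : Integrable (fun z => |pd φ i z| * (H * ε ^ b)) (volume.restrict (ocK d)) :=
      oc_kint (by have := hφp i; fun_prop)
    have := norm_integral_le_of_norm_le hi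
      ((ae_restrict_iff' (ocK_compact d).measurableSet).2 (Eventually.of_forall hb1))
    rw [integral_mul_const, Real.norm_eq_abs] at this
    exact this.trans (mul_le_mul_of_nonneg_right (hφ.grad i) (by positivity))
  have hgs : Continuous (gradSq v) := by unfold gradSq; fun_prop
  have hpt : ∀ x, (1 / 2) * gradSq v x - 2 * d * M ^ 2 ≤
      ∫ z in ocK d, φ z * ∑ i, (pd v i x - pd v i (x - ε • z)) ^ 2 := by
    intro x
    simp only [Finset.mul_sum]
    rw [integral_finsetSum _ fun i _ => oc_kint (by fun_prop)]
    have h1 : ∀ i, (1 / 2) * pd v i x ^ 2 - 2 * M ^ 2 ≤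
        ∫ z in ocK d, φ z * (pd v i x - pd v i (x - ε • z)) ^ 2 := by
      intro i
      have h2 : ∫ z in ocK d, (φ z * pd v i x ^ 2 - 2 * pd v i x * (φ z * pd v i (x - ε • z))) ≤
        ∫ z in ocK d, φ z * (pd v i x - pd v i (x - ε • z)) ^ 2 := by
        refine integral_mono (oc_kint (by fun_prop)) (oc_kint (by fun_prop)) fun z => ?_
        have := mul_nonneg (hφ.nonneg z) (sq_nonneg (pd v i (x - ε • z)))
        simp only
        nlinarith
      rw [integral_sub (oc_kint (by fun_prop)) (oc_kint (by fun_prop)), integral_mul_const,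
        integral_const_mul, hφ.int, one_mul] at h2
      refine le_trans ?_ h2
      set G := ∫ z in ocK d, φ z * pd v i (x - ε • z) with hGd
      have hG' : G ^ 2 ≤ M ^ 2 := sq_le_sq' (abs_le.1 (hG x i)).1 (abs_le.1 (hG x i)).2
      nlinarith [sq_nonneg (pd v i x - 2 * G)]
    refine le_trans (le_of_eq ?_) (Finset.sum_le_sum fun i _ => h1 i)
    rw [Finset.sum_sub_distrib, ← Finset.mul_sum]
    simp [gradSq]
    ring
  have hcont : Continuous fun x => ∫ z in ocK d, φ z * ∑ i, (pd v i x - pd v i (x - ε • z)) ^ 2 :=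
    continuous_parametric_integral_of_continuous (by
      simp only [Function.uncurry_def]; fun_prop) (ocK_compact d)
  have := integral_mono (μ := volume.restrict (box d)) (oc_wint (by fun_prop)) (oc_wint hcont) hpt
  rw [integral_sub (oc_wint (by fun_prop)) (oc_wint (by fun_prop))] at this
  simpa using this



lemma oc_flux_bd {d : ℕ} {φ : (Fin d → ℝ) → ℝ} {c A H a b ε : ℝ} (hφ : OcBump φ c)
    (hA : 0 ≤ A) (hH0 : 0 ≤ H) (ha : 0 ≤ a) (hb : 0 ≤ b) (hε : 0 < ε)
    {U : (Fin d → ℝ) → Fin d → ℝ} (hU : Continuous U)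
    (hUp : ∀ i, SpacePeriodic fun x => U x i) (hUA : ∀ x y, ‖U x - U y‖ ≤ A * ‖x - y‖ ^ a)
    {v : (Fin d → ℝ) → ℝ} (hv : ContDiff ℝ ∞ v) (hvp : SpacePeriodic v)
    (hvb : ∀ x y, |v x - v y| ≤ H * ‖x - y‖ ^ b) (i : Fin d) :
    - (∫ z in ocK d, φ z * ∫ x in box d, U x i * ((v x - v (x - ε • z)) * pd v i (x - ε • z)))
    - (∫ z in ocK d, φ z * ∫ x in box d, U x i * ((v x - v (x + ε • z)) * pd v i (x + ε • z)))
    ≤ c * (A * ε ^ a * (H * ε ^ b) ^ 2 / (2 * ε)) := by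
  have hc := hv.continuous
  have hUi : ∀ i, Continuous fun x => U x i := fun i => (continuous_apply i).comp hU
  have hφp := (oc_pds hφ.smooth i).continuous
  have e1 := oc_flux_one hφ.smooth hφ.supp (hUi i) hv hε.ne' i
  have e2 := oc_flux_one hφ.smooth hφ.supp (hUi i) hv (neg_ne_zero.2 hε.ne') i
  simp only [neg_smul, sub_neg_eq_add] at e2
  have sh : ∀ z : Fin d → ℝ, ∫ x in box d, U x i * ((v x - v (x + ε • z)) ^ 2 / (2 * -ε)) =
      - ∫ x in box d, U (x - ε • z) i * ((v x - v (x - ε • z)) ^ 2 / (2 * ε)) := by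
    intro z
    have hp : SpacePeriodic fun x => U x i * ((v x - v (x + ε • z)) ^ 2 / (2 * -ε)) := by
      intro x k
      have := hUp i x k
      simp only at this ⊢
      rw [this, hvp, add_right_comm, hvp]
    rw [← oc_shift hp (-(ε • z)), ← integral_neg]
    congr 1; ext x
    simp only [← sub_eq_add_neg, sub_add_cancel]
    field_simp
    ring
  simp only [sh] at e2
  rw [e1, e2, neg_neg, sub_neg_eq_add]
  set B := A * ε ^ a * (H * ε ^ b) ^ 2 / (2 * ε) with hB
  have hB0 : 0 ≤ B := by positivity
  have c1 : Continuous fun z => ∫ x in box d, U x i * ((v x - v (x - ε • z)) ^ 2 / (2 * ε)) :=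
    continuous_parametric_integral_of_continuous (by
      simp only [Function.uncurry_def]; fun_prop) (oc_box_compact d)
  have c2 : Continuous fun z => ∫ x in box d, U (x - ε • z) i * ((v x - v (x - ε • z)) ^ 2 / (2 * ε)) :=
    continuous_parametric_integral_of_continuous (by
      simp only [Function.uncurry_def]; have := hUi i; fun_prop) (oc_box_compact d)
  rw [← integral_add (oc_kint (by fun_prop)) (oc_kint (by fun_prop))] 
  refine (?_ : _ ≤ ∫ z in ocK d, |pd φ i z| * B).trans ?_
  swap
  · rw [integral_mul_const]
    exact mul_le_mul_of_nonneg_right (hφ.grad i) hB0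
  refine setIntegral_mono_on (oc_kint (by fun_prop)) (oc_kint (by fun_prop))
    (ocK_compact d).measurableSet fun z hz => ?_
  have hz1 : ‖ε • z‖ ≤ ε := by
    rw [norm_smul, Real.norm_eq_abs, abs_of_pos hε]
    have : ‖z‖ ≤ 1 := by simpa using hz
    nlinarith
  have hI : |(∫ x in box d, U x i * ((v x - v (x - ε • z)) ^ 2 / (2 * ε)))
      - ∫ x in box d, U (x - ε • z) i * ((v x - v (x - ε • z)) ^ 2 / (2 * ε))| ≤ B := by
    have hUi' := hUi i
    rw [← integral_sub (oc_wint (by fun_prop)) (oc_wint (by fun_prop))]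
    have := norm_integral_le_of_norm_le_const (μ := volume.restrict (box d)) (C := B)
      (f := fun x => U x i * ((v x - v (x - ε • z)) ^ 2 / (2 * ε))
        - U (x - ε • z) i * ((v x - v (x - ε • z)) ^ 2 / (2 * ε)))
      (Eventually.of_forall fun x => ?_)
    · simpa using this
    · rw [← sub_mul, norm_mul, hB, mul_div_assoc]
      have h1 : ‖U x i - U (x - ε • z) i‖ ≤ A * ε ^ a := by
        refine (norm_le_pi_norm (U x - U (x - ε • z)) i).trans ((hUA _ _).trans ?_)
        rw [sub_sub_cancel]
        gcongr
      have h2 : |v x - v (x - ε • z)| ≤ H * ε ^ b := by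
        refine (hvb _ _).trans ?_
        rw [sub_sub_cancel]
        gcongr
      refine mul_le_mul h1 ?_ (norm_nonneg _) (by positivity)
      rw [Real.norm_of_nonneg (by positivity), ← sq_abs]
      gcongr
  rw [mul_neg, ← sub_eq_add_neg, ← mul_sub]
  exact (le_abs_self _).trans ((abs_mul _ _).trans_le (mul_le_mul_of_nonneg_left hI (abs_nonneg _)))

lemma oc_fixed {d : ℕ} {φ : (Fin d → ℝ) → ℝ} {c A H a b ε κ Er : ℝ} (hφ : OcBump φ c) (hc0 : 0 ≤ c)
    (hA : 0 ≤ A) (hH0 : 0 ≤ H) (ha : 0 ≤ a) (hb : 0 ≤ b) (hε : 0 < ε) (hκ : 0 ≤ κ)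
    {U : (Fin d → ℝ) → Fin d → ℝ} (hU : Continuous U)
    (hUp : ∀ i, SpacePeriodic fun x => U x i) (hUA : ∀ x y, ‖U x - U y‖ ≤ A * ‖x - y‖ ^ a)
    (hdiv : ∀ ψ : (Fin d → ℝ) → ℝ, ContDiff ℝ ∞ ψ → SpacePeriodic ψ →
      (∫ x in box d, ∑ i, U x i * pd ψ i x) = 0)
    {v g : (Fin d → ℝ) → ℝ} (hv : ContDiff ℝ ∞ v) (hvp : SpacePeriodic v) (hvH : ∀ x, |v x| ≤ H)
    (hvb : ∀ x y, |v x - v y| ≤ H * ‖x - y‖ ^ b)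
    (hg : Continuous g)
    (hge : ∀ x, |g x + ∑ i, U x i * pd v i x - κ * ∑ i, pd (pd v i) i x| ≤ Er) :
    ∫ z in ocK d, φ z * ∫ x in box d, (v x - v (x - ε • z)) * (g x - g (x - ε • z)) ≤
      - (κ / 2) * (∫ x in box d, gradSq v x) + κ * (2 * d * (ε⁻¹ * (c * (H * ε ^ b))) ^ 2)
      + d * (c * (A * ε ^ a * (H * ε ^ b) ^ 2 / (2 * ε))) + 4 * H * Er := by
  have hc := hv.continuous
  have hUi : ∀ i, Continuous fun x => U x i := fun i => (continuous_apply i).comp hU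
  have hφc := hφ.smooth.continuous
  have hpc := fun i => (oc_pds hv i).continuous
  have c0 : Continuous fun z => ∫ x in box d, (v x - v (x - ε • z)) * (g x - g (x - ε • z)) :=
    continuous_parametric_integral_of_continuous (by
      simp only [Function.uncurry_def]; fun_prop) (oc_box_compact d)
  have c1 : Continuous fun z => ∫ x in box d, ∑ i, (pd v i x - pd v i (x - ε • z)) ^ 2 :=
    continuous_parametric_integral_of_continuous (by
      simp only [Function.uncurry_def]; fun_prop) (oc_box_compact d)
  have c2 : ∀ i, Continuous fun z => ∫ x in box d, U x i * ((v x - v (x - ε • z)) * pd v i (x - ε • z)) :=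
    fun i => continuous_parametric_integral_of_continuous (by
      simp only [Function.uncurry_def]; fun_prop) (oc_box_compact d)
  have c3 : ∀ i, Continuous fun z => ∫ x in box d, U x i * ((v x - v (x + ε • z)) * pd v i (x + ε • z)) :=
    fun i => continuous_parametric_integral_of_continuous (by
      simp only [Function.uncurry_def]; fun_prop) (oc_box_compact d)
  have F := fun i => oc_flux_bd hφ hA hH0 ha hb hε hU hUp hUA hv hvp hvb i
  have V := oc_visc_term hφ hc0 hH0 hb hε hv hvb
  have Y := fun z => oc_fixed_y hH0 hU hUp hdiv hv hvp hvH hg hge (ε • z)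
  set G0 := fun z => ∫ x in box d, (v x - v (x - ε • z)) * (g x - g (x - ε • z)) with hG0
  set G1 := fun z => ∫ x in box d, ∑ i, (pd v i x - pd v i (x - ε • z)) ^ 2 with hG1
  set G2 := fun i z => ∫ x in box d, U x i * ((v x - v (x - ε • z)) * pd v i (x - ε • z)) with hG2
  set G3 := fun i z => ∫ x in box d, U x i * ((v x - v (x + ε • z)) * pd v i (x + ε • z)) with hG3
  have Y' : ∀ z, φ z * G0 z ≤ - κ * (φ z * G1 z) - (∑ i, φ z * G2 i z) - (∑ i, φ z * G3 i z)
      + φ z * (4 * H * Er) := by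
    intro z
    have := mul_le_mul_of_nonneg_left (Y z) (hφ.nonneg z)
    rw [← Finset.mul_sum, ← Finset.mul_sum]
    refine this.trans (le_of_eq ?_)
    ring
  have M := integral_mono (μ := volume.restrict (ocK d)) (oc_kint (by fun_prop))
    (oc_kint (by fun_prop)) Y'
  rw [integral_add (oc_kint (by fun_prop)) (oc_kint (by fun_prop)),
    integral_sub (oc_kint (by fun_prop)) (oc_kint (by fun_prop)),
    integral_sub (oc_kint (by fun_prop)) (oc_kint (by fun_prop)), integral_const_mul,
    integral_finsetSum _ (fun i _ => oc_kint (by fun_prop)),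
    integral_finsetSum _ (fun i _ => oc_kint (by fun_prop)), integral_mul_const, hφ.int] at M
  have FS := Finset.sum_le_sum (s := Finset.univ) fun i _ => F i
  rw [Finset.sum_sub_distrib, Finset.sum_neg_distrib, Finset.sum_const, Finset.card_univ,
    Fintype.card_fin, nsmul_eq_mul] at FS
  have V' := mul_le_mul_of_nonneg_left V hκ
  refine M.trans ?_
  linarith



lemma oc_energy {d : ℕ} {φ : (Fin d → ℝ) → ℝ} {c A H a b ε κ Er t0 t1 : ℝ} (hφ : OcBump φ c) (hc0 : 0 ≤ c)
    (hA : 0 ≤ A) (hH0 : 0 ≤ H) (ha : 0 ≤ a) (hb : 0 ≤ b) (hε : 0 < ε) (hκ : 0 ≤ κ) (hEr : 0 ≤ Er)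
    (h0 : 0 ≤ t0) (h01 : t0 ≤ t1) (h1 : t1 ≤ 1)
    {u : ℝ → (Fin d → ℝ) → Fin d → ℝ} (hu : Continuous fun p : ℝ × (Fin d → ℝ) => u p.1 p.2)
    (hup : ∀ t i, SpacePeriodic fun x => u t x i)
    (huA : ∀ t ∈ Set.Icc (0:ℝ) 1, ∀ x y, ‖u t x - u t y‖ ≤ A * ‖x - y‖ ^ a)
    (hdiv : WeakDivFree u)
    {v : ℝ → (Fin d → ℝ) → ℝ} (hv : ContDiff ℝ ∞ (fun p : ℝ × (Fin d → ℝ) => v p.1 p.2))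
    (hvp : ∀ t, SpacePeriodic (v t)) (hvH : ∀ t x, |v t x| ≤ H)
    (hvb : ∀ t x y, |v t x - v t y| ≤ H * ‖x - y‖ ^ b)
    (hge : ∀ t ∈ Set.Icc t0 t1, ∀ x, |ocL u κ v t x| ≤ Er) :
    (κ / 2) * (∫ t in Set.Icc t0 t1, ∫ x in box d, gradSq (v t) x) ≤
      (1 / 2) * (H * ε ^ b) ^ 2 + κ * (2 * d * (ε⁻¹ * (c * (H * ε ^ b))) ^ 2)
      + d * (c * (A * ε ^ a * (H * ε ^ b) ^ 2 / (2 * ε))) + 4 * H * Er := by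
  obtain ⟨hgd, hgs⟩ := oc_joint_dt hv
  set g : ℝ → (Fin d → ℝ) → ℝ := fun t x => deriv (fun s => v s x) t with hg
  have hgc : Continuous fun p : ℝ × (Fin d → ℝ) => g p.1 p.2 := hgs.continuous
  have hvc : Continuous fun p : ℝ × (Fin d → ℝ) => v p.1 p.2 := hv.continuous
  have hφc := hφ.smooth.continuous
  have hvc' : Continuous (Function.uncurry v) := hvc
  have hgc' : Continuous (Function.uncurry g) := hgc
  have hpc : ∀ i, Continuous (Function.uncurry fun t x => pd (v t) i x) :=
    fun i => (oc_joint_pd hv i).continuous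
  have hK := ocK_compact d
  have hB := oc_box_compact d
  have hT : IsCompact (Set.Icc t0 t1) := isCompact_Icc
  set R := κ * (2 * d * (ε⁻¹ * (c * (H * ε ^ b))) ^ 2)
      + d * (c * (A * ε ^ a * (H * ε ^ b) ^ 2 / (2 * ε))) + 4 * H * Er with hR
  have hR0 : 0 ≤ R := by positivity
  have J1 : ∀ t ∈ Set.Icc t0 t1, ∫ z in ocK d, φ z * ∫ x in box d,
      (v t x - v t (x - ε • z)) * (g t x - g t (x - ε • z)) ≤
      - (κ / 2) * (∫ x in box d, gradSq (v t) x) + R := by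
    intro t ht
    have ht' : t ∈ Set.Icc (0:ℝ) 1 := ⟨h0.trans ht.1, ht.2.trans h1⟩
    have := oc_fixed hφ hc0 hA hH0 ha hb hε hκ (U := u t) (by fun_prop) (hup t) (huA t ht')
      (hdiv t ht') (oc_slice hv t) (hvp t) (hvH t) (hvb t) (g := g t) (by fun_prop) (Er := Er)
      (hge t ht)
    rw [hR]
    linarith
  have cI : Continuous fun q : ℝ × (Fin d → ℝ) => ∫ x in box d,
      (v q.1 x - v q.1 (x - ε • q.2)) * (g q.1 x - g q.1 (x - ε • q.2)) :=
    continuous_parametric_integral_of_continuous (by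
      simp only [Function.uncurry_def]; fun_prop) hB
  have cJ : Continuous fun t => ∫ z in ocK d, φ z * ∫ x in box d,
      (v t x - v t (x - ε • z)) * (g t x - g t (x - ε • z)) :=
    continuous_parametric_integral_of_continuous (by
      simp only [Function.uncurry_def]
      exact (hφc.comp continuous_snd).mul cI) hK
  have cG : Continuous fun t => ∫ x in box d, gradSq (v t) x :=
    continuous_parametric_integral_of_continuous (by
      simp only [Function.uncurry_def, gradSq]; 
      exact continuous_finsetSum _ fun i _ => (hpc i).pow 2) hB
  have ti : ∀ {f : ℝ → ℝ}, Continuous f → IntegrableOn f (Set.Icc t0 t1) :=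
    fun hf => hf.continuousOn.integrableOn_compact hT
  have M := setIntegral_mono_on (ti cJ) (ti (by fun_prop)) measurableSet_Icc J1
  rw [integral_add (ti (by fun_prop)) (ti (by fun_prop)), integral_const_mul] at M
  have hcst : ∫ _ in Set.Icc t0 t1, R ≤ R := by
    simp [h01]
    nlinarith
  have low : -((1 / 2) * (H * ε ^ b) ^ 2) ≤ ∫ t in Set.Icc t0 t1, ∫ z in ocK d, φ z * ∫ x in box d,
      (v t x - v t (x - ε • z)) * (g t x - g t (x - ε • z)) := by
    rw [oc_swap (F := fun t z => φ z * ∫ x in box d,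
      (v t x - v t (x - ε • z)) * (g t x - g t (x - ε • z))) hT hK ((hφc.comp continuous_snd).mul cI)]
    simp only [integral_const_mul]
    have key : ∀ z ∈ ocK d, -((1 / 2) * (H * ε ^ b) ^ 2) ≤ ∫ t in Set.Icc t0 t1, ∫ x in box d,
      (v t x - v t (x - ε • z)) * (g t x - g t (x - ε • z)) := by
      intro z hz
      have hz1 : ‖ε • z‖ ≤ ε := by
        rw [norm_smul, Real.norm_eq_abs, abs_of_pos hε]
        have : ‖z‖ ≤ 1 := by simpa using hz
        nlinarith
      rw [oc_swap hT hB (by fun_prop)]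
      have ev : ∀ x, ∫ t in Set.Icc t0 t1, (v t x - v t (x - ε • z)) * (g t x - g t (x - ε • z)) =
          (1 / 2) * (v t1 x - v t1 (x - ε • z)) ^ 2 - (1 / 2) * (v t0 x - v t0 (x - ε • z)) ^ 2 := by
        intro x
        rw [integral_Icc_eq_integral_Ioc, ← intervalIntegral.integral_of_le h01]
        refine intervalIntegral.integral_eq_sub_of_hasDerivAt
          (f := fun t => (1 / 2) * (v t x - v t (x - ε • z)) ^ 2) (fun t _ => ?_)
          (Continuous.intervalIntegrable (by fun_prop) _ _)
        have hd : HasDerivAt (fun t => (1 / 2) * (v t x - v t (x - ε • z)) ^ 2) _ t :=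
          (((hgd t x).fun_sub (hgd t (x - ε • z))).fun_pow 2).const_mul (1 / 2 : ℝ)
        refine hd.congr_deriv ?_
        show (1:ℝ) / 2 * ((2:ℕ) * (v t x - v t (x - ε • z)) ^ (2 - 1) * (g t x - g t (x - ε • z))) = _
        push_cast
        ring
      simp only [ev]
      have : ∫ _ in box d, -((1 / 2) * (H * ε ^ b) ^ 2) ≤ ∫ x in box d,
        ((1 / 2) * (v t1 x - v t1 (x - ε • z)) ^ 2 - (1 / 2) * (v t0 x - v t0 (x - ε • z)) ^ 2) := by
        refine integral_mono (oc_wint (by fun_prop)) (oc_wint (by fun_prop)) fun x => ?_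
        have h2 : |v t0 x - v t0 (x - ε • z)| ≤ H * ε ^ b := by
          refine (hvb _ _ _).trans ?_
          rw [sub_sub_cancel]
          gcongr
        have h3 := sq_le_sq' (abs_le.1 h2).1 (abs_le.1 h2).2
        simp only
        nlinarith [sq_nonneg (v t1 x - v t1 (x - ε • z))]
      simpa using this
    have cT : Continuous fun z => ∫ t in Set.Icc t0 t1, ∫ x in box d,
      (v t x - v t (x - ε • z)) * (g t x - g t (x - ε • z)) :=
      continuous_parametric_integral_of_continuous (by
        simp only [Function.uncurry_def]
        exact cI.comp continuous_swap) hT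
    have := setIntegral_mono_on (oc_kint (by fun_prop)) (oc_kint (by fun_prop)) hK.measurableSet
      fun z hz => mul_le_mul_of_nonneg_left (key z hz) (hφ.nonneg z)
    rw [integral_mul_const, hφ.int, one_mul] at this
    exact this
  have := low.trans M
  linarith



lemma oc_jensen {f : ℝ → ℝ} (hf : Continuous f) :
    (∫ s in Set.Icc (0:ℝ) 1, f s) ^ 2 ≤ ∫ s in Set.Icc (0:ℝ) 1, f s ^ 2 := by
  set m := ∫ s in Set.Icc (0:ℝ) 1, f s with hm
  have ti : ∀ {f : ℝ → ℝ}, Continuous f → IntegrableOn f (Set.Icc (0:ℝ) 1) :=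
    fun hf => hf.continuousOn.integrableOn_compact isCompact_Icc
  have h := setIntegral_mono_on (f := fun s => 2 * m * f s - m ^ 2) (g := fun s => f s ^ 2)
    (ti (by fun_prop)) (ti (by fun_prop)) measurableSet_Icc
    (fun s _ => by nlinarith [sq_nonneg (f s - m)])
  rw [integral_sub (ti (by fun_prop)) (ti (by fun_prop)), integral_const_mul, ← hm] at h
  simp at h
  nlinarith

lemma oc_dq_le {d : ℕ} {v : (Fin d → ℝ) → ℝ} (hv : ContDiff ℝ ∞ v) (hvp : SpacePeriodic v)
    {h : ℝ} (hh : 0 < h) (i : Fin d) :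
    ∫ x in box d, ((v (x + h • Pi.single i 1) - v x) / h) ^ 2 ≤ ∫ x in box d, pd v i x ^ 2 := by
  have hc := hv.continuous
  have hpc := (oc_pds hv i).continuous
  have ev : ∀ x, (v (x + h • Pi.single i 1) - v x) / h =
      ∫ s in Set.Icc (0:ℝ) 1, pd v i (x + (h * s) • Pi.single i 1) := by
    intro x
    rw [integral_Icc_eq_integral_Ioc, ← intervalIntegral.integral_of_le zero_le_one]
    have := intervalIntegral.integral_eq_sub_of_hasDerivAt (a := 0) (b := 1)
      (f := fun s : ℝ => v (x + (h * s) • Pi.single i 1) / h)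
      (f' := fun s => pd v i (x + (h * s) • Pi.single i 1)) (fun s _ => ?_)
      (Continuous.intervalIntegrable (by fun_prop) _ _)
    · rw [this]; simp; ring
    · have h1 := oc_pd_line i x (h * s) ((hv.differentiable (by simp)) _)
      have h2 : HasDerivAt (fun s => h * s) h s := by simpa using (hasDerivAt_id s).const_mul h
      have h3 := (h1.comp s h2).div_const h
      refine h3.congr_deriv ?_
      field_simp
  simp only [ev]
  have cS : Continuous fun x => ∫ s in Set.Icc (0:ℝ) 1, pd v i (x + (h * s) • Pi.single i 1) :=
    continuous_parametric_integral_of_continuous (by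
      simp only [Function.uncurry_def]; fun_prop) isCompact_Icc
  have cS2 : Continuous fun x => ∫ s in Set.Icc (0:ℝ) 1, pd v i (x + (h * s) • Pi.single i 1) ^ 2 :=
    continuous_parametric_integral_of_continuous (by
      simp only [Function.uncurry_def]; fun_prop) isCompact_Icc
  refine (integral_mono (μ := volume.restrict (box d)) (oc_wint (by fun_prop)) (oc_wint cS2)
    fun x => oc_jensen (f := fun s => pd v i (x + (h * s) • Pi.single i 1)) (by fun_prop)).trans ?_
  rw [oc_swap (oc_box_compact d) isCompact_Icc (by fun_prop)]
  have hp : SpacePeriodic fun x => pd v i x ^ 2 := fun x k => by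
    simp only; rw [oc_pd_periodic hvp i]
  have : ∀ s : ℝ, ∫ x in box d, pd v i (x + (h * s) • Pi.single i 1) ^ 2 =
    ∫ x in box d, pd v i x ^ 2 := fun s => oc_shift hp ((h * s) • Pi.single i 1)
  simp only [this]
  simp

/-- squared difference quotient -/
def ocD {d : ℕ} (h : ℝ) (f : (Fin d → ℝ) → ℝ) (x : Fin d → ℝ) : ℝ :=
  ∑ i, ((f (x + h • Pi.single i 1) - f x) / h) ^ 2

lemma ocD_le {d : ℕ} {v : (Fin d → ℝ) → ℝ} (hv : ContDiff ℝ ∞ v) (hvp : SpacePeriodic v)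
    {h : ℝ} (hh : 0 < h) :
    ∫ x in box d, ocD h v x ≤ ∫ x in box d, gradSq v x := by
  have hc := hv.continuous
  have hpc := fun i => (oc_pds hv i).continuous
  unfold ocD gradSq
  rw [integral_finsetSum _ fun i _ => oc_wint (by fun_prop),
    integral_finsetSum _ fun i _ => oc_wint (by fun_prop)]
  exact Finset.sum_le_sum fun i _ => oc_dq_le hv hvp hh i

lemma ocD_near {d : ℕ} {v f : (Fin d → ℝ) → ℝ} {H Er h : ℝ} (hh : 0 < h) 
    (hv : ∀ x, |v x| ≤ H) (hf : ∀ x, |f x| ≤ H) (hvf : ∀ x, |v x - f x| ≤ Er) (x : Fin d → ℝ) :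
    ocD h f x ≤ ocD h v x + d * (8 * H * Er / h ^ 2) := by
  unfold ocD
  have : (d : ℝ) * (8 * H * Er / h ^ 2) = ∑ _i : Fin d, 8 * H * Er / h ^ 2 := by simp
  rw [this, ← Finset.sum_add_distrib]
  refine Finset.sum_le_sum fun i _ => ?_
  rw [div_pow, div_pow, ← add_div]
  refine div_le_div_of_nonneg_right ?_ (by positivity)
  set y := x + h • Pi.single i 1
  have a1 := abs_le.1 (hv x)
  have a2 := abs_le.1 (hv y)
  have a3 := abs_le.1 (hf x)
  have a4 := abs_le.1 (hf y)
  have b1 := abs_le.1 (hvf x)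
  have b2 := abs_le.1 (hvf y)
  have h1 : |(f y - f x) + (v y - v x)| ≤ 4 * H := by rw [abs_le]; constructor <;> linarith
  have h2 : |(f y - f x) - (v y - v x)| ≤ 2 * Er := by rw [abs_le]; constructor <;> linarith
  have hE : 0 ≤ H := (abs_nonneg _).trans (hv x)
  have := (le_abs_self _).trans ((abs_mul _ _).trans_le
      (mul_le_mul h1 h2 (abs_nonneg _) (by positivity)))
  nlinarith

lemma ocD_bound {d : ℕ} {f : (Fin d → ℝ) → ℝ} {L h : ℝ} (hf : Differentiable ℝ f) (hL : 0 ≤ L)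
    (hfL : ∀ i x, |pd f i x| ≤ L) (hh : 0 < h) (x : Fin d → ℝ) : |ocD h f x| ≤ d * L ^ 2 := by
  unfold ocD
  rw [abs_of_nonneg (Finset.sum_nonneg fun i _ => sq_nonneg _)]
  have : (d : ℝ) * L ^ 2 = ∑ _i : Fin d, L ^ 2 := by simp
  rw [this]
  refine Finset.sum_le_sum fun i _ => ?_
  have := (convex_univ (𝕜 := ℝ) (E := ℝ)).norm_image_sub_le_of_norm_hasDerivWithin_le
    (f := fun s : ℝ => f (x + s • Pi.single i 1)) (x := 0) (y := h) (C := L)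
    (fun s _ => (oc_pd_line i x s (hf _)).hasDerivWithinAt) (fun s _ => hfL i _)
    (Set.mem_univ _) (Set.mem_univ _)
  simp only [zero_smul, add_zero, sub_zero, Real.norm_eq_abs, abs_of_pos hh] at this
  rw [← sq_abs, abs_div, abs_of_pos hh]
  have h2 : |f (x + h • Pi.single i 1) - f x| / h ≤ L := by rwa [div_le_iff₀ hh]
  gcongr

lemma ocD_tendsto {d : ℕ} {f : (Fin d → ℝ) → ℝ} (hf : Differentiable ℝ f) (x : Fin d → ℝ) :
    Tendsto (fun n : ℕ => ocD (1 / ((n : ℝ) + 1)) f x) atTop (𝓝 (gradSq f x)) := by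
  unfold ocD gradSq
  refine tendsto_finsetSum _ fun i _ => Tendsto.pow ?_ 2
  have h1 := oc_pd_line i x 0 (hf (x + (0:ℝ) • Pi.single i 1))
  rw [hasDerivAt_iff_tendsto_slope] at h1
  simp only [zero_smul, add_zero] at h1
  have h2 : Tendsto (fun n : ℕ => 1 / ((n : ℝ) + 1)) atTop (𝓝[≠] 0) :=
    tendsto_nhdsWithin_iff.2 ⟨tendsto_one_div_add_atTop_nhds_zero_nat,
      Eventually.of_forall fun n => by
        have : (0:ℝ) < 1 / ((n:ℝ) + 1) := by positivity
        exact this.ne'⟩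
  refine (h1.comp h2).congr fun n => ?_
  simp [slope_def_field]



lemma oc_bound_delta {d : ℕ} {φ : (Fin d → ℝ) → ℝ} {c A H a b ε κ δ : ℝ} (hφ : OcBump φ c) (hc0 : 0 ≤ c)
    (hA : 0 ≤ A) (hH0 : 0 ≤ H) (ha : 0 ≤ a) (hb : 0 ≤ b) (hε : 0 < ε) (hκ : 0 < κ)
    (hδ : 0 < δ) (hδ3 : 3 * δ ≤ 1)
    {u : ℝ → (Fin d → ℝ) → Fin d → ℝ} (hu : Continuous fun p : ℝ × (Fin d → ℝ) => u p.1 p.2)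
    (hup : ∀ t i, SpacePeriodic fun x => u t x i)
    (huA : ∀ t ∈ Set.Icc (0:ℝ) 1, (∀ x, ‖u t x‖ ≤ A) ∧ ∀ x y, ‖u t x - u t y‖ ≤ A * ‖x - y‖ ^ a)
    (hdiv : WeakDivFree u) {θin θ} (h : IsAdvDiffSol u κ θin θ)
    (hH : ∀ t ∈ Set.Icc (0:ℝ) 1, (∀ x, |θ t x| ≤ H) ∧
            (∀ x y, |θ t x - θ t y| ≤ H * ‖x - y‖ ^ b)) :
    (κ / 2) * (∫ t in Set.Icc (2 * δ) (1 - δ), ∫ x in box d, gradSq (θ t) x) ≤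
      (1 / 2) * (H * ε ^ b) ^ 2 + κ * (2 * d * (ε⁻¹ * (c * (H * ε ^ b))) ^ 2)
      + d * (c * (A * ε ^ a * (H * ε ^ b) ^ 2 / (2 * ε))) := by
  obtain ⟨⟨L, hL0, hL⟩, happ⟩ := oc_approx hκ hA hH0 hδ hu hup (fun t ht => (huA t ht).1) h hH
  set B0 := (1 / 2) * (H * ε ^ b) ^ 2 + κ * (2 * d * (ε⁻¹ * (c * (H * ε ^ b))) ^ 2)
      + d * (c * (A * ε ^ a * (H * ε ^ b) ^ 2 / (2 * ε))) with hB0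
  set I := Set.Icc (2 * δ) (1 - δ) with hI
  have hI1 : ∀ t ∈ I, t ∈ Set.Icc (0:ℝ) 1 := fun t ht => ⟨by linarith [ht.1], by linarith [ht.2]⟩
  have hI2 : ∀ t ∈ I, t ∈ Set.Icc δ 1 := fun t ht => ⟨by linarith [ht.1], by linarith [ht.2]⟩
  have hI3 : ∀ t ∈ I, t ∈ Set.Ioc (0:ℝ) 1 := fun t ht => ⟨by linarith [ht.1], by linarith [ht.2]⟩
  -- continuous extension in time
  set T : ℝ → (Fin d → ℝ) → ℝ := fun t x => θ (max 0 (min 1 t)) x with hT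
  have hTc : Continuous (Function.uncurry T) := by
    have := h.cont.comp_continuous (f := fun p : ℝ × (Fin d → ℝ) => (max 0 (min 1 p.1), p.2))
      (by fun_prop) (fun p => ⟨⟨le_max_left _ _, max_le zero_le_one (min_le_left _ _)⟩, trivial⟩)
    exact this
  have hTe : ∀ t ∈ I, T t = θ t := fun t ht => by
    have := hI1 t ht
    simp only [hT]
    rw [min_eq_right this.2, max_eq_right this.1]
  have hθc : ∀ t ∈ I, Continuous (θ t) := fun t ht => (h.spaceC2 t (hI3 t ht)).continuous
  have hθd : ∀ t ∈ I, Differentiable ℝ (θ t) := fun t ht =>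
    (h.spaceC2 t (hI3 t ht)).differentiable two_ne_zero
  have hDc : ∀ k : ℝ, Continuous fun t => ∫ x in box d, ocD k (T t) x := fun k =>
    continuous_parametric_integral_of_continuous (by
      simp only [Function.uncurry_def, ocD, div_eq_mul_inv]; fun_prop) (oc_box_compact d)
  have ti : ∀ {f : ℝ → ℝ}, Continuous f → IntegrableOn f I :=
    fun hf => hf.continuousOn.integrableOn_compact isCompact_Icc
  have hvolI : volume.real I ≤ 1 := by
    rw [hI, Real.volume_real_Icc_of_le (by linarith)]; linarith
  -- bound for difference quotients
  have hq : ∀ k : ℝ, 0 < k → (κ / 2) * (∫ t in I, ∫ x in box d, ocD k (T t) x) ≤ B0 := by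
    intro k hk
    refine le_of_forall_pos_le_add fun η hη => ?_
    set Q := 4 * H + (κ / 2) * (d * (8 * H / k ^ 2)) with hQ
    have hQ0 : 0 ≤ Q := by positivity
    set Er := η / (Q + 1) with hEr
    have hEr0 : 0 < Er := by positivity
    have hQE : Q * Er ≤ η := by
      rw [hEr, mul_div_assoc']
      rw [div_le_iff₀ (by positivity)]
      nlinarith
    obtain ⟨v, hv, hvp, hvH, hvb, hvL, hvθ⟩ := happ Er hEr0
    have E := oc_energy hφ hc0 hA hH0 ha hb hε hκ.le hEr0.le (by linarith : (0:ℝ) ≤ 2 * δ)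
      (by linarith : 2 * δ ≤ 1 - δ) (by linarith) hu hup (fun t ht => (huA t ht).2) hdiv hv hvp hvH hvb hvL
    have hpc : ∀ i, Continuous (Function.uncurry fun t x => pd (v t) i x) :=
      fun i => (oc_joint_pd hv i).continuous
    have cG : Continuous fun t => ∫ x in box d, gradSq (v t) x :=
      continuous_parametric_integral_of_continuous (by
        simp only [Function.uncurry_def, gradSq]
        exact continuous_finsetSum _ fun i _ => (hpc i).pow 2) (oc_box_compact d)
    have M : ∫ t in I, ∫ x in box d, ocD k (T t) x ≤
        ∫ t in I, ((∫ x in box d, gradSq (v t) x) + d * (8 * H * Er / k ^ 2)) := by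
      refine setIntegral_mono_on (ti (hDc k)) (ti (by fun_prop)) measurableSet_Icc fun t ht => ?_
      rw [hTe t ht]
      have hvt := (oc_slice hv t).continuous
      have hθt := hθc t ht
      have c1 : Continuous (ocD k (v t)) := by unfold ocD; simp only [div_eq_mul_inv]; fun_prop
      have c2 : Continuous (ocD k (θ t)) := by unfold ocD; simp only [div_eq_mul_inv]; fun_prop
      have := integral_mono (μ := volume.restrict (box d)) (oc_wint c2) (oc_wint (by fun_prop))
        fun x => ocD_near hk (hvH t) (hH t (hI1 t ht)).1 (hvθ t (hI1 t ht)) x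
      rw [integral_add (oc_wint c1) (oc_wint (by fun_prop))] at this
      have h2 := ocD_le (oc_slice hv t) (hvp t) hk
      have h3 : ∫ _ in box d, (d * (8 * H * Er / k ^ 2) : ℝ) = d * (8 * H * Er / k ^ 2) := by simp
      rw [h3] at this
      linarith
    rw [integral_add (ti cG) (ti (by fun_prop))] at M
    have h3 : ∫ _ in I, (d * (8 * H * Er / k ^ 2) : ℝ) ≤ d * (8 * H * Er / k ^ 2) := by
      rw [setIntegral_const, smul_eq_mul]
      exact mul_le_of_le_one_left (by positivity) hvolI
    have M' := mul_le_mul_of_nonneg_left (M.trans (add_le_add le_rfl h3)) (by positivity : 0 ≤ κ / 2)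
    have hQe : Q * Er = 4 * H * Er + (κ / 2) * (d * (8 * H * Er / k ^ 2)) := by rw [hQ]; ring
    linarith
  -- limit
  have lim : Tendsto (fun n : ℕ => ∫ t in I, ∫ x in box d, ocD (1 / ((n : ℝ) + 1)) (T t) x) atTop
      (𝓝 (∫ t in I, ∫ x in box d, gradSq (θ t) x)) := by
    have hn : ∀ n : ℕ, (0:ℝ) < 1 / ((n:ℝ) + 1) := fun n => by positivity
    refine tendsto_integral_of_dominated_convergence (fun _ => d * L ^ 2)
      (fun n => (hDc _).aestronglyMeasurable) (ti continuous_const)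
      (fun n => (ae_restrict_iff' measurableSet_Icc).2 (Eventually.of_forall fun t ht => ?_))
      ((ae_restrict_iff' measurableSet_Icc).2 (Eventually.of_forall fun t ht => ?_))
    · rw [hTe t ht]
      have := norm_integral_le_of_norm_le_const (μ := volume.restrict (box d)) (C := d * L ^ 2)
        (f := ocD (1 / ((n : ℝ) + 1)) (θ t)) (Eventually.of_forall fun x =>
          ocD_bound (hθd t ht) hL0 (hL t (hI2 t ht)) (hn n) x)
      simpa using this
    · simp only [hTe t ht]
      have hθt := hθc t ht
      refine tendsto_integral_of_dominated_convergence (fun _ => d * L ^ 2)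
        (fun n => Continuous.aestronglyMeasurable ?_) (oc_wint continuous_const)
        (fun n => Eventually.of_forall fun x => 
          ocD_bound (hθd t ht) hL0 (hL t (hI2 t ht)) (hn n) x)
        (Eventually.of_forall fun x => ocD_tendsto (hθd t ht) x)
      unfold ocD; simp only [div_eq_mul_inv]; fun_prop
  exact le_of_tendsto' (lim.const_mul _) fun n => hq _ (by positivity)

lemma oc_bound {d : ℕ} {θ : ℝ → (Fin d → ℝ) → ℝ} {κ B0 : ℝ} (hB : 0 ≤ B0)
    (h : ∀ δ : ℝ, 0 < δ → 3 * δ ≤ 1 → 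
      (κ / 2) * (∫ t in Set.Icc (2 * δ) (1 - δ), ∫ x in box d, gradSq (θ t) x) ≤ B0) :
    (κ / 2) * dissip θ ≤ B0 := by
  unfold dissip dissipUpTo
  by_cases hi : IntegrableOn (fun t => ∫ x in box d, gradSq (θ t) x) (Set.Icc (0:ℝ) 1)
  swap
  · rw [integral_undef hi, mul_zero]; exact hB
  have hU : (⋃ n : ℕ, Set.Icc (2 * (1 / ((n:ℝ) + 3))) (1 - 1 / ((n:ℝ) + 3))) = Set.Ioo (0:ℝ) 1 := by
    ext t
    simp only [Set.mem_iUnion, Set.mem_Icc, Set.mem_Ioo]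
    constructor
    · rintro ⟨n, h1, h2⟩
      have : (0:ℝ) < 1 / ((n:ℝ) + 3) := by positivity
      constructor <;> linarith
    · rintro ⟨h1, h2⟩
      obtain ⟨n, hn⟩ := exists_nat_one_div_lt (show 0 < min (t / 2) (1 - t) by
        exact lt_min (by linarith) (by linarith))
      have h3 : 1 / ((n:ℝ) + 3) ≤ 1 / ((n:ℝ) + 1) := by gcongr; norm_num
      have h4 := lt_min_iff.1 (h3.trans_lt hn)
      exact ⟨n, by linarith, by linarith⟩
  have lim := tendsto_setIntegral_of_monotone (μ := volume)
    (f := fun t => ∫ x in box d, gradSq (θ t) x)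
    (s := fun n : ℕ => Set.Icc (2 * (1 / ((n:ℝ) + 3))) (1 - 1 / ((n:ℝ) + 3)))
    (fun n => measurableSet_Icc) (fun n m hnm => by
      have : 1 / ((m:ℝ) + 3) ≤ 1 / ((n:ℝ) + 3) := by gcongr
      exact Set.Icc_subset_Icc (by linarith) (by linarith))
    (by rw [hU]; exact hi.mono_set Set.Ioo_subset_Icc_self)
  rw [hU, ← integral_Icc_eq_integral_Ioo] at lim
  refine le_of_tendsto' (lim.const_mul _) fun n => h _ (by positivity) ?_
  rw [mul_one_div, div_le_one (by positivity)]
  have : (0:ℝ) ≤ n := by positivity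
  linarith



lemma oc_opt {a b κ A : ℝ} (ha : a ∈ Set.Ioo (0:ℝ) 1) (hA : 0 ≤ A) (hκ : κ ∈ Set.Ioc (0:ℝ) 1) :
    ∃ ε : ℝ, 0 < ε ∧ κ * (ε⁻¹ * ε ^ b) ^ 2 =
        κ ^ ((a + 2 * b - 1) / (a + 1)) * (1 + A) ^ (2 * (1 - b) / (a + 1)) ∧
      A * ε ^ a * (ε ^ b) ^ 2 / ε ≤
        κ ^ ((a + 2 * b - 1) / (a + 1)) * (1 + A) ^ (2 * (1 - b) / (a + 1)) ∧
      (ε ^ b) ^ 2 ≤ κ ^ ((a + 2 * b - 1) / (a + 1)) * (1 + A) ^ (2 * (1 - b) / (a + 1)) := by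
  obtain ⟨ha0, ha1⟩ := ha
  obtain ⟨hκ0, hκ1⟩ := hκ
  have hA1 : 0 < 1 + A := by linarith
  set ε := (κ / (1 + A)) ^ (1 / (a + 1)) with hε
  have hε0 : 0 < ε := by positivity
  have hε1 : ε ≤ 1 := by
    refine Real.rpow_le_one (by positivity) ?_ (by positivity)
    rw [div_le_one hA1]; linarith
  have hκε : κ = (1 + A) * ε ^ (a + 1) := by
    rw [hε, ← Real.rpow_mul (by positivity), one_div_mul_cancel (by positivity), Real.rpow_one]
    field_simp
  have hP : κ ^ ((a + 2 * b - 1) / (a + 1)) * (1 + A) ^ (2 * (1 - b) / (a + 1))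
      = (1 + A) * ε ^ (a + 2 * b - 1) := by
    have e1 : (a + 1) * ((a + 2 * b - 1) / (a + 1)) = a + 2 * b - 1 := by field_simp
    have e2 : (a + 2 * b - 1) / (a + 1) + 2 * (1 - b) / (a + 1) = 1 := by field_simp; ring
    conv_lhs => rw [hκε]
    rw [Real.mul_rpow hA1.le (by positivity), ← Real.rpow_mul hε0.le, e1, mul_right_comm,
      ← Real.rpow_add hA1, e2, Real.rpow_one]
  have hsq : (ε ^ b) ^ 2 = ε ^ (2 * b) := by
    rw [← Real.rpow_natCast, ← Real.rpow_mul hε0.le]; congr 1; push_cast; ring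
  rw [hP]
  refine ⟨ε, hε0, ?_, ?_, ?_⟩
  · rw [mul_pow, hsq]
    conv_lhs => rw [hκε]
    have : a + 2 * b - 1 = (a + 1) + 2 * b - 2 := by ring
    rw [this, Real.rpow_sub hε0, Real.rpow_add hε0 (a + 1) (2 * b), Real.rpow_two]
    field_simp
  · rw [hsq, Real.rpow_sub hε0, Real.rpow_add hε0, Real.rpow_one, mul_assoc, mul_div_assoc]
    exact mul_le_mul_of_nonneg_right (by linarith) (by positivity)
  · rw [hsq]
    have : ε ^ (2 * b) ≤ ε ^ (a + 2 * b - 1) :=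
      Real.rpow_le_rpow_of_exponent_ge hε0 hε1 (by linarith)
    refine this.trans (le_mul_of_one_le_left (by positivity) (by linarith))

lemma oc_main (d : ℕ) (a b : ℝ) (ha : a ∈ Set.Ioo (0:ℝ) 1) (hb : b ∈ Set.Ioo (0:ℝ) 1) :
    ∃ C : ℝ, 0 < C ∧
      (∀ (u : ℝ → (Fin d → ℝ) → Fin d → ℝ) (A : ℝ), 0 ≤ A →
        (Continuous fun p : ℝ × (Fin d → ℝ) => u p.1 p.2) →
        (∀ t i, SpacePeriodic fun x => u t x i) →
        WeakDivFree u →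
        (∀ t ∈ Set.Icc (0:ℝ) 1, (∀ x, ‖u t x‖ ≤ A) ∧
          (∀ x y, ‖u t x - u t y‖ ≤ A * ‖x - y‖ ^ a)) →
        ∀ κ ∈ Set.Ioc (0:ℝ) 1,
        ∀ (θin : (Fin d → ℝ) → ℝ) (θ : ℝ → (Fin d → ℝ) → ℝ) (H : ℝ),
          IsAdvDiffSol u κ θin θ →
          (∀ t ∈ Set.Icc (0:ℝ) 1, (∀ x, |θ t x| ≤ H) ∧
            (∀ x y, |θ t x - θ t y| ≤ H * ‖x - y‖ ^ b)) →
          κ * dissip θ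
            ≤ C * κ ^ ((a + 2 * b - 1) / (a + 1))
                * (1 + A) ^ (2 * (1 - b) / (a + 1)) * H ^ 2) := by
  obtain ⟨φ, c, hc0, hφ⟩ := oc_bump_exists d
  refine ⟨1 + 4 * d * c ^ 2 + d * c, by positivity, ?_⟩
  intro u A hA hu hup hdiv huA κ hκ θin θ H h hH
  have hH0 : 0 ≤ H := (abs_nonneg _).trans ((hH 0 (by simp)).1 0)
  obtain ⟨ε, hε, h1, h2, h3⟩ := oc_opt (b := b) ha hA hκ
  have hκ0 := hκ.1
  have B := oc_bound (θ := θ) (κ := κ) (B0 := (1 / 2) * (H * ε ^ b) ^ 2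
      + κ * (2 * d * (ε⁻¹ * (c * (H * ε ^ b))) ^ 2)
      + d * (c * (A * ε ^ a * (H * ε ^ b) ^ 2 / (2 * ε)))) (by positivity) fun δ hδ hδ3 =>
    oc_bound_delta hφ hc0 hA hH0 ha.1.le hb.1.le hε hκ0 hδ hδ3 hu hup huA hdiv h hH
  set P := κ ^ ((a + 2 * b - 1) / (a + 1)) * (1 + A) ^ (2 * (1 - b) / (a + 1)) with hP
  have e1 : κ * (2 * d * (ε⁻¹ * (c * (H * ε ^ b))) ^ 2) = 2 * d * c ^ 2 * H ^ 2 * P := by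
    rw [← h1]; ring
  have e2 : d * (c * (A * ε ^ a * (H * ε ^ b) ^ 2 / (2 * ε))) ≤ d * c * H ^ 2 / 2 * P := by
    calc _ = d * c * H ^ 2 / 2 * (A * ε ^ a * (ε ^ b) ^ 2 / ε) := by field_simp
      _ ≤ _ := mul_le_mul_of_nonneg_left h2 (by positivity)
  have e3 : (1 / 2) * (H * ε ^ b) ^ 2 ≤ (1 / 2) * H ^ 2 * P := by
    rw [mul_pow, ← mul_assoc]
    exact mul_le_mul_of_nonneg_left h3 (by positivity)
  have e4 : (1 + 4 * d * c ^ 2 + d * c) * κ ^ ((a + 2 * b - 1) / (a + 1))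
                * (1 + A) ^ (2 * (1 - b) / (a + 1)) * H ^ 2 = (1 + 4 * d * c ^ 2 + d * c) * P * H ^ 2 := by
    rw [hP]; ring
  rw [e4]
  nlinarith

lemma oc_dissip_nonneg {d : ℕ} (θ : ℝ → (Fin d → ℝ) → ℝ) : 0 ≤ dissip θ :=
  integral_nonneg fun _ => integral_nonneg fun _ => Finset.sum_nonneg fun _ _ => sq_nonneg _


/-- **Part (i) of the Obukhov–Corrsin dichotomy (quantitative
Constantin–E–Titi-type bound).** For `α, ᾱ ∈ (0,1)` with `α + 2ᾱ − 1 > 0` there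
is a constant `C = C(d,α,ᾱ)` such that: for every continuous divergence-free
`u` with `C⁰`- and `C^α`-bounds `A`, every `κ ∈ (0,1]` and every solution `θ^κ`
of the advection–diffusion equation with uniform `C^{ᾱ}` bound `H`,
`κ ∫_0^1 ‖∇θ^κ‖²_{L²} dt ≤ C κ^{(α+2ᾱ−1)/(α+1)} (1+A)^{2(1−ᾱ)/(α+1)} H²`.
In particular, a family of solutions uniformly bounded in `L^∞_t C^{ᾱ}_x` with
`ᾱ > (1−α)/2` exhibits no anomalous diffusion:
`lim_{κ→0⁺} κ ∫_0^1 ‖∇θ^κ‖²_{L²} dt = 0`. -/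
theorem obukhov_corrsin_rigidity
    (d : ℕ) (hd : 2 ≤ d) (α ᾱ : ℝ)
    (hα : α ∈ Set.Ioo (0:ℝ) 1) (hᾱ : ᾱ ∈ Set.Ioo (0:ℝ) 1)
    (hsuper : 0 < α + 2 * ᾱ - 1) :
    ∃ C : ℝ, 0 < C ∧
      (∀ (u : ℝ → (Fin d → ℝ) → Fin d → ℝ) (A : ℝ), 0 ≤ A →
        (Continuous fun p : ℝ × (Fin d → ℝ) => u p.1 p.2) →
        (∀ t i, SpacePeriodic fun x => u t x i) →
        WeakDivFree u →
        (∀ t ∈ Set.Icc (0:ℝ) 1, (∀ x, ‖u t x‖ ≤ A) ∧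
          (∀ x y, ‖u t x - u t y‖ ≤ A * ‖x - y‖ ^ α)) →
        ∀ κ ∈ Set.Ioc (0:ℝ) 1,
        ∀ (θin : (Fin d → ℝ) → ℝ) (θ : ℝ → (Fin d → ℝ) → ℝ) (H : ℝ),
          IsAdvDiffSol u κ θin θ →
          (∀ t ∈ Set.Icc (0:ℝ) 1, (∀ x, |θ t x| ≤ H) ∧
            (∀ x y, |θ t x - θ t y| ≤ H * ‖x - y‖ ^ ᾱ)) →
          κ * dissip θ
            ≤ C * κ ^ ((α + 2 * ᾱ - 1) / (α + 1))
                * (1 + A) ^ (2 * (1 - ᾱ) / (α + 1)) * H ^ 2) ∧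
      (∀ (u : ℝ → (Fin d → ℝ) → Fin d → ℝ) (A : ℝ), 0 ≤ A →
        (Continuous fun p : ℝ × (Fin d → ℝ) => u p.1 p.2) →
        (∀ t i, SpacePeriodic fun x => u t x i) →
        WeakDivFree u →
        (∀ t ∈ Set.Icc (0:ℝ) 1, (∀ x, ‖u t x‖ ≤ A) ∧
          (∀ x y, ‖u t x - u t y‖ ≤ A * ‖x - y‖ ^ α)) →
        ∀ (θin : (Fin d → ℝ) → ℝ) (Θ : ℝ → ℝ → (Fin d → ℝ) → ℝ) (H : ℝ),
          (∀ κ ∈ Set.Ioc (0:ℝ) 1, IsAdvDiffSol u κ θin (Θ κ) ∧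
            ∀ t ∈ Set.Icc (0:ℝ) 1, (∀ x, |Θ κ t x| ≤ H) ∧
              (∀ x y, |Θ κ t x - Θ κ t y| ≤ H * ‖x - y‖ ^ ᾱ)) →
          Filter.Tendsto (fun κ => κ * dissip (Θ κ)) (𝓝[>] (0:ℝ)) (𝓝 0)) := by
  obtain ⟨C, hC, hmain⟩ := oc_main d α ᾱ hα hᾱ
  refine ⟨C, hC, hmain, ?_⟩
  intro u A hA hu hup hdiv huA θin Θ H hΘ
  have hs : 0 < (α + 2 * ᾱ - 1) / (α + 1) := div_pos hsuper (by linarith [hα.1])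
  have hlim : Tendsto (fun κ : ℝ => C * κ ^ ((α + 2 * ᾱ - 1) / (α + 1))
                * (1 + A) ^ (2 * (1 - ᾱ) / (α + 1)) * H ^ 2) (𝓝[>] (0:ℝ)) (𝓝 0) := by
    have h0 : Tendsto (fun κ : ℝ => κ ^ ((α + 2 * ᾱ - 1) / (α + 1))) (𝓝[>] (0:ℝ)) (𝓝 0) := by
      have := (Real.continuousAt_rpow_const (0:ℝ) ((α + 2 * ᾱ - 1) / (α + 1)) (Or.inr hs.le)).tendsto
      rw [Real.zero_rpow hs.ne'] at this
      exact this.mono_left nhdsWithin_le_nhds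
    have := ((h0.const_mul C).mul_const ((1 + A) ^ (2 * (1 - ᾱ) / (α + 1)))).mul_const (H ^ 2)
    simpa using this
  have hev : ∀ᶠ κ in 𝓝[>] (0:ℝ), κ ∈ Set.Ioc (0:ℝ) 1 := Ioc_mem_nhdsGT zero_lt_one
  refine tendsto_of_tendsto_of_tendsto_of_le_of_le' tendsto_const_nhds hlim ?_ ?_
  · filter_upwards [hev] with κ hκ
    exact mul_nonneg hκ.1.le (oc_dissip_nonneg _)
  · filter_upwards [hev] with κ hκ
    exact hmain u A hA hu hup hdiv huA κ hκ θin (Θ κ) H (hΘ κ hκ).1 (hΘ κ hκ).2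
end
end

section
/- Enhancement of diffusivity: the symmetric part of the homogenized matrix. Let κ > 0, let s : ℝ × ℝ^d → ℝ^{d×d} be a smooth ℤ×ℤ^d-periodic antisymmetric matrix field, set 𝐚 := κ I_d + s, and for each i let χ_i : ℝ × ℝ^d → ℝ be a smooth ℤ×ℤ^d-periodic solution of the cell problem ∂_t χ_i − div( 𝐚 (e_i + ∇χ_i) ) = 0 with zero space-time mean over [0,1]×[0,1]^d. Define the homogenized matrix 𝐚̄ by 𝐚̄ e_i := ∫_0^1 ∫_{[0,1]^d} 𝐚 (e_i + ∇χ_i) dx dt. Then for all i, j: (1/2)( (𝐚̄)_{ij} + (𝐚̄)_{ji} ) = κ δ_{ij} + κ ∫_0^1 ∫_{[0,1]^d} ∇χ_i · ∇χ_j dx dt. In particular the symmetric part of 𝐚̄ is, as a quadratic form, at least κ I_d: e·𝐚̄e ≥ κ|e|² for every e ∈ ℝ^d. -/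
open MeasureTheory Real Topology Filter

noncomputable section

/-- Kronecker delta. -/
def kr {d : ℕ} (i j : Fin d) : ℝ := if i = j then 1 else 0

/-- 1-periodicity in the time variable. -/
def TimePeriodic {d : ℕ} (f : ℝ → (Fin d → ℝ) → ℝ) : Prop :=
  ∀ t x, f (t + 1) x = f t x

lemma st_integrable {d : ℕ} {f : ℝ × (Fin d → ℝ) → ℝ} (hf : Continuous f) :
    IntegrableOn f (Set.Icc (0:ℝ) 1 ×ˢ box d) (volume.prod volume) :=
  hf.continuousOn.integrableOn_compact (isCompact_Icc.prod isCompact_Icc)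

lemma iter_eq {d : ℕ} {f : ℝ × (Fin d → ℝ) → ℝ} (hf : Continuous f) :
    (∫ t in Set.Icc (0:ℝ) 1, ∫ x in box d, f (t, x))
      = ∫ z in Set.Icc (0:ℝ) 1 ×ˢ box d, f z ∂(volume.prod volume) :=
  (setIntegral_prod f (st_integrable hf)).symm

lemma sp_contDiff {d : ℕ} {f : ℝ → (Fin d → ℝ) → ℝ}
    (hf : ContDiff ℝ (⊤ : ℕ∞) fun p : ℝ × (Fin d → ℝ) => f p.1 p.2) (t : ℝ) :
    ContDiff ℝ (⊤ : ℕ∞) (f t) :=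
  hf.comp (contDiff_const.prodMk contDiff_id : ContDiff ℝ (⊤ : ℕ∞) fun x => ((t, x) : ℝ × (Fin d → ℝ)))

lemma pd_contDiff {d : ℕ} {f : ℝ → (Fin d → ℝ) → ℝ}
    (hf : ContDiff ℝ (⊤ : ℕ∞) fun p : ℝ × (Fin d → ℝ) => f p.1 p.2) (k : Fin d) :
    ContDiff ℝ (⊤ : ℕ∞) fun p : ℝ × (Fin d → ℝ) => pd (f p.1) k p.2 := by
  have h1 : ∀ p : ℝ × (Fin d → ℝ), pd (f p.1) k p.2 =
      fderiv ℝ (fun p : ℝ × (Fin d → ℝ) => f p.1 p.2) p (0, Pi.single k 1) := by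
    rintro ⟨t, x⟩
    have h2 : HasFDerivAt (fun p : ℝ × (Fin d → ℝ) => f p.1 p.2) _ (t, x) :=
      ((hf.differentiable (by simp)) (t, x)).hasFDerivAt
    have h3 := h2.comp x ((hasFDerivAt_const t x).prodMk (hasFDerivAt_id x))
    have h4 : fderiv ℝ (f t) x = _ := HasFDerivAt.fderiv h3
    simp only [pd]
    rw [h4]
    simp
  rw [funext h1]
  exact (hf.fderiv_right (m := (⊤ : ℕ∞)) (by simp)).clm_apply contDiff_const

lemma dt_contDiff {d : ℕ} {f : ℝ → (Fin d → ℝ) → ℝ}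
    (hf : ContDiff ℝ (⊤ : ℕ∞) fun p : ℝ × (Fin d → ℝ) => f p.1 p.2) :
    ContDiff ℝ (⊤ : ℕ∞) fun p : ℝ × (Fin d → ℝ) => deriv (fun τ => f τ p.2) p.1 := by
  have h1 : ∀ p : ℝ × (Fin d → ℝ), deriv (fun τ => f τ p.2) p.1 =
      fderiv ℝ (fun p : ℝ × (Fin d → ℝ) => f p.1 p.2) p (1, 0) := by
    rintro ⟨t, x⟩
    have h2 : HasFDerivAt (fun p : ℝ × (Fin d → ℝ) => f p.1 p.2) _ (t, x) :=
      ((hf.differentiable (by simp)) (t, x)).hasFDerivAt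
    have h3 := h2.comp_hasDerivAt t ((hasDerivAt_id t).prodMk (hasDerivAt_const t x))
    exact HasDerivAt.deriv h3
  rw [funext h1]
  exact (hf.fderiv_right (m := (⊤ : ℕ∞)) (by simp)).clm_apply contDiff_const

lemma div_zero_int {d : ℕ} (G : Fin d → (Fin d → ℝ) → ℝ)
    (hG : ∀ k, ContDiff ℝ (⊤ : ℕ∞) (G k)) (hp : ∀ k, SpacePeriodic (G k)) :
    ∫ x in box d, ∑ k, pd (G k) k x = 0 := by
  cases d with
  | zero => simp
  | succ n =>
    have hc : Continuous fun x => ∑ k, pd (G k) k x := by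
      refine continuous_finsetSum _ fun k _ => ?_
      exact ((hG k).continuous_fderiv (by simp)).clm_apply continuous_const
    have := integral_divergence_of_hasFDerivAt_off_countable' (0 : Fin (n+1) → ℝ) 1
      zero_le_one G (fun k x => fderiv ℝ (G k) x) ∅ Set.countable_empty
      (fun k => (hG k).continuous.continuousOn)
      (fun x _ k => ((hG k).differentiable (by simp) x).hasFDerivAt)
      (hc.continuousOn.integrableOn_compact isCompact_Icc)
    unfold box pd
    rw [this]
    refine Finset.sum_eq_zero fun k _ => ?_
    rw [sub_eq_zero]
    congr 1
    ext x
    rw [← hp k (k.insertNth ((0 : Fin (n+1) → ℝ) k) x) (Pi.single k 1)]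
    congr 1
    ext l
    refine Fin.succAboveCases k ?_ (fun m => ?_) l
    · simp
    · simp

lemma dt_zero_int {d : ℕ} {f : ℝ → (Fin d → ℝ) → ℝ}
    (hf : ContDiff ℝ (⊤ : ℕ∞) fun p : ℝ × (Fin d → ℝ) => f p.1 p.2) (hp : TimePeriodic f) :
    (∫ t in Set.Icc (0:ℝ) 1, ∫ x in box d, deriv (fun τ => f τ x) t) = 0 := by
  have hc := (dt_contDiff hf).continuous
  have hi := st_integrable hc
  rw [IntegrableOn, ← Measure.prod_restrict] at hi
  rw [integral_integral_swap (f := fun t x => deriv (fun τ => f τ x) t) hi]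
  refine integral_eq_zero_of_ae (Eventually.of_forall fun x => ?_)
  have hx : ContDiff ℝ (⊤ : ℕ∞) (fun τ => f τ x) :=
    hf.comp (contDiff_id.prodMk contDiff_const : ContDiff ℝ (⊤ : ℕ∞) fun t => ((t, x) : ℝ × (Fin d → ℝ)))
  simp only [Pi.zero_apply]
  rw [integral_Icc_eq_integral_Ioc, ← intervalIntegral.integral_of_le zero_le_one,
    intervalIntegral.integral_deriv_eq_sub
      (fun t _ => hx.differentiable (by simp) t)
      ((hx.continuous_deriv (by simp)).intervalIntegrable _ _)]
  have := hp 0 x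
  rw [zero_add] at this
  rw [this, sub_self]

lemma alg_id {d : ℕ} (κ : ℝ) (S : Fin d → Fin d → ℝ) (hS : ∀ i j, S i j = - S j i)
    (P Q : Fin d → ℝ) :
    ∑ k, Q k * (∑ l, (κ * kr k l + S k l) * P l) + ∑ k, P k * (∑ l, (κ * kr k l + S k l) * Q l)
      = 2 * κ * ∑ k, P k * Q k := by
  have h : ∀ A B : Fin d → ℝ, ∑ k, A k * (∑ l, (κ * kr k l + S k l) * B l)
      = κ * ∑ k, A k * B k + ∑ k, ∑ l, A k * S k l * B l := by
    intro A B
    rw [Finset.mul_sum, ← Finset.sum_add_distrib]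
    refine Finset.sum_congr rfl fun k _ => ?_
    simp only [add_mul, Finset.sum_add_distrib, kr, mul_add, Finset.mul_sum]
    simp
    have h1 : ∑ l, A k * (S k l * B l) = ∑ l, A k * S k l * B l :=
      Finset.sum_congr rfl fun l _ => by ring
    rw [h1]; ring
  rw [h, h]
  have h2 : ∑ k, ∑ l, P k * S k l * Q l = - ∑ k, ∑ l, Q k * S k l * P l := by
    rw [Finset.sum_comm, ← Finset.sum_neg_distrib]
    refine Finset.sum_congr rfl fun k _ => ?_
    rw [← Finset.sum_neg_distrib]
    refine Finset.sum_congr rfl fun l _ => ?_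
    rw [hS]; ring
  have h3 : ∑ k, Q k * P k = ∑ k, P k * Q k := Finset.sum_congr rfl fun k _ => mul_comm _ _
  rw [h2, h3]; ring

lemma pd_add' {d : ℕ} {f g : (Fin d → ℝ) → ℝ} (hf : Differentiable ℝ f) (hg : Differentiable ℝ g)
    (k : Fin d) (x : Fin d → ℝ) : pd (fun y => f y + g y) k x = pd f k x + pd g k x := by
  have := ((hf x).hasFDerivAt.add (hg x).hasFDerivAt).fderiv
  simp only [pd]
  erw [this]; rfl

lemma pd_sub' {d : ℕ} {f g : (Fin d → ℝ) → ℝ} (hf : Differentiable ℝ f) (hg : Differentiable ℝ g)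
    (k : Fin d) (x : Fin d → ℝ) : pd (fun y => f y - g y) k x = pd f k x - pd g k x := by
  have := ((hf x).hasFDerivAt.sub (hg x).hasFDerivAt).fderiv
  simp only [pd]
  erw [this]; rfl

lemma pd_mul' {d : ℕ} {f g : (Fin d → ℝ) → ℝ} (hf : Differentiable ℝ f) (hg : Differentiable ℝ g)
    (k : Fin d) (x : Fin d → ℝ) :
    pd (fun y => f y * g y) k x = f x * pd g k x + g x * pd f k x := by
  have := ((hf x).hasFDerivAt.mul (hg x).hasFDerivAt).fderiv
  simp only [pd]
  erw [this]; simp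

lemma pd_cmul {d : ℕ} {f : (Fin d → ℝ) → ℝ} (hf : Differentiable ℝ f) (c : ℝ)
    (k : Fin d) (x : Fin d → ℝ) : pd (fun y => c * f y) k x = c * pd f k x := by
  have := ((hf x).hasFDerivAt.const_mul c).fderiv
  simp only [pd]
  erw [this]; simp

lemma pd_periodic {d : ℕ} {f : (Fin d → ℝ) → ℝ} (hf : SpacePeriodic f) (k : Fin d) :
    SpacePeriodic (pd f k) := by
  intro x m
  have h : (fun y => f (y + fun i => (m i : ℝ))) = f := funext fun y => hf y m
  have h2 := fderiv_comp_add_right (𝕜 := ℝ) (f := f) (x := x) (fun i => (m i : ℝ))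
  rw [h] at h2
  simp only [pd]
  rw [h2]

/-- **Enhancement of diffusivity: the symmetric part of the homogenized
matrix.** Let `𝐚 = κI_d + s` with `s` a smooth space-time periodic antisymmetric
matrix field, let `χ_i` solve the parabolic cell problem
`∂_t χ_i = div(𝐚(e_i + ∇χ_i))` with zero space-time mean, and let
`𝐚̄ e_i := ⟨⟨𝐚(e_i + ∇χ_i)⟩⟩`. Then
`(1/2)(𝐚̄_{ij} + 𝐚̄_{ji}) = κδ_{ij} + κ⟨⟨∇χ_i·∇χ_j⟩⟩`, and in particular
`e·𝐚̄e ≥ κ|e|²` for every `e ∈ ℝ^d`. -/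
theorem homogenized_matrix_symmetric_part
    (d : ℕ) (κ : ℝ) (hκ : 0 < κ)
    (s : ℝ → (Fin d → ℝ) → Fin d → Fin d → ℝ)
    (hs_smooth : ∀ i j, ContDiff ℝ (⊤ : ℕ∞)
      fun p : ℝ × (Fin d → ℝ) => s p.1 p.2 i j)
    (hs_per_t : ∀ i j, TimePeriodic fun t x => s t x i j)
    (hs_per_x : ∀ i j t, SpacePeriodic fun x => s t x i j)
    (hs_anti : ∀ t x i j, s t x i j = - s t x j i)
    (χ : Fin d → ℝ → (Fin d → ℝ) → ℝ)
    (hχ_smooth : ∀ i, ContDiff ℝ (⊤ : ℕ∞)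
      fun p : ℝ × (Fin d → ℝ) => χ i p.1 p.2)
    (hχ_per_t : ∀ i, TimePeriodic (χ i))
    (hχ_per_x : ∀ i t, SpacePeriodic (χ i t))
    (hχ_mean : ∀ i, (∫ t in Set.Icc (0:ℝ) 1, ∫ x in box d, χ i t x) = 0)
    (hχ_cell : ∀ i t x,
      deriv (fun τ => χ i τ x) t
        = ∑ k, pd (fun y =>
            ∑ j, (κ * kr k j + s t y k j) * (kr j i + pd (χ i t) j y)) k x)
    (Abar : Fin d → Fin d → ℝ)
    (hAbar : ∀ k i, Abar k i =
      ∫ t in Set.Icc (0:ℝ) 1, ∫ x in box d,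
        ∑ j, (κ * kr k j + s t x k j) * (kr j i + pd (χ i t) j x)) :
    (∀ i j, (Abar i j + Abar j i) / 2
      = κ * kr i j
        + κ * ∫ t in Set.Icc (0:ℝ) 1, ∫ x in box d,
            ∑ k, pd (χ i t) k x * pd (χ j t) k x) ∧
    (∀ e : Fin d → ℝ, κ * ∑ i, (e i) ^ 2 ≤ ∑ i, ∑ j, e i * Abar i j * e j) := by
  have hu : ∀ i k, ContDiff ℝ (⊤ : ℕ∞) fun p : ℝ × (Fin d → ℝ) => pd (χ i p.1) k p.2 :=
    fun i k => pd_contDiff (hχ_smooth i) k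
  obtain ⟨F, hF⟩ : ∃ F : Fin d → Fin d → ℝ → (Fin d → ℝ) → ℝ, ∀ i k t y, F i k t y =
      ∑ j, (κ * kr k j + s t y k j) * (kr j i + pd (χ i t) j y) := ⟨_, fun _ _ _ _ => rfl⟩
  have hFs : ∀ i k, ContDiff ℝ (⊤ : ℕ∞) fun p : ℝ × (Fin d → ℝ) => F i k p.1 p.2 := by
    intro i k
    simp only [hF]
    exact ContDiff.sum fun l _ =>
      (contDiff_const.add (hs_smooth k l)).mul (contDiff_const.add (hu i l))
  have hFp : ∀ i k t, SpacePeriodic (F i k t) := by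
    intro i k t x m
    simp only [hF]
    refine Finset.sum_congr rfl fun l _ => ?_
    have h1 := hs_per_x k l t x m
    have h2 := pd_periodic (hχ_per_x i t) l x m
    simp only at h1
    rw [h1, h2]
  simp only [← hF] at hχ_cell hAbar
  have key : ∀ i j, (Abar i j + Abar j i) / 2
      = κ * kr i j
        + κ * ∫ t in Set.Icc (0:ℝ) 1, ∫ x in box d,
            ∑ k, pd (χ i t) k x * pd (χ j t) k x := by
    intro i j
    let G : ℝ → Fin d → (Fin d → ℝ) → ℝ := fun t k y =>
      ((2 * κ * kr k j) * χ i t y + (2 * κ * kr k i) * χ j t y)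
        - (χ j t y * F i k t y + χ i t y * F j k t y)
    have hGs : ∀ k, ContDiff ℝ (⊤ : ℕ∞) fun p : ℝ × (Fin d → ℝ) => G p.1 k p.2 := fun k =>
      ((contDiff_const.mul (hχ_smooth i)).add (contDiff_const.mul (hχ_smooth j))).sub
        (((hχ_smooth j).mul (hFs i k)).add ((hχ_smooth i).mul (hFs j k)))
    have hGp : ∀ t k, SpacePeriodic (G t k) := by
      intro t k x m
      simp only [G]
      rw [hχ_per_x i t x m, hχ_per_x j t x m, hFp i k t x m, hFp j k t x m]
    have hTs : ContDiff ℝ (⊤ : ℕ∞) fun p : ℝ × (Fin d → ℝ) => χ i p.1 p.2 * χ j p.1 p.2 :=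
      (hχ_smooth i).mul (hχ_smooth j)
    have hTp : TimePeriodic fun t x => χ i t x * χ j t x := by
      intro t x
      simp only
      rw [hχ_per_t i t x, hχ_per_t j t x]
    -- pointwise identity
    have hpt : ∀ t x, F j i t x + F i j t x = 2 * κ * kr i j
        + 2 * κ * (∑ k, pd (χ i t) k x * pd (χ j t) k x)
        + deriv (fun τ => χ i τ x * χ j τ x) t + ∑ k, pd (G t k) k x := by
      intro t x
      have hdx : ∀ i, Differentiable ℝ (χ i t) := fun i =>
        (sp_contDiff (hχ_smooth i) t).differentiable (by simp)
      have hdF : ∀ i k, Differentiable ℝ (F i k t) := fun i k =>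
        (sp_contDiff (hFs i k) t).differentiable (by simp)
      have hdt : ∀ i, DifferentiableAt ℝ (fun τ => χ i τ x) t := fun i =>
        (((hχ_smooth i).comp (contDiff_id.prodMk contDiff_const :
          ContDiff ℝ (⊤ : ℕ∞) fun t => ((t, x) : ℝ × (Fin d → ℝ)))).differentiable (by simp)) t
      have h1 : deriv (fun τ => χ i τ x * χ j τ x) t
          = (∑ k, pd (F i k t) k x) * χ j t x + χ i t x * ∑ k, pd (F j k t) k x := by
        rw [← hχ_cell i t x, ← hχ_cell j t x]
        exact ((hdt i).hasDerivAt.mul (hdt j).hasDerivAt).deriv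
      have h2 : ∀ k, pd (G t k) k x
          = (2 * κ * kr k j) * pd (χ i t) k x + (2 * κ * kr k i) * pd (χ j t) k x
            - ((χ j t x * pd (F i k t) k x + F i k t x * pd (χ j t) k x)
              + (χ i t x * pd (F j k t) k x + F j k t x * pd (χ i t) k x)) := by
        intro k
        have a1 : Differentiable ℝ (fun y => 2 * κ * kr k j * χ i t y) := (hdx i).const_mul _
        have a2 : Differentiable ℝ (fun y => 2 * κ * kr k i * χ j t y) := (hdx j).const_mul _
        have a3 : Differentiable ℝ (fun y => χ j t y * F i k t y) := (hdx j).mul (hdF i k)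
        have a4 : Differentiable ℝ (fun y => χ i t y * F j k t y) := (hdx i).mul (hdF j k)
        have a5 : Differentiable ℝ (fun y => 2 * κ * kr k j * χ i t y + 2 * κ * kr k i * χ j t y) :=
          a1.add a2
        have a6 : Differentiable ℝ (fun y => χ j t y * F i k t y + χ i t y * F j k t y) :=
          a3.add a4
        simp only [G]
        rw [pd_sub' a5 a6, pd_add' a1 a2, pd_add' a3 a4,
          pd_cmul (hdx i), pd_cmul (hdx j), pd_mul' (hdx j) (hdF i k), pd_mul' (hdx i) (hdF j k)]
      have h3 := alg_id κ (s t x) (hs_anti t x) (fun k => kr k i + pd (χ i t) k x)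
        (fun k => kr k j + pd (χ j t) k x)
      simp only [← hF] at h3
      rw [h1, Finset.sum_congr rfl fun k _ => h2 k]
      have e1 : ∀ (a : Fin d) (g : Fin d → ℝ), ∑ k, kr k a * g k = g a := by
        intro a g; simp [kr]
      have e2 : ∀ (a : Fin d) (g : Fin d → ℝ), ∑ k, g k * kr k a = g a := by
        intro a g; simp [kr]
      simp only [add_mul, mul_add, Finset.sum_add_distrib, e1, e2, Finset.sum_sub_distrib,
        mul_assoc, ← Finset.mul_sum] at h3 ⊢
      have e3 : ∀ A : Fin d → Fin d → ℝ, ∀ a b, ∑ k, A a k * A b k = ∑ k, A b k * A a k :=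
        fun A a b => Finset.sum_congr rfl fun k _ => mul_comm _ _
      have e4 : ∑ k, F i k t x * pd (χ j t) k x = ∑ k, pd (χ j t) k x * F i k t x :=
        Finset.sum_congr rfl fun k _ => mul_comm _ _
      have e5 : ∑ k, F j k t x * pd (χ i t) k x = ∑ k, pd (χ i t) k x * F j k t x :=
        Finset.sum_congr rfl fun k _ => mul_comm _ _
      rw [e4, e5]
      linarith
    have cF : ∀ i k, Continuous fun p : ℝ × (Fin d → ℝ) => F i k p.1 p.2 :=
      fun i k => (hFs i k).continuous
    have cU : Continuous fun p : ℝ × (Fin d → ℝ) =>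
        ∑ k, pd (χ i p.1) k p.2 * pd (χ j p.1) k p.2 :=
      continuous_finsetSum _ fun k _ => (hu i k).continuous.mul (hu j k).continuous
    have cT := (dt_contDiff (f := fun t x => χ i t x * χ j t x) hTs).continuous
    have cG : Continuous fun p : ℝ × (Fin d → ℝ) => ∑ k, pd (G p.1 k) k p.2 :=
      continuous_finsetSum _ fun k _ => (pd_contDiff (f := fun t => G t k) (hGs k) k).continuous
    have iT := dt_zero_int hTs hTp
    have iG : (∫ t in Set.Icc (0:ℝ) 1, ∫ x in box d, ∑ k, pd (G t k) k x) = 0 := by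
      have : ∀ t, ∫ x in box d, ∑ k, pd (G t k) k x = 0 := fun t =>
        div_zero_int (G t) (fun k => sp_contDiff (f := fun t => G t k) (hGs k) t) (hGp t)
      simp [this]
    have iC : (∫ z in Set.Icc (0:ℝ) 1 ×ˢ box d, (2 * κ * kr i j) ∂((volume : Measure ℝ).prod
        (volume : Measure (Fin d → ℝ)))) = 2 * κ * kr i j := by
      rw [← iter_eq (f := fun _ => 2 * κ * kr i j) continuous_const]
      simp [box, Measure.real, Real.volume_Icc_pi]
    rw [iter_eq cT] at iT
    rw [iter_eq cG] at iG
    rw [hAbar, hAbar, iter_eq (cF j i), iter_eq (cF i j), iter_eq cU,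
      ← integral_add (st_integrable (cF j i)) (st_integrable (cF i j))]
    simp only [hpt]
    have c2 : Continuous fun p : ℝ × (Fin d → ℝ) => 2 * κ * kr i j
        + 2 * κ * ∑ k, pd (χ i p.1) k p.2 * pd (χ j p.1) k p.2 :=
      continuous_const.add (cU.const_mul (2 * κ))
    have c3 : Continuous fun p : ℝ × (Fin d → ℝ) => 2 * κ * kr i j
        + 2 * κ * ∑ k, pd (χ i p.1) k p.2 * pd (χ j p.1) k p.2
        + deriv (fun τ => χ i τ p.2 * χ j τ p.2) p.1 := c2.add cT
    rw [integral_add (st_integrable c3) (st_integrable cG),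
      integral_add (st_integrable c2) (st_integrable cT),
      integral_add (st_integrable continuous_const) (st_integrable (cU.const_mul _)),
      iT, iG, iC, integral_const_mul]
    ring
  refine ⟨key, fun e => ?_⟩
  have cU : ∀ i j, Continuous fun p : ℝ × (Fin d → ℝ) =>
      ∑ k, pd (χ i p.1) k p.2 * pd (χ j p.1) k p.2 := fun i j =>
    continuous_finsetSum _ fun k _ => (hu i k).continuous.mul (hu j k).continuous
  have hsym : ∑ i, ∑ j, e i * Abar i j * e j
      = ∑ i, ∑ j, e i * ((Abar i j + Abar j i) / 2) * e j := by
    have h : ∑ i, ∑ j, e i * Abar i j * e j = ∑ i, ∑ j, e i * Abar j i * e j := by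
      rw [Finset.sum_comm]
      exact Finset.sum_congr rfl fun _ _ => Finset.sum_congr rfl fun _ _ => by ring
    have h' : ∑ i, ∑ j, e i * ((Abar i j + Abar j i) / 2) * e j
        = (∑ i, ∑ j, e i * Abar i j * e j + ∑ i, ∑ j, e i * Abar j i * e j) / 2 := by
      simp only [← Finset.sum_add_distrib, Finset.sum_div]
      exact Finset.sum_congr rfl fun _ _ => Finset.sum_congr rfl fun _ _ => by ring
    rw [h', ← h]; ring
  have hnn : 0 ≤ ∑ i, ∑ j, e i * e j * (∫ z in Set.Icc (0:ℝ) 1 ×ˢ box d,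
      ∑ k, pd (χ i z.1) k z.2 * pd (χ j z.1) k z.2 ∂(volume.prod volume)) := by
    simp only [← integral_const_mul]
    have hi : ∀ i j, IntegrableOn (fun z : ℝ × (Fin d → ℝ) => e i * e j *
        ∑ k, pd (χ i z.1) k z.2 * pd (χ j z.1) k z.2) (Set.Icc (0:ℝ) 1 ×ˢ box d)
        (volume.prod volume) := fun i j => (st_integrable (cU i j)).const_mul _
    simp only [← integral_finsetSum _ fun j _ => hi _ j]
    rw [← integral_finsetSum _ fun i _ => integrable_finsetSum _ fun j _ => hi i j]
    refine integral_nonneg fun z => ?_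
    have : ∑ i, ∑ j, e i * e j * ∑ k, pd (χ i z.1) k z.2 * pd (χ j z.1) k z.2
        = ∑ k, (∑ i, e i * pd (χ i z.1) k z.2) ^ 2 := by
      simp only [sq, Finset.sum_mul_sum]
      simp only [Finset.mul_sum]
      rw [Finset.sum_congr rfl fun j _ => Finset.sum_comm, Finset.sum_comm]
      exact Finset.sum_congr rfl fun _ _ => Finset.sum_congr rfl fun _ _ =>
        Finset.sum_congr rfl fun _ _ => by ring
    simp only [Pi.zero_apply]
    rw [this]
    positivity
  have hfin : ∑ i, ∑ j, e i * Abar i j * e j = κ * ∑ i, (e i) ^ 2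
      + κ * ∑ i, ∑ j, e i * e j * (∫ z in Set.Icc (0:ℝ) 1 ×ˢ box d,
      ∑ k, pd (χ i z.1) k z.2 * pd (χ j z.1) k z.2 ∂(volume.prod volume)) := by
    rw [hsym, Finset.mul_sum, Finset.mul_sum, ← Finset.sum_add_distrib]
    refine Finset.sum_congr rfl fun i _ => ?_
    have : κ * e i ^ 2 = ∑ j, e i * (κ * kr i j) * e j := by
      simp [kr]; ring
    rw [this, Finset.mul_sum, ← Finset.sum_add_distrib]
    refine Finset.sum_congr rfl fun j _ => ?_
    rw [key, iter_eq (cU i j)]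
    ring
  rw [hfin]
  have := mul_nonneg hκ.le hnn
  linarith
end
end

section
/- Explicit corrector and the Taylor diffusion formula for a shear flow: let κ, a, ε > 0 and define the matrix field 𝐚(y) := κ I₂ + a ε² sin(2π y₂) I₂^⊥ on ℝ², the functions χ₁(y) := (a ε² / (2π κ)) cos(2π y₂) and χ₂ := 0. Then: (i) χ₁, χ₂ are ℤ²-periodic with zero mean over [0,1]², and for i = 1, 2 they solve the (steady) cell problem div( 𝐚(y) (e_i + ∇χ_i(y)) ) = 0 for all y ∈ ℝ²; (ii) the homogenized matrix 𝐚̄, defined by 𝐚̄ e_i := ∫_{[0,1]²} 𝐚(y)(e_i + ∇χ_i(y)) dy, is given by the Taylor diffusion formula 𝐚̄ e₁ = (κ + a²ε⁴/(2κ)) e₁ and 𝐚̄ e₂ = κ e₂; i.e., 𝐚̄ is the diagonal matrix diag(κ + a²ε⁴/(2κ), κ). -/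
open MeasureTheory Real Topology Filter

noncomputable section

/-- The 2×2 rotation matrix `I₂^⊥`. -/
def Iperp : Fin 2 → Fin 2 → ℝ := fun i j =>
  if i = 1 ∧ j = 0 then 1 else if i = 0 ∧ j = 1 then -1 else 0

/-- The matrix field `𝐚(y) = κI₂ + aε² sin(2πy₂) I₂^⊥` of the shear flow. -/
def aShear (κ a ε : ℝ) (y : Fin 2 → ℝ) (i j : Fin 2) : ℝ :=
  κ * (if i = j then 1 else 0) + a * ε ^ 2 * Real.sin (2 * π * y 1) * Iperp i j

/-- The correctors `χ₁(y) = (aε²/(2πκ)) cos(2πy₂)`, `χ₂ = 0` of the shear flow. -/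
def chiShear (κ a ε : ℝ) : Fin 2 → (Fin 2 → ℝ) → ℝ := fun i y =>
  if i = 0 then a * ε ^ 2 / (2 * π * κ) * Real.cos (2 * π * y 1) else 0

theorem pd_comp_one (g : ℝ → ℝ) (g' : ℝ) (k : Fin 2) (y : Fin 2 → ℝ)
    (h : HasDerivAt g g' (y 1)) :
    pd (fun z : Fin 2 → ℝ => g (z 1)) k y = if k = 1 then g' else 0 := by
  have h1 : HasFDerivAt (fun z : Fin 2 → ℝ => z 1)
      (ContinuousLinearMap.proj (R := ℝ) (φ := fun _ : Fin 2 => ℝ) 1) y :=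
    hasFDerivAt_apply 1 y
  have h2 := h.comp_hasFDerivAt y h1
  have h3 : fderiv ℝ (fun z : Fin 2 → ℝ => g (z 1)) y = _ := h2.fderiv
  unfold pd
  rw [h3]
  fin_cases k <;> simp

theorem int_box_one (g : ℝ → ℝ) (hg : Continuous g) :
    (∫ y in box 2, g (y 1)) = ∫ t in (0:ℝ)..1, g t := by
  have hb : box 2 = Set.univ.pi (fun _ : Fin 2 => Set.Icc (0:ℝ) 1) := by
    rw [Set.pi_univ_Icc]; rfl
  have hP : IsProbabilityMeasure ((volume : Measure ℝ).restrict (Set.Icc (0:ℝ) 1)) :=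
    ⟨by simp⟩
  have hm := measurePreserving_eval
    (fun _ : Fin 2 => (volume : Measure ℝ).restrict (Set.Icc (0:ℝ) 1)) 1
  rw [hb, volume_pi, Measure.restrict_pi_pi, intervalIntegral.integral_of_le zero_le_one,
    ← integral_Icc_eq_integral_Ioc]
  conv_rhs => rw [← hm.map_eq]
  rw [integral_map hm.measurable.aemeasurable hg.aestronglyMeasurable]

theorem pd_chi_zero (κ a ε : ℝ) (hκ : 0 < κ) (j : Fin 2) (y : Fin 2 → ℝ) :
    pd (chiShear κ a ε 0) j y =
      if j = 1 then - (a * ε ^ 2 / κ * Real.sin (2 * π * y 1)) else 0 := by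
  have h : HasDerivAt (fun t : ℝ => a * ε ^ 2 / (2 * π * κ) * Real.cos (2 * π * t))
      (- (a * ε ^ 2 / κ * Real.sin (2 * π * y 1))) (y 1) := by
    have h0 : HasDerivAt (fun t : ℝ => 2 * π * t) (2 * π) (y 1) := by
      simpa using (hasDerivAt_id (y 1)).const_mul (2 * π)
    refine ((h0.cos).const_mul (a * ε ^ 2 / (2 * π * κ))).congr_deriv ?_
    have := Real.pi_pos.ne'
    field_simp
  have := pd_comp_one _ _ j y h
  have e : chiShear κ a ε 0 =
      fun z => a * ε ^ 2 / (2 * π * κ) * Real.cos (2 * π * z 1) := by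
    funext z; simp [chiShear]
  rw [e]; exact this

theorem pd_chi_one (κ a ε : ℝ) (j : Fin 2) (y : Fin 2 → ℝ) :
    pd (chiShear κ a ε 1) j y = 0 := by
  have : chiShear κ a ε 1 = fun _ => 0 := by funext y; simp [chiShear]
  simp [pd, this]

theorem flux_zero (κ a ε : ℝ) (hκ : 0 < κ) (k : Fin 2) (y : Fin 2 → ℝ) :
    ∑ j, aShear κ a ε y k j * ((if j = (0 : Fin 2) then 1 else 0) + pd (chiShear κ a ε 0) j y)
      = if k = 0 then κ + a ^ 2 * ε ^ 4 / κ * Real.sin (2 * π * y 1) ^ 2 else 0 := by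
  simp only [pd_chi_zero κ a ε hκ, Fin.sum_univ_two]
  fin_cases k <;> simp [aShear, Iperp] <;> field_simp <;> ring

theorem flux_one (κ a ε : ℝ) (k : Fin 2) (y : Fin 2 → ℝ) :
    ∑ j, aShear κ a ε y k j * ((if j = (1 : Fin 2) then 1 else 0) + pd (chiShear κ a ε 1) j y)
      = if k = 0 then - (a * ε ^ 2 * Real.sin (2 * π * y 1)) else κ := by
  simp only [pd_chi_one, Fin.sum_univ_two]
  fin_cases k <;> simp [aShear, Iperp]

theorem int_cos0 : (∫ t in (0:ℝ)..1, Real.cos (2 * π * t)) = 0 := by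
  have := Real.pi_pos.ne'
  rw [intervalIntegral.integral_comp_mul_left (fun x => Real.cos x) (by positivity)]
  simp

theorem int_sin0 : (∫ t in (0:ℝ)..1, Real.sin (2 * π * t)) = 0 := by
  have := Real.pi_pos.ne'
  rw [intervalIntegral.integral_comp_mul_left (fun x => Real.sin x) (by positivity)]
  simp

theorem int_sinsq : (∫ t in (0:ℝ)..1, Real.sin (2 * π * t) ^ 2) = 1 / 2 := by
  have := Real.pi_pos.ne'
  rw [intervalIntegral.integral_comp_mul_left (fun x => Real.sin x ^ 2) (by positivity),
    integral_sin_sq]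
  simp
  field_simp

/-- **Explicit corrector and the Taylor diffusion formula for a shear flow.**
For `κ, a, ε > 0` and `𝐚(y) = κI₂ + aε² sin(2πy₂) I₂^⊥`, the functions
`χ₁(y) = (aε²/(2πκ)) cos(2πy₂)` and `χ₂ = 0` are ℤ²-periodic, have zero mean
over `[0,1]²`, solve the steady cell problem `div(𝐚(e_i + ∇χ_i)) = 0`, and the
homogenized matrix `𝐚̄ e_i = ∫_{[0,1]²} 𝐚(e_i + ∇χ_i)` is the Taylor matrix
`diag(κ + a²ε⁴/(2κ), κ)`. -/
theorem taylor_diffusion_formula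
    (κ a ε : ℝ) (hκ : 0 < κ) (ha : 0 < a) (hε : 0 < ε) :
    (∀ i, SpacePeriodic (chiShear κ a ε i)) ∧
    (∀ i, (∫ y in box 2, chiShear κ a ε i y) = 0) ∧
    (∀ (i : Fin 2) (y : Fin 2 → ℝ),
      ∑ k, pd (fun z => ∑ j, aShear κ a ε z k j *
        ((if j = i then 1 else 0) + pd (chiShear κ a ε i) j z)) k y = 0) ∧
    (∀ k : Fin 2,
      (∫ y in box 2, ∑ j, aShear κ a ε y k j *
          ((if j = (0 : Fin 2) then 1 else 0) + pd (chiShear κ a ε 0) j y))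
        = if k = 0 then κ + a ^ 2 * ε ^ 4 / (2 * κ) else 0) ∧
    (∀ k : Fin 2,
      (∫ y in box 2, ∑ j, aShear κ a ε y k j *
          ((if j = (1 : Fin 2) then 1 else 0) + pd (chiShear κ a ε 1) j y))
        = if k = 1 then κ else 0) := by
  refine ⟨?_, ?_, ?_, ?_, ?_⟩
  · intro i x k
    have h : Real.cos (2 * π * (x 1 + (k 1 : ℝ))) = Real.cos (2 * π * x 1) := by
      rw [← Real.cos_add_int_mul_two_pi (2 * π * x 1) (k 1)]
      congr 1; ring
    simp [chiShear, h]
  · intro i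
    fin_cases i
    · have := int_box_one (fun t => a * ε ^ 2 / (2 * π * κ) * Real.cos (2 * π * t)) (by fun_prop)
      rw [intervalIntegral.integral_const_mul, int_cos0, mul_zero] at this
      simpa only [chiShear, Fin.zero_eta, if_true] using this
    · simp [chiShear]
  · intro i y
    fin_cases i
    · simp only [Fin.zero_eta, flux_zero κ a ε hκ, Fin.sum_univ_two]
      have hd : DifferentiableAt ℝ
        (fun t : ℝ => κ + a ^ 2 * ε ^ 4 / κ * Real.sin (2 * π * t) ^ 2) (y 1) := by fun_prop
      have := pd_comp_one _ _ 0 y hd.hasDerivAt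
      simp only [if_true, this]
      simp [pd]
    · simp only [Fin.mk_one, flux_one κ a ε, Fin.sum_univ_two]
      have hd : DifferentiableAt ℝ
        (fun t : ℝ => - (a * ε ^ 2 * Real.sin (2 * π * t))) (y 1) := by fun_prop
      have := pd_comp_one _ _ 0 y hd.hasDerivAt
      simp only [if_true, this]
      simp [pd]
  · intro k
    simp only [flux_zero κ a ε hκ]
    fin_cases k
    · have := int_box_one
        (fun t => κ + a ^ 2 * ε ^ 4 / κ * Real.sin (2 * π * t) ^ 2) (by fun_prop)
      rw [intervalIntegral.integral_add (by simp)
        (Continuous.intervalIntegrable (by fun_prop) _ _),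
        intervalIntegral.integral_const_mul, int_sinsq] at this
      simp only [Fin.zero_eta, if_true, this]
      simp
      field_simp
    · simp
  · intro k
    simp only [flux_one κ a ε]
    fin_cases k
    · have := int_box_one (fun t => - (a * ε ^ 2 * Real.sin (2 * π * t))) (by fun_prop)
      rw [intervalIntegral.integral_neg, intervalIntegral.integral_const_mul, int_sin0] at this
      simp only [Fin.zero_eta, if_true, this]
      simp
    · have := int_box_one (fun _ => κ) (by fun_prop)
      simpa using this
end
end
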